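/- arXiv:1510.07433 — 3 statements merged into one kernel-verified Lean document; each statement's English description precedes it below -/
import Mathlib

section
/- Let b1,…,b8 be nonzero complex numbers with q = b1b2b3b4/(b5b6b7b8) satisfying |q| < 1, and let Λ ∈ ℂ∖{0} satisfy |b1b2b3b4| < |Λ|² < |b5b6b7b8|. Set λ = Λ²/(b1b2b3b4), q₁ = q·λ and q₂ = 1/λ (so 0 < |q₁|, |q₂| < 1). Then there exist r > 0 and analytic functions y₁, y₂ on the polydisc {(ζ₁, ζ₂) ∈ ℂ² : |ζ₁| < r, |ζ₂| < r} with y₁(0,0) = y₂(0,0) = 0 such that, setting f(ζ) = ζ₁(1 + y₁(ζ)), g(ζ) = ζ₁(Λ + y₂(ζ)) and t(ζ) = ζ₁ζ₂, the relations (E1) and (E2) hold with (t, f, g, f̄, ḡ) = (t(ζ), f(ζ), g(ζ), f(q₁ζ₁, q₂ζ₂), g(q₁ζ₁, q₂ζ₂)) for every ζ in the polydisc. Moreover the pair (y₁, y₂) is unique as a germ at (0,0): any two such pairs agree on a neighborhood of (0,0). -/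
/-!
With `f = ζ₁ F`, `g = ζ₁ G` and `t = ζ₁ ζ₂`, both relations are divisible by `ζ₁⁴`. The quotient of
(E2) is affine in `G` and that of (E1) is affine in `F`, so the system expresses the values of
`(F, G)` at `ζ` rationally through `ζ` and the values at the dilated point
`σ ζ = (q₁ ζ₁, q₂ ζ₂)`. For the deviation `Y` of `(F, G)` from `(1, Λ)` this is a functional equation
`Y ζ = Ψ (ζ, Y (σ ζ))` with `Ψ` analytic at the origin and `Ψ 0 = 0`.

On `ζ = 0` the map is monomial, `(F, G / Λ) ↦ (F³ / Ĝ², F² / Ĝ)` with `Ĝ = G / Λ`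
(`Good.stepF_zero`, `Good.stepG_zero`), and its linearization is unipotent with one Jordan block.
Rescaling the nilpotent direction by a small `ε` brings its norm to at most `1 + 2 ε`
(`Good.hasFDerivAt_Psi`, `norm_lin_le`). Since `σ` contracts by `ρ = max |q₁| |q₂| < 1`, and the
functions considered vanish at the origin, `Y ↦ Ψ (·, Y ∘ σ)` contracts by `(1 + 3 ε) ρ < 1` for the
norm `sup ‖Y ζ‖ / ‖ζ‖`. Picard iteration then gives existence (`exists_fixed`) and uniqueness
(`unique_fixed`). The limit is analytic because a uniform limit of analytic functions of two complex
variables is (`analytic_of_uniform_limit`), which rests on Osgood's lemma (`osgood`).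
-/

open Filter

/-- The q-P(A₁) system in polynomial form: relations (E1) and (E2) for complex
quantities `(t, f, g, fb, gb)`, where `fb`, `gb` stand for `f̄`, `ḡ`. -/
def qpSys (b1 b2 b3 b4 b5 b6 b7 b8 q t f g fb gb : ℂ) : Prop :=
  ((g * f - t ^ 2) * (g * fb - q * t ^ 2) * (g - b5) * (g - b6) * (g - b7) * (g - b8) =
    (g * f - 1) * (g * fb - 1) * (g - b1 * t) * (g - b2 * t) * (g - b3 * t) * (g - b4 * t)) ∧
  ((g * fb - q * t ^ 2) * (gb * fb - q ^ 2 * t ^ 2) * (fb - b5⁻¹) * (fb - b6⁻¹) *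
      (fb - b7⁻¹) * (fb - b8⁻¹) =
    (g * fb - 1) * (gb * fb - 1) * (fb - q * t / b1) * (fb - q * t / b2) *
      (fb - q * t / b3) * (fb - q * t / b4))

/-- A pair `(y₁, y₂)` of functions analytic on the polydisc of radius `r`, vanishing at the
origin, such that `f(ζ) = ζ₁(1 + y₁(ζ))`, `g(ζ) = ζ₁(Λ + y₂(ζ))`, `t(ζ) = ζ₁ζ₂` solve the
q-P(A₁) system with the time evolution `ζ ↦ (q₁ζ₁, q₂ζ₂)`. -/
def qpPolydiscSol (b1 b2 b3 b4 b5 b6 b7 b8 q Λ q1 q2 : ℂ) (r : ℝ)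
    (y1 y2 : ℂ × ℂ → ℂ) : Prop :=
  (∀ ζ : ℂ × ℂ, ‖ζ.1‖ < r → ‖ζ.2‖ < r → AnalyticAt ℂ y1 ζ ∧ AnalyticAt ℂ y2 ζ) ∧
  y1 (0, 0) = 0 ∧ y2 (0, 0) = 0 ∧
  ∀ ζ : ℂ × ℂ, ‖ζ.1‖ < r → ‖ζ.2‖ < r →
    qpSys b1 b2 b3 b4 b5 b6 b7 b8 q (ζ.1 * ζ.2)
      (ζ.1 * (1 + y1 ζ)) (ζ.1 * (Λ + y2 ζ))
      ((q1 * ζ.1) * (1 + y1 (q1 * ζ.1, q2 * ζ.2)))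
      ((q1 * ζ.1) * (Λ + y2 (q1 * ζ.1, q2 * ζ.2)))

/-! ### Uniform limits of analytic functions of two variables -/

open Metric Topology in
/-- Integration over the torus `|z| = |w| = R`, as a continuous linear functional on the Banach
algebra of continuous functions there. -/
theorem torusFunctional (R : ℝ) (hR : 0 ≤ R) :
    ∃ I : C(sphere (0 : ℂ) R × sphere (0 : ℂ) R, ℂ) →L[ℂ] ℂ,
      ∀ φ : C(sphere (0 : ℂ) R × sphere (0 : ℂ) R, ℂ), ∀ f : ℂ → ℂ → ℂ,
        (∀ z w, φ (z, w) = f z w) →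
        I φ = ∮ z in C(0, R), ∮ w in C(0, R), f z w := by
  let cm : ℝ → sphere (0 : ℂ) R := fun θ => ⟨circleMap 0 R θ, circleMap_mem_sphere 0 hR θ⟩
  have hcm : Continuous cm := (continuous_circleMap 0 R).subtype_mk _
  have hd : Continuous (deriv (circleMap 0 R)) := by
    have : deriv (circleMap 0 R) = fun θ => circleMap 0 R θ * Complex.I := by
      ext θ; simp
    rw [this]; fun_prop
  have hin : ∀ φ : C(sphere (0 : ℂ) R × sphere (0 : ℂ) R, ℂ),
      Continuous (fun p : ℝ × ℝ => deriv (circleMap 0 R) p.2 • φ (cm p.1, cm p.2)) := by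
    intro φ; fun_prop
  have hout : ∀ φ : C(sphere (0 : ℂ) R × sphere (0 : ℂ) R, ℂ),
      Continuous (fun θ : ℝ => deriv (circleMap 0 R) θ •
        ∫ η in (0 : ℝ)..2 * Real.pi, deriv (circleMap 0 R) η • φ (cm θ, cm η)) := by
    intro φ
    refine hd.smul ?_
    exact intervalIntegral.continuous_parametric_intervalIntegral_of_continuous'
      (f := fun θ η => deriv (circleMap 0 R) η • φ (cm θ, cm η)) (hin φ) _ _
  have hslice : ∀ (φ : C(sphere (0 : ℂ) R × sphere (0 : ℂ) R, ℂ)) (θ : ℝ),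
      Continuous (fun η => deriv (circleMap 0 R) η • φ (cm θ, cm η)) := by
    intro φ θ; fun_prop
  refine ⟨LinearMap.mkContinuous
    { toFun := fun φ => ∫ θ in (0 : ℝ)..2 * Real.pi, deriv (circleMap 0 R) θ •
        ∫ η in (0 : ℝ)..2 * Real.pi, deriv (circleMap 0 R) η • φ (cm θ, cm η)
      map_add' := ?_
      map_smul' := ?_ } ((R * (R * |2 * Real.pi - 0|)) * |2 * Real.pi - 0|) ?_, ?_⟩
  · intro φ ψ
    rw [← intervalIntegral.integral_add ((hout φ).intervalIntegrable _ _)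
      ((hout ψ).intervalIntegrable _ _)]
    congr 1; ext θ
    rw [← smul_add, ← intervalIntegral.integral_add ((hslice φ θ).intervalIntegrable _ _)
      ((hslice ψ θ).intervalIntegrable _ _)]
    simp only [ContinuousMap.add_apply, smul_add]
  · intro c φ
    simp only [ContinuousMap.smul_apply, RingHom.id_apply]
    rw [← intervalIntegral.integral_smul]
    congr 1; ext θ
    rw [smul_comm c, ← intervalIntegral.integral_smul c]
    congr 2; ext η
    rw [smul_comm]
  · intro φ
    have h1 : ∀ θ : ℝ, ‖deriv (circleMap 0 R) θ‖ = R := by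
      intro θ; simp [abs_of_nonneg hR]
    have : ‖∫ θ in (0 : ℝ)..2 * Real.pi, deriv (circleMap 0 R) θ •
        ∫ η in (0 : ℝ)..2 * Real.pi, deriv (circleMap 0 R) η • φ (cm θ, cm η)‖ ≤
        (R * ((R * ‖φ‖) * |2 * Real.pi - 0|)) * |2 * Real.pi - 0| := by
      refine intervalIntegral.norm_integral_le_of_norm_le_const fun θ _ => ?_
      rw [norm_smul, h1]
      refine mul_le_mul_of_nonneg_left ?_ hR
      refine intervalIntegral.norm_integral_le_of_norm_le_const fun η _ => ?_
      rw [norm_smul, h1]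
      exact mul_le_mul_of_nonneg_left (φ.norm_coe_le_norm _) hR
    refine this.trans (le_of_eq ?_)
    ring
  · intro φ f hf
    simp only [LinearMap.mkContinuous_apply, LinearMap.coe_mk, AddHom.coe_mk, circleIntegral, hf, cm]

open Metric Topology in
/-- **Osgood's lemma** on a bidisc: a function continuous on the closed bidisc and holomorphic in
each variable is analytic inside. The Cauchy formula exhibits it as a continuous functional applied
to `F * (z - ζ₁)⁻¹ * (w - ζ₂)⁻¹`, and inversion is analytic on the units of the Banach algebra
`C(S × S, ℂ)`. -/
theorem osgood (R : ℝ) (hR : 0 < R) (f : ℂ × ℂ → ℂ)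
    (hc : ContinuousOn f (closedBall 0 R))
    (h1 : ∀ w ∈ closedBall (0 : ℂ) R, DifferentiableOn ℂ (fun z => f (z, w)) (ball 0 R))
    (h2 : ∀ z ∈ closedBall (0 : ℂ) R, DifferentiableOn ℂ (fun w => f (z, w)) (ball 0 R)) :
    ∀ ζ ∈ ball (0 : ℂ × ℂ) R, AnalyticAt ℂ f ζ := by
  obtain ⟨I, hI⟩ := torusFunctional R hR.le
  have hmem : ∀ z w : ℂ, z ∈ closedBall (0 : ℂ) R → w ∈ closedBall (0 : ℂ) R →
      (z, w) ∈ closedBall (0 : ℂ × ℂ) R := by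
    intro z w hz hw
    simp only [mem_closedBall_zero_iff] at hz hw ⊢
    exact max_le hz hw
  let S := sphere (0 : ℂ) R
  let F : C(S × S, ℂ) := ⟨fun p => f (p.1, p.2), by
    refine hc.comp_continuous (f := fun p : S × S => ((p.1 : ℂ), (p.2 : ℂ))) (by fun_prop) ?_
    intro p
    exact hmem _ _ (sphere_subset_closedBall p.1.2) (sphere_subset_closedBall p.2.2)⟩
  let a : C(S × S, ℂ) := ⟨fun p => p.1, by fun_prop⟩
  let b : C(S × S, ℂ) := ⟨fun p => p.2, by fun_prop⟩
  let k : ℂ := (2 * Real.pi * Complex.I : ℂ)⁻¹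
  have hna : ∀ z ∈ ball (0 : ℂ) R, IsUnit (a - z • (1 : C(S × S, ℂ))) := by
    intro z hz
    rw [ContinuousMap.isUnit_iff_forall_ne_zero]
    rintro ⟨⟨x, hx⟩, y⟩ h0
    simp only [ContinuousMap.sub_apply, ContinuousMap.smul_apply, ContinuousMap.one_apply,
      smul_eq_mul, mul_one, a, ContinuousMap.coe_mk, sub_eq_zero] at h0
    rw [mem_sphere] at hx; rw [mem_ball] at hz
    rw [h0] at hx; linarith
  have hnb : ∀ z ∈ ball (0 : ℂ) R, IsUnit (b - z • (1 : C(S × S, ℂ))) := by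
    intro z hz
    rw [ContinuousMap.isUnit_iff_forall_ne_zero]
    rintro ⟨y, ⟨x, hx⟩⟩ h0
    simp only [ContinuousMap.sub_apply, ContinuousMap.smul_apply, ContinuousMap.one_apply,
      smul_eq_mul, mul_one, b, ContinuousMap.coe_mk, sub_eq_zero] at h0
    rw [mem_sphere] at hx; rw [mem_ball] at hz
    rw [h0] at hx; linarith
  have hinv : ∀ u : C(S × S, ℂ), IsUnit u → ∀ p, (Ring.inverse u) p = (u p)⁻¹ := by
    intro u hu p
    have := Ring.inverse_mul_cancel u hu
    have h3 := congrArg (fun v : C(S × S, ℂ) => v p) this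
    simp only [ContinuousMap.mul_apply, ContinuousMap.one_apply] at h3
    exact eq_inv_of_mul_eq_one_left h3
  have key : ∀ ζ ∈ ball (0 : ℂ × ℂ) R,
      f ζ = k * (k * I (F * Ring.inverse (a - ζ.1 • (1 : C(S × S, ℂ))) *
        Ring.inverse (b - ζ.2 • (1 : C(S × S, ℂ))))) := by
    rintro ⟨z, w⟩ hζ
    have hz : z ∈ ball (0 : ℂ) R := by
      rw [mem_ball_zero_iff] at hζ ⊢; exact (le_max_left _ _).trans_lt hζ
    have hw : w ∈ ball (0 : ℂ) R := by
      rw [mem_ball_zero_iff] at hζ ⊢; exact (le_max_right _ _).trans_lt hζ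
    rw [hI _ (fun x y => (x - z)⁻¹ * ((y - w)⁻¹ • f (x, y)))]
    · have e1 : ∀ x ∈ sphere (0 : ℂ) R, (∮ y in C(0, R), (x - z)⁻¹ * ((y - w)⁻¹ • f (x, y))) =
          (x - z)⁻¹ • (k⁻¹ * f (x, w)) := by
        intro x hx
        rw [circleIntegral.integral_const_mul, smul_eq_mul]
        congr 1
        have := Complex.circleIntegral_sub_inv_smul_of_differentiable_on_off_countable
          Set.countable_empty hw (f := fun y => f (x, y))
          (hc.comp (by fun_prop) (fun y hy => hmem _ _ (sphere_subset_closedBall hx) hy))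
          (fun y hy => (h2 x (sphere_subset_closedBall hx)).differentiableAt
            (isOpen_ball.mem_nhds hy.1))
        rw [this]; simp [k]
      rw [circleIntegral.integral_congr hR.le e1]
      have := Complex.circleIntegral_sub_inv_smul_of_differentiable_on_off_countable
          Set.countable_empty hz (f := fun x => k⁻¹ * f (x, w))
          (continuousOn_const.mul (hc.comp (f := fun x => (x, w)) (by fun_prop)
            (fun y hy => hmem _ _ hy (ball_subset_closedBall hw))))
          (fun y hy => ((h1 w (ball_subset_closedBall hw)).differentiableAt
            (isOpen_ball.mem_nhds hy.1)).const_mul _)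
      rw [this]
      have hk : k ≠ 0 := by simp [k, Real.pi_ne_zero]
      have hk' : (2 * Real.pi * Complex.I : ℂ) = k⁻¹ := by simp [k]
      rw [hk', smul_eq_mul]
      field_simp
    · intro x y
      simp only [ContinuousMap.mul_apply, hinv _ (hna z hz), hinv _ (hnb w hw)]
      simp [F, a, b]; ring
  intro ζ hζ
  have hz : ζ.1 ∈ ball (0 : ℂ) R := by
    rw [mem_ball_zero_iff] at hζ ⊢; exact (le_max_left _ _).trans_lt hζ
  have hw : ζ.2 ∈ ball (0 : ℂ) R := by
    rw [mem_ball_zero_iff] at hζ ⊢; exact (le_max_right _ _).trans_lt hζ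
  have hev : (fun ζ : ℂ × ℂ => k * (k * I (F * Ring.inverse (a - ζ.1 • (1 : C(S × S, ℂ))) *
        Ring.inverse (b - ζ.2 • (1 : C(S × S, ℂ)))))) =ᶠ[𝓝 ζ] f := by
    filter_upwards [isOpen_ball.mem_nhds hζ] with x hx using (key x hx).symm
  refine AnalyticAt.congr ?_ hev
  have ia : AnalyticAt ℂ (fun ζ : ℂ × ℂ => Ring.inverse (a - ζ.1 • (1 : C(S × S, ℂ)))) ζ := by
    refine AnalyticAt.fun_comp (g := Ring.inverse) (f := fun ζ : ℂ × ℂ => a - ζ.1 • (1 : C(S × S, ℂ)))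
      ?_ (analyticAt_const.sub (analyticAt_fst.smul analyticAt_const))
    exact analyticAt_inverse (𝕜 := ℂ) (hna _ hz).unit
  have ib : AnalyticAt ℂ (fun ζ : ℂ × ℂ => Ring.inverse (b - ζ.2 • (1 : C(S × S, ℂ)))) ζ := by
    refine AnalyticAt.fun_comp (g := Ring.inverse) (f := fun ζ : ℂ × ℂ => b - ζ.2 • (1 : C(S × S, ℂ)))
      ?_ (analyticAt_const.sub (analyticAt_snd.smul analyticAt_const))
    exact analyticAt_inverse (𝕜 := ℂ) (hnb _ hw).unit
  refine analyticAt_const.mul (analyticAt_const.mul ?_)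
  exact (I.analyticAt _).fun_comp ((analyticAt_const.mul ia).mul ib)

open Metric Topology in
/-- A uniform limit of analytic functions on a bidisc is analytic. -/
theorem analytic_of_uniform_limit (r : ℝ) (F : ℕ → ℂ × ℂ → ℂ) (f : ℂ × ℂ → ℂ)
    (hF : ∀ n, ∀ ζ ∈ ball (0 : ℂ × ℂ) r, AnalyticAt ℂ (F n) ζ)
    (hu : TendstoUniformlyOn F f atTop (ball 0 r)) :
    ∀ ζ ∈ ball (0 : ℂ × ℂ) r, AnalyticAt ℂ f ζ := by
  intro ζ hζ
  rw [mem_ball_zero_iff] at hζ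
  obtain ⟨R, hR1, hR2⟩ := exists_between hζ
  have hmem : ∀ z w : ℂ, z ∈ closedBall (0 : ℂ) R → w ∈ closedBall (0 : ℂ) R →
      (z, w) ∈ ball (0 : ℂ × ℂ) r := by
    intro z w hz hw
    simp only [mem_closedBall_zero_iff, mem_ball_zero_iff] at hz hw ⊢
    exact (max_le hz hw).trans_lt hR2
  refine osgood R ((norm_nonneg _).trans_lt hR1) f ?_ ?_ ?_ ζ (by simpa using hR1)
  · refine (hu.continuousOn (Eventually.frequently (Eventually.of_forall fun n => ?_))).mono
      (closedBall_subset_ball hR2)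
    exact fun x hx => (hF n x hx).continuousAt.continuousWithinAt
  · intro w hw
    refine TendstoLocallyUniformlyOn.differentiableOn (F := fun n z => F n (z, w)) (φ := atTop)
      ?_ ?_ isOpen_ball
    · exact ((hu.comp (fun z : ℂ => (z, w))).mono
        (fun z hz => hmem _ _ (ball_subset_closedBall hz) hw)).tendstoLocallyUniformlyOn
    · refine Eventually.of_forall fun n z hz => ?_
      have := (hF n (z, w) (hmem _ _ (ball_subset_closedBall hz) hw)).differentiableAt
      exact (this.comp z (f := fun z => (z, w)) (by fun_prop)).differentiableWithinAt
  · intro z hz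
    refine TendstoLocallyUniformlyOn.differentiableOn (F := fun n w => F n (z, w)) (φ := atTop)
      ?_ ?_ isOpen_ball
    · exact ((hu.comp (fun w : ℂ => (z, w))).mono
        (fun w hw => hmem _ _ hz (ball_subset_closedBall hw))).tendstoLocallyUniformlyOn
    · refine Eventually.of_forall fun n w hw => ?_
      have := (hF n (z, w) (hmem _ _ hz (ball_subset_closedBall hw))).differentiableAt
      exact (this.comp w (f := fun w => (z, w)) (by fun_prop)).differentiableWithinAt

/-! ### The functional equation `Y ζ = Ψ (ζ, Y (σ ζ))` -/

open Metric Topology in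
/-- Near the origin an analytic `Ψ` is Lipschitz in its second variable, with a constant as close
as desired to the norm of the partial derivative there; this is strict differentiability. -/
theorem local_estimates (Ψ : (ℂ × ℂ) × (ℂ × ℂ) → ℂ × ℂ) (D : (ℂ × ℂ) →L[ℂ] (ℂ × ℂ)) (M L : ℝ)
    (hΨ : AnalyticAt ℂ Ψ 0) (h0 : Ψ 0 = 0) (hD : HasFDerivAt (fun X => Ψ (0, X)) D 0)
    (hM : ∀ X, ‖D X‖ ≤ M * ‖X‖) (hML : M < L) (V : Set ((ℂ × ℂ) × (ℂ × ℂ))) (hV : V ∈ 𝓝 0) :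
    ∃ K > (0 : ℝ), ∃ δ > (0 : ℝ),
      (∀ ζ X, ‖ζ‖ < δ → ‖X‖ < δ → (ζ, X) ∈ V ∧ AnalyticAt ℂ Ψ (ζ, X)) ∧
      (∀ ζ X X', ‖ζ‖ < δ → ‖X‖ < δ → ‖X'‖ < δ → ‖Ψ (ζ, X) - Ψ (ζ, X')‖ ≤ L * ‖X - X'‖) ∧
      (∀ ζ, ‖ζ‖ < δ → ‖Ψ (ζ, 0)‖ ≤ K * ‖ζ‖) := by
  have hs := hΨ.hasStrictFDerivAt
  have hDeq : ∀ X, fderiv ℂ Ψ 0 (0, X) = D X := by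
    intro X
    have h1 : HasFDerivAt (fun X : ℂ × ℂ => Ψ (0, X))
        ((fderiv ℂ Ψ 0).comp (ContinuousLinearMap.inr ℂ (ℂ × ℂ) (ℂ × ℂ))) 0 := by
      refine HasFDerivAt.comp (g := Ψ) (f := fun X : ℂ × ℂ => ((0 : ℂ × ℂ), X)) 0 ?_ ?_
      · exact hs.hasFDerivAt
      · exact (ContinuousLinearMap.inr ℂ (ℂ × ℂ) (ℂ × ℂ)).hasFDerivAt
    rw [← h1.unique hD]; simp
  obtain ⟨K, s, hs1, hs2⟩ := hs.exists_lipschitzOnWith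
  have hlo := (hs.isLittleO.def (sub_pos.2 hML))
  obtain ⟨t, hto, ht0, ht2⟩ := exists_nhds_square hlo
  have ht1 := hto.mem_nhds ht0
  obtain ⟨δ, hδ, hsub⟩ := Metric.mem_nhds_iff.1
    (inter_mem (inter_mem hV hΨ.eventually_analyticAt) (inter_mem hs1 ht1))
  have hb : ∀ ζ X : ℂ × ℂ, ‖ζ‖ < δ → ‖X‖ < δ → (ζ, X) ∈ ball (0 : (ℂ × ℂ) × (ℂ × ℂ)) δ := by
    intro ζ X h1 h2
    rw [mem_ball_zero_iff]; exact max_lt h1 h2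
  refine ⟨K + 1, by positivity, δ, hδ, ?_, ?_, ?_⟩
  · intro ζ X h1 h2
    exact (hsub (hb ζ X h1 h2)).1
  · intro ζ X X' h1 h2 h3
    have := ht2 (Set.mk_mem_prod (hsub (hb ζ X h1 h2)).2.2 (hsub (hb ζ X' h1 h3)).2.2)
    simp only [Set.mem_ofPred_eq, Prod.mk_sub_mk, sub_self, hDeq] at this
    have hn : ‖((0 : ℂ × ℂ), X - X')‖ = ‖X - X'‖ := by simp [Prod.norm_def]
    rw [hn] at this
    have h4 := norm_add_le (Ψ (ζ, X) - Ψ (ζ, X') - D (X - X')) (D (X - X'))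
    rw [sub_add_cancel] at h4
    have := hM (X - X')
    linarith
  · intro ζ h1
    have := hs2.dist_le_mul _ (hsub (hb ζ 0 h1 (by simpa using hδ))).2.1 _ (mem_of_mem_nhds hs1)
    rw [h0, dist_zero_right, dist_zero_right] at this
    have hn : ‖(ζ, (0 : ℂ × ℂ))‖ = ‖ζ‖ := by simp [Prod.norm_def]
    rw [hn] at this
    nlinarith [norm_nonneg ζ]

open Metric Topology in
/-- Existence for `Y = Ψ (·, Y ∘ σ)`: the differences of the Picard iterates are bounded by
`K ‖ζ‖ (L ρ)ⁿ`, so a Lipschitz constant `L ≥ 1` is allowed as long as the contraction factor `ρ`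
of `σ` compensates for it. -/
theorem exists_fixed (Ψ : (ℂ × ℂ) × (ℂ × ℂ) → ℂ × ℂ) (σ : (ℂ × ℂ) →L[ℂ] (ℂ × ℂ))
    (K δ L ρ : ℝ) (hK : 0 < K) (hδ : 0 < δ) (hL : 0 ≤ L) (hρ : 0 ≤ ρ) (hρ1 : ρ < 1)
    (hLρ : L * ρ < 1) (hσ : ∀ ζ, ‖σ ζ‖ ≤ ρ * ‖ζ‖)
    (han : ∀ ζ X, ‖ζ‖ < δ → ‖X‖ < δ → AnalyticAt ℂ Ψ (ζ, X))
    (hlip : ∀ ζ X X', ‖ζ‖ < δ → ‖X‖ < δ → ‖X'‖ < δ → ‖Ψ (ζ, X) - Ψ (ζ, X')‖ ≤ L * ‖X - X'‖)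
    (hbd : ∀ ζ, ‖ζ‖ < δ → ‖Ψ (ζ, 0)‖ ≤ K * ‖ζ‖) :
    ∃ r > (0 : ℝ), r ≤ δ ∧ ∃ Y : ℂ × ℂ → ℂ × ℂ, Y 0 = 0 ∧
      ∀ ζ, ‖ζ‖ < r → AnalyticAt ℂ Y ζ ∧ ‖Y ζ‖ < δ ∧ Y ζ = Ψ (ζ, Y (σ ζ)) := by
  have hpos : 0 < 1 - L * ρ := by linarith
  obtain ⟨r, hr0, hr⟩ : ∃ r > (0 : ℝ), r ≤ min δ (δ * (1 - L * ρ) / (2 * K)) :=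
    ⟨_, lt_min hδ (by positivity), le_rfl⟩
  have hrδ : r ≤ δ := hr.trans (min_le_left _ _)
  set C := K / (1 - L * ρ) with hC
  have hC0 : 0 < C := by positivity
  have hCr : C * r < δ := by
    have := hr.trans (min_le_right _ _)
    have h2 : C * r ≤ C * (δ * (1 - L * ρ) / (2 * K)) := by gcongr
    have h3 : C * (δ * (1 - L * ρ) / (2 * K)) = δ / 2 := by rw [hC]; field_simp
    linarith
  have hCe : K + L * (C * ρ) = C := by rw [hC]; field_simp; ring
  have hσr : ∀ ζ, ‖ζ‖ < r → ‖σ ζ‖ < r := fun ζ h =>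
    ((hσ ζ).trans (mul_le_of_le_one_left (norm_nonneg _) hρ1.le)).trans_lt h
  let Z : ℕ → ℂ × ℂ → ℂ × ℂ := fun n => Nat.rec (fun _ => 0) (fun _ y ζ => Ψ (ζ, y (σ ζ))) n
  have Zs : ∀ n ζ, Z (n + 1) ζ = Ψ (ζ, Z n (σ ζ)) := fun _ _ => rfl
  have Z0 : ∀ ζ, Z 0 ζ = 0 := fun _ => rfl
  have hδb : ∀ (n : ℕ), (∀ ζ, ‖ζ‖ < r → ‖Z n ζ‖ ≤ C * ‖ζ‖) → ∀ ζ, ‖ζ‖ < r → ‖Z n ζ‖ < δ := by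
    intro n h ζ hζ
    exact ((h ζ hζ).trans (mul_le_mul_of_nonneg_left hζ.le hC0.le)).trans_lt hCr
  -- `C` solves `K + L ρ C = C`, so the bound `C ‖ζ‖` is preserved by the iteration.
  have hZb : ∀ n, ∀ ζ, ‖ζ‖ < r → ‖Z n ζ‖ ≤ C * ‖ζ‖ := by
    intro n
    induction n with
    | zero => intro ζ _; rw [Z0, norm_zero]; positivity
    | succ n ih =>
      intro ζ hζ
      rw [Zs]
      have h1 := hlip ζ (Z n (σ ζ)) 0 (hζ.trans_le hrδ) (hδb n ih _ (hσr ζ hζ)) (by simpa using hδ)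
      have h2 := hbd ζ (hζ.trans_le hrδ)
      have h3 := norm_add_le (Ψ (ζ, Z n (σ ζ)) - Ψ (ζ, 0)) (Ψ (ζ, 0))
      rw [sub_add_cancel] at h3
      rw [sub_zero] at h1
      have h4 : L * ‖Z n (σ ζ)‖ ≤ L * (C * (ρ * ‖ζ‖)) :=
        mul_le_mul_of_nonneg_left ((ih _ (hσr ζ hζ)).trans
          (mul_le_mul_of_nonneg_left (hσ ζ) hC0.le)) hL
      calc _ ≤ L * (C * (ρ * ‖ζ‖)) + K * ‖ζ‖ := by linarith
        _ = (K + L * (C * ρ)) * ‖ζ‖ := by ring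
        _ = _ := by rw [hCe]
  have hZδ := fun n => hδb n (hZb n)
  have hZd : ∀ n, ∀ ζ, ‖ζ‖ < r → dist (Z n ζ) (Z (n + 1) ζ) ≤ (K * ‖ζ‖) * (L * ρ) ^ n := by
    intro n
    induction n with
    | zero =>
      intro ζ hζ
      rw [Zs, Z0, Z0, dist_zero_left]
      simpa using hbd ζ (hζ.trans_le hrδ)
    | succ n ih =>
      intro ζ hζ
      rw [Zs, Zs (n + 1), dist_eq_norm]
      have hσ' := hσr ζ hζ
      refine (hlip ζ _ _ (hζ.trans_le hrδ) (hZδ n _ hσ') (hZδ (n + 1) _ hσ')).trans ?_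
      rw [← dist_eq_norm]
      calc _ ≤ L * ((K * (ρ * ‖ζ‖)) * (L * ρ) ^ n) := by
            refine mul_le_mul_of_nonneg_left ((ih _ hσ').trans ?_) hL
            gcongr; exact hσ ζ
        _ = _ := by ring
  have hlim : ∀ ζ, ∃ y, ‖ζ‖ < r → Tendsto (fun n => Z n ζ) atTop (𝓝 y) := by
    intro ζ
    by_cases hζ : ‖ζ‖ < r
    · obtain ⟨y, hy⟩ := cauchySeq_tendsto_of_complete
        (cauchySeq_of_le_geometric _ _ hLρ (fun n => hZd n ζ hζ))
      exact ⟨y, fun _ => hy⟩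
    · exact ⟨0, fun h => absurd h hζ⟩
  choose Y hY using hlim
  have hYd : ∀ ζ, ‖ζ‖ < r → ∀ n, dist (Z n ζ) (Y ζ) ≤ (K * ‖ζ‖) * (L * ρ) ^ n / (1 - L * ρ) :=
    fun ζ hζ n => dist_le_of_le_geometric_of_tendsto _ _ hLρ (fun n => hZd n ζ hζ) (hY ζ hζ) n
  have hYb : ∀ ζ, ‖ζ‖ < r → ‖Y ζ‖ ≤ C * ‖ζ‖ := fun ζ hζ =>
    le_of_tendsto (hY ζ hζ).norm (Eventually.of_forall fun n => hZb n ζ hζ)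
  have hYδ : ∀ ζ, ‖ζ‖ < r → ‖Y ζ‖ < δ := fun ζ hζ =>
    ((hYb ζ hζ).trans (mul_le_mul_of_nonneg_left hζ.le hC0.le)).trans_lt hCr
  have hunif : TendstoUniformlyOn Z Y atTop (ball 0 r) := by
    rw [Metric.tendstoUniformlyOn_iff]
    intro ε hε
    have : Tendsto (fun n : ℕ => (K * r) * (L * ρ) ^ n / (1 - L * ρ)) atTop (𝓝 0) := by
      have := ((tendsto_pow_atTop_nhds_zero_of_lt_one (mul_nonneg hL hρ) hLρ).const_mul
        (K * r)).div_const (1 - L * ρ)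
      simpa using this
    filter_upwards [this.eventually (gt_mem_nhds hε)] with n hn ζ hζ
    rw [mem_ball_zero_iff] at hζ
    rw [dist_comm]
    refine ((hYd ζ hζ n).trans ?_).trans_lt hn
    have := mul_nonneg hL hρ
    gcongr
  have hZa : ∀ n, ∀ ζ ∈ ball (0 : ℂ × ℂ) r, AnalyticAt ℂ (Z n) ζ := by
    intro n
    induction n with
    | zero => intro ζ _; exact analyticAt_const
    | succ n ih =>
      intro ζ hζ
      rw [mem_ball_zero_iff] at hζ
      have h1 : AnalyticAt ℂ (fun ζ => Z n (σ ζ)) ζ :=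
        (ih (σ ζ) (by simpa using hσr ζ hζ)).fun_comp (σ.analyticAt ζ)
      exact AnalyticAt.fun_comp (g := Ψ) (f := fun ζ => (ζ, Z n (σ ζ)))
        (han ζ (Z n (σ ζ)) (hζ.trans_le hrδ) (hZδ n _ (hσr ζ hζ))) (analyticAt_id.prod h1)
  refine ⟨r, hr0, hrδ, Y, ?_, ?_⟩
  · have := hYb 0 (by simpa using hr0)
    simpa using this
  · intro ζ hζ
    refine ⟨?_, hYδ ζ hζ, ?_⟩
    · have a1 := analytic_of_uniform_limit r (fun n ζ => (Z n ζ).1) (fun ζ => (Y ζ).1)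
        (fun n ζ h => analyticAt_fst.fun_comp (hZa n ζ h))
        (uniformContinuous_fst.comp_tendstoUniformlyOn hunif) ζ (by simpa using hζ)
      have a2 := analytic_of_uniform_limit r (fun n ζ => (Z n ζ).2) (fun ζ => (Y ζ).2)
        (fun n ζ h => analyticAt_snd.fun_comp (hZa n ζ h))
        (uniformContinuous_snd.comp_tendstoUniformlyOn hunif) ζ (by simpa using hζ)
      exact a1.prod a2
    · have hσ' := hσr ζ hζ
      have t1 : Tendsto (fun n => Z (n + 1) ζ) atTop (𝓝 (Y ζ)) :=
        (hY ζ hζ).comp (tendsto_add_atTop_nat 1)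
      have hc : ContinuousAt (fun X => Ψ (ζ, X)) (Y (σ ζ)) :=
        (han ζ _ (hζ.trans_le hrδ) (hYδ _ hσ')).continuousAt.comp
          (f := fun X => (ζ, X)) (by fun_prop)
      have t2 : Tendsto (fun n => Ψ (ζ, Z n (σ ζ))) atTop (𝓝 (Ψ (ζ, Y (σ ζ)))) :=
        hc.tendsto.comp (hY _ hσ')
      exact tendsto_nhds_unique t1 t2

open Metric Topology in
/-- Uniqueness for `Y = Ψ (·, Y ∘ σ)` as a germ: two solutions vanishing at the origin differ by
`O(‖ζ‖)`, and each use of the equation improves the constant by the factor `L ρ < 1`. -/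
theorem unique_fixed (Ψ : (ℂ × ℂ) × (ℂ × ℂ) → ℂ × ℂ) (σ : (ℂ × ℂ) →L[ℂ] (ℂ × ℂ))
    (δ L ρ : ℝ) (hδ : 0 < δ) (hL : 0 ≤ L) (hρ : 0 ≤ ρ) (hρ1 : ρ < 1)
    (hLρ : L * ρ < 1) (hσ : ∀ ζ, ‖σ ζ‖ ≤ ρ * ‖ζ‖)
    (hlip : ∀ ζ X X', ‖ζ‖ < δ → ‖X‖ < δ → ‖X'‖ < δ → ‖Ψ (ζ, X) - Ψ (ζ, X')‖ ≤ L * ‖X - X'‖)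
    (Y Y' : ℂ × ℂ → ℂ × ℂ) (hY0 : Y 0 = 0) (hY0' : Y' 0 = 0)
    (hYd : DifferentiableAt ℂ Y 0) (hYd' : DifferentiableAt ℂ Y' 0)
    (hY : ∀ᶠ ζ in 𝓝 0, Y ζ = Ψ (ζ, Y (σ ζ))) (hY' : ∀ᶠ ζ in 𝓝 0, Y' ζ = Ψ (ζ, Y' (σ ζ))) :
    Y =ᶠ[𝓝 0] Y' := by
  obtain ⟨K, hK⟩ := (hYd.sub hYd').isBigO_sub.bound
  have c1 : ∀ᶠ ζ in 𝓝 (0 : ℂ × ℂ), ‖Y ζ‖ < δ := by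
    have := hYd.continuousAt.norm
    exact this.eventually (gt_mem_nhds (by simpa [hY0] using hδ))
  have c2 : ∀ᶠ ζ in 𝓝 (0 : ℂ × ℂ), ‖Y' ζ‖ < δ := by
    have := hYd'.continuousAt.norm
    exact this.eventually (gt_mem_nhds (by simpa [hY0'] using hδ))
  obtain ⟨r, hr, hsub⟩ := Metric.eventually_nhds_iff_ball.1
    ((hK.and (c1.and c2)).and (hY.and hY'))
  have hmain : ∀ n : ℕ, ∀ ζ : ℂ × ℂ, ‖ζ‖ < min r δ →
      ‖Y ζ - Y' ζ‖ ≤ (L * ρ) ^ n * (|K| * ‖ζ‖) := by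
    intro n
    induction n with
    | zero =>
      intro ζ hζ
      have := (hsub ζ (by simpa using hζ.trans_le (min_le_left _ _))).1.1
      simp only [Pi.sub_apply, hY0, hY0', sub_zero] at this
      rw [pow_zero, one_mul]
      exact this.trans (mul_le_mul_of_nonneg_right (le_abs_self K) (norm_nonneg _))
    | succ n ih =>
      intro ζ hζ
      have hσ' : ‖σ ζ‖ < min r δ :=
        ((hσ ζ).trans (mul_le_of_le_one_left (norm_nonneg _) hρ1.le)).trans_lt hζ
      have h1 := hsub ζ (by simpa using hζ.trans_le (min_le_left _ _))
      have h2 := hsub (σ ζ) (by simpa using hσ'.trans_le (min_le_left _ _))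
      rw [h1.2.1, h1.2.2]
      refine (hlip _ _ _ (hζ.trans_le (min_le_right _ _)) h2.1.2.1 h2.1.2.2).trans ?_
      calc _ ≤ L * ((L * ρ) ^ n * (|K| * (ρ * ‖ζ‖))) := by
            refine mul_le_mul_of_nonneg_left ((ih _ hσ').trans ?_) hL
            have := mul_nonneg hL hρ
            gcongr; exact hσ ζ
        _ = _ := by ring
  filter_upwards [ball_mem_nhds (0 : ℂ × ℂ) (lt_min hr hδ)] with ζ hζ
  rw [mem_ball_zero_iff] at hζ
  have t : Tendsto (fun n : ℕ => (L * ρ) ^ n * (|K| * ‖ζ‖)) atTop (𝓝 0) := by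
    simpa using (tendsto_pow_atTop_nhds_zero_of_lt_one (mul_nonneg hL hρ) hLρ).mul_const (|K| * ‖ζ‖)
  have := ge_of_tendsto' t (fun n => hmain n ζ hζ)
  exact sub_eq_zero.1 (norm_le_zero_iff.1 this)

open Metric Topology in
/-- Two functions continuous at a point of `ℂ²` agree there if they agree at all nearby points off
the line `ζ₁ = 0`, because that line has dense complement. -/
theorem eq_of_eventually_off_line (f g : ℂ × ℂ → ℂ × ℂ) (ζ : ℂ × ℂ) (hf : ContinuousAt f ζ)
    (hg : ContinuousAt g ζ) (h : ∀ᶠ z in 𝓝 ζ, z.1 ≠ 0 → f z = g z) : f ζ = g ζ := by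
  by_cases h0 : ζ.1 = 0
  · have ht : Tendsto (fun x : ℂ => ((x, ζ.2) : ℂ × ℂ)) (𝓝[≠] 0) (𝓝 ζ) := by
      have : Tendsto (fun x : ℂ => ((x, ζ.2) : ℂ × ℂ)) (𝓝 0) (𝓝 ((0 : ℂ), ζ.2)) :=
        Continuous.tendsto (by fun_prop) 0
      rw [← h0] at this
      exact h0 ▸ this.mono_left nhdsWithin_le_nhds
    refine tendsto_nhds_unique_of_eventuallyEq (hf.tendsto.comp ht) (hg.tendsto.comp ht) ?_
    filter_upwards [ht.eventually h, self_mem_nhdsWithin] with x hx hx0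
    exact hx hx0
  · exact h.self_of_nhds h0

/-! ### The reduced q-P(A₁) system -/

/-- The parameters `b₁, …, b₈`, the multipliers `q₁, q₂` of the dilation, the leading coefficient
`Λ` of `g / ζ₁`, and a scale `ε` for the second coordinate of the unknown
`X = (u, s)`, where `f / ζ₁ = 1 + u` and `g / ζ₁ = Λ (1 + u - ε s)`.

In the definitions below `z = ζ₁`, `w = ζ₂`, the unbarred `F = f / ζ₁`, `G = g / ζ₁` are taken at
`ζ`, and `Fb`, `Gb` are the same functions at the dilated point `(q₁ ζ₁, q₂ ζ₂)`. -/
structure QPData where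
  (b1 b2 b3 b4 b5 b6 b7 b8 q1 q2 Λ ε : ℂ)

namespace QPData

variable (d : QPData)

/-- Left coefficient of the reduced second relation
`(G Fb - q₂ w²) * cP = (q₁ z² G Fb - 1) * cQ`. -/
noncomputable def cP (z w Fb Gb : ℂ) : ℂ :=
  (Gb * Fb - d.q2 ^ 2 * w ^ 2) * ((d.q1 * z * Fb - d.b5⁻¹) * (d.q1 * z * Fb - d.b6⁻¹) *
    (d.q1 * z * Fb - d.b7⁻¹) * (d.q1 * z * Fb - d.b8⁻¹))

/-- Right coefficient of the reduced second relation
`(G Fb - q₂ w²) * cP = (q₁ z² G Fb - 1) * cQ`. -/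
noncomputable def cQ (z w Fb Gb : ℂ) : ℂ :=
  d.q1 * (d.q1 ^ 2 * z ^ 2 * Gb * Fb - 1) * ((Fb - d.q2 * w * d.b1⁻¹) * (Fb - d.q2 * w * d.b2⁻¹) *
    (Fb - d.q2 * w * d.b3⁻¹) * (Fb - d.q2 * w * d.b4⁻¹))

/-- Left coefficient of the reduced first relation
`(G F - w²) * cA = (z² G F - 1) * cB`. -/
noncomputable def cA (z w G Fb : ℂ) : ℂ :=
  d.q1 * (G * Fb - d.q2 * w ^ 2) * ((z * G - d.b5) * (z * G - d.b6) * (z * G - d.b7) *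
    (z * G - d.b8))

/-- Right coefficient of the reduced first relation
`(G F - w²) * cA = (z² G F - 1) * cB`. -/
noncomputable def cB (z w G Fb : ℂ) : ℂ :=
  (d.q1 * z ^ 2 * G * Fb - 1) * ((G - d.b1 * w) * (G - d.b2 * w) * (G - d.b3 * w) *
    (G - d.b4 * w))

/-- The reduced second relation is affine in `G`: it reads `G * denG = numG`. -/
noncomputable def numG (z w Fb Gb : ℂ) : ℂ := d.q2 * w ^ 2 * d.cP z w Fb Gb - d.cQ z w Fb Gb

/-- Coefficient of `G` in the reduced second relation `G * denG = numG`. -/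
noncomputable def denG (z w Fb Gb : ℂ) : ℂ := Fb * d.cP z w Fb Gb - d.q1 * z ^ 2 * Fb * d.cQ z w Fb Gb

/-- The reduced first relation is affine in `F`: it reads `F * denF = numF`. -/
noncomputable def numF (z w G Fb : ℂ) : ℂ := w ^ 2 * d.cA z w G Fb - d.cB z w G Fb

/-- Coefficient of `F` in the reduced first relation `F * denF = numF`. -/
noncomputable def denF (z w G Fb : ℂ) : ℂ := G * d.cA z w G Fb - z ^ 2 * G * d.cB z w G Fb

/-- After the substitution, (E1) is `ζ₁⁴` times the reduced first relation. -/
theorem qpSys_E1 {q z w F G Fb : ℂ} (hq : q = d.q1 * d.q2) :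
    (z * G * (z * F) - (z * w) ^ 2) * (z * G * (d.q1 * z * Fb) - q * (z * w) ^ 2) *
      (z * G - d.b5) * (z * G - d.b6) * (z * G - d.b7) * (z * G - d.b8) -
    (z * G * (z * F) - 1) * (z * G * (d.q1 * z * Fb) - 1) * (z * G - d.b1 * (z * w)) *
      (z * G - d.b2 * (z * w)) * (z * G - d.b3 * (z * w)) * (z * G - d.b4 * (z * w)) =
    z ^ 4 * (F * d.denF z w G Fb - d.numF z w G Fb) := by
  have e : ∀ b, z * G - b * (z * w) = z * (G - b * w) := fun b => by ring
  rw [e, e, e, e, hq]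
  unfold denF numF cA cB
  generalize z * G - d.b5 = p5
  generalize z * G - d.b6 = p6
  generalize z * G - d.b7 = p7
  generalize z * G - d.b8 = p8
  generalize G - d.b1 * w = p1
  generalize G - d.b2 * w = p2
  generalize G - d.b3 * w = p3
  generalize G - d.b4 * w = p4
  ring

/-- After the substitution, (E2) is `q₁³ ζ₁⁴` times the reduced second relation. -/
theorem qpSys_E2 {q z w G Fb Gb : ℂ} (hq : q = d.q1 * d.q2) :
    (z * G * (d.q1 * z * Fb) - q * (z * w) ^ 2) *
      (d.q1 * z * Gb * (d.q1 * z * Fb) - q ^ 2 * (z * w) ^ 2) * (d.q1 * z * Fb - d.b5⁻¹) *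
      (d.q1 * z * Fb - d.b6⁻¹) * (d.q1 * z * Fb - d.b7⁻¹) * (d.q1 * z * Fb - d.b8⁻¹) -
    (z * G * (d.q1 * z * Fb) - 1) * (d.q1 * z * Gb * (d.q1 * z * Fb) - 1) *
      (d.q1 * z * Fb - q * (z * w) / d.b1) * (d.q1 * z * Fb - q * (z * w) / d.b2) *
      (d.q1 * z * Fb - q * (z * w) / d.b3) * (d.q1 * z * Fb - q * (z * w) / d.b4) =
    d.q1 ^ 3 * z ^ 4 * (G * d.denG z w Fb Gb - d.numG z w Fb Gb) := by
  have e : ∀ b, d.q1 * z * Fb - d.q1 * d.q2 * (z * w) / b = d.q1 * z * (Fb - d.q2 * w * b⁻¹) :=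
    fun b => by ring
  rw [hq, e, e, e, e]
  unfold denG numG cP cQ
  generalize d.q1 * z * Fb - d.b5⁻¹ = p5
  generalize d.q1 * z * Fb - d.b6⁻¹ = p6
  generalize d.q1 * z * Fb - d.b7⁻¹ = p7
  generalize d.q1 * z * Fb - d.b8⁻¹ = p8
  generalize Fb - d.q2 * w * d.b1⁻¹ = p1
  generalize Fb - d.q2 * w * d.b2⁻¹ = p2
  generalize Fb - d.q2 * w * d.b3⁻¹ = p3
  generalize Fb - d.q2 * w * d.b4⁻¹ = p4
  ring

theorem qpSys_of_reduced {q z w F G Fb Gb : ℂ} (hq : q = d.q1 * d.q2)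
    (hF : F * d.denF z w G Fb = d.numF z w G Fb) (hG : G * d.denG z w Fb Gb = d.numG z w Fb Gb) :
    qpSys d.b1 d.b2 d.b3 d.b4 d.b5 d.b6 d.b7 d.b8 q (z * w) (z * F) (z * G) (d.q1 * z * Fb)
      (d.q1 * z * Gb) := by
  have h1 := d.qpSys_E1 (z := z) (w := w) (F := F) (G := G) (Fb := Fb) hq
  have h2 := d.qpSys_E2 (z := z) (w := w) (G := G) (Fb := Fb) (Gb := Gb) hq
  rw [hF, sub_self, mul_zero, sub_eq_zero] at h1
  rw [hG, sub_self, mul_zero, sub_eq_zero] at h2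
  exact ⟨h1, h2⟩

theorem reduced_of_qpSys {q z w F G Fb Gb : ℂ} (hq : q = d.q1 * d.q2) (hz : z ≠ 0)
    (hq1 : d.q1 ≠ 0)
    (h : qpSys d.b1 d.b2 d.b3 d.b4 d.b5 d.b6 d.b7 d.b8 q (z * w) (z * F) (z * G) (d.q1 * z * Fb)
      (d.q1 * z * Gb)) :
    F * d.denF z w G Fb = d.numF z w G Fb ∧ G * d.denG z w Fb Gb = d.numG z w Fb Gb := by
  have h1 := d.qpSys_E1 (z := z) (w := w) (F := F) (G := G) (Fb := Fb) hq
  have h2 := d.qpSys_E2 (z := z) (w := w) (G := G) (Fb := Fb) (Gb := Gb) hq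
  rw [sub_eq_zero.2 h.1] at h1
  rw [sub_eq_zero.2 h.2] at h2
  constructor
  · have := (mul_eq_zero.1 h1.symm).resolve_left (pow_ne_zero _ hz)
    exact sub_eq_zero.1 this
  · have := (mul_eq_zero.1 h2.symm).resolve_left
      (mul_ne_zero (pow_ne_zero _ hq1) (pow_ne_zero _ hz))
    exact sub_eq_zero.1 this

/-- `f / ζ₁` in terms of the unknown `X = (u, s)`. -/
noncomputable def coF (X : ℂ × ℂ) : ℂ := 1 + X.1

/-- `g / ζ₁` in terms of the unknown `X = (u, s)`. -/
noncomputable def coG (X : ℂ × ℂ) : ℂ := d.Λ * (1 + X.1 - d.ε * X.2)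

/-- The denominator of `stepG` at `p = (ζ, X)`, where `X` is the unknown at the dilated point. -/
noncomputable def dG (p : (ℂ × ℂ) × (ℂ × ℂ)) : ℂ := d.denG p.1.1 p.1.2 (coF p.2) (d.coG p.2)

/-- The value of `G` at `ζ` determined by `p = (ζ, X)`, where `X` is the unknown at the dilated
point. -/
noncomputable def stepG (p : (ℂ × ℂ) × (ℂ × ℂ)) : ℂ := d.numG p.1.1 p.1.2 (coF p.2) (d.coG p.2) / d.dG p

/-- The denominator of `stepF` at `p = (ζ, X)`. -/
noncomputable def dF (p : (ℂ × ℂ) × (ℂ × ℂ)) : ℂ := d.denF p.1.1 p.1.2 (d.stepG p) (coF p.2)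

/-- The value of `F` at `ζ` determined by `p = (ζ, X)`, obtained from `stepG`. -/
noncomputable def stepF (p : (ℂ × ℂ) × (ℂ × ℂ)) : ℂ := d.numF p.1.1 p.1.2 (d.stepG p) (coF p.2) / d.dF p

/-- The map for which the system reads `Y ζ = Ψ (ζ, Y (q₁ ζ₁, q₂ ζ₂))`, in the coordinates
`X = (u, s)`. -/
noncomputable def Psi (p : (ℂ × ℂ) × (ℂ × ℂ)) : ℂ × ℂ :=
  (d.stepF p - 1, (d.stepF p - d.stepG p / d.Λ) / d.ε)

/-- The conditions on the data making `Ψ` regular at the origin with `Ψ 0 = 0`; the relation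
`q₁ b₅ b₆ b₇ b₈ = Λ²` is the system at `ζ = 0`. -/
structure Good : Prop where
  hb5 : d.b5 ≠ 0
  hb6 : d.b6 ≠ 0
  hb7 : d.b7 ≠ 0
  hb8 : d.b8 ≠ 0
  hΛ : d.Λ ≠ 0
  hε : d.ε ≠ 0
  hq1 : d.q1 * (d.b5 * d.b6 * d.b7 * d.b8) = d.Λ ^ 2

variable {d}

theorem Good.q1_ne (h : d.Good) : d.q1 ≠ 0 := by
  intro h0
  have := h.hq1
  rw [h0, zero_mul] at this
  exact pow_ne_zero 2 h.hΛ this.symm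

theorem Good.dG_zero (h : d.Good) (X : ℂ × ℂ) :
    d.dG (0, X) = coF X ^ 2 * d.coG X / (d.b5 * d.b6 * d.b7 * d.b8) := by
  have := h.hb5
  have := h.hb6
  have := h.hb7
  have := h.hb8
  simp only [dG, denG, cP, Prod.fst_zero, Prod.snd_zero]
  field_simp
  ring

theorem Good.stepG_zero (h : d.Good) (X : ℂ × ℂ) (hF : coF X ≠ 0) (hG : d.coG X ≠ 0) :
    d.stepG (0, X) = d.Λ ^ 2 * coF X ^ 2 / d.coG X := by
  have := h.hb5
  have := h.hb6
  have := h.hb7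
  have := h.hb8
  rw [stepG, h.dG_zero, ← h.hq1]
  simp only [numG, cQ, Prod.fst_zero, Prod.snd_zero]
  field_simp
  ring

theorem Good.dF_zero (h : d.Good) (X : ℂ × ℂ) :
    d.dF (0, X) = d.Λ ^ 2 * d.stepG (0, X) ^ 2 * coF X := by
  rw [dF, ← h.hq1]
  simp only [denF, cA, Prod.fst_zero, Prod.snd_zero]
  ring

/-- On `ζ = 0` the step is monomial: with `Ĝ = G / Λ` it sends `(F, Ĝ)` to `(F³ / Ĝ², F² / Ĝ)`. -/
theorem Good.stepF_zero (h : d.Good) (X : ℂ × ℂ) (hF : coF X ≠ 0) (hG : d.coG X ≠ 0) :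
    d.stepF (0, X) = d.Λ ^ 2 * coF X ^ 3 / d.coG X ^ 2 := by
  have hΛ := h.hΛ
  have h1 : d.stepG (0, X) ≠ 0 := by
    rw [h.stepG_zero X hF hG]; positivity
  have e : d.stepF (0, X) = d.stepG (0, X) ^ 2 / (d.Λ ^ 2 * coF X) := by
    rw [stepF, h.dF_zero]
    simp only [numF, cB, Prod.fst_zero, Prod.snd_zero]
    field_simp
    ring
  rw [e, h.stepG_zero X hF hG]
  field_simp

theorem coF_zero : coF 0 = 1 := by simp [coF]

theorem coG_zero : d.coG 0 = d.Λ := by simp [coG]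

theorem Good.dG_origin (h : d.Good) : d.dG 0 ≠ 0 := by
  have := h.hb5
  have := h.hb6
  have := h.hb7
  have := h.hb8
  have := h.hΛ
  have e := h.dG_zero 0
  rw [coF_zero, coG_zero] at e
  change d.dG 0 = _ at e
  rw [e]
  simp [*]

theorem Good.stepG_origin (h : d.Good) : d.stepG 0 = d.Λ := by
  have hΛ := h.hΛ
  have e := h.stepG_zero 0 (by simp [coF_zero]) (by simpa [coG_zero] using hΛ)
  rw [coF_zero, coG_zero] at e
  change d.stepG 0 = _ at e
  rw [e]
  field_simp

theorem Good.dF_origin (h : d.Good) : d.dF 0 ≠ 0 := by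
  have hΛ := h.hΛ
  have e := h.dF_zero 0
  change d.dF 0 = d.Λ ^ 2 * d.stepG 0 ^ 2 * coF 0 at e
  rw [coF_zero, h.stepG_origin] at e
  rw [e]
  simp [*]

theorem Good.stepF_origin (h : d.Good) : d.stepF 0 = 1 := by
  have hΛ := h.hΛ
  have e := h.stepF_zero 0 (by simp [coF_zero]) (by simpa [coG_zero] using hΛ)
  rw [coF_zero, coG_zero] at e
  change d.stepF 0 = _ at e
  rw [e]
  field_simp

theorem Good.Psi_origin (h : d.Good) : d.Psi 0 = 0 := by
  have hΛ := h.hΛ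
  simp [Psi, h.stepF_origin, h.stepG_origin, hΛ]

open scoped ContDiff

theorem contDiff_dG (d : QPData) : ContDiff ℂ ω d.dG := by
  unfold dG denG cP cQ coF coG
  fun_prop

theorem Good.contDiffAt_stepG (h : d.Good) : ContDiffAt ℂ ω d.stepG 0 := by
  have h1 : ContDiff ℂ ω
      (fun p : (ℂ × ℂ) × (ℂ × ℂ) => d.numG p.1.1 p.1.2 (coF p.2) (d.coG p.2)) := by
    unfold numG cP cQ coF coG
    fun_prop
  exact h1.contDiffAt.div (contDiff_dG d).contDiffAt h.dG_origin

theorem Good.contDiffAt_dF (h : d.Good) : ContDiffAt ℂ ω d.dF 0 := by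
  have h1 := h.contDiffAt_stepG
  unfold dF denF cA cB coF
  fun_prop

theorem Good.contDiffAt_stepF (h : d.Good) : ContDiffAt ℂ ω d.stepF 0 := by
  have h1 := h.contDiffAt_stepG
  refine ContDiffAt.div ?_ h.contDiffAt_dF h.dF_origin
  unfold numF cA cB coF
  fun_prop

theorem Good.analyticAt_Psi (h : d.Good) : AnalyticAt ℂ d.Psi 0 := by
  have h1 := h.contDiffAt_stepG
  have h2 := h.contDiffAt_stepF
  have h3 : ContDiffAt ℂ ω d.Psi 0 := by
    unfold Psi
    simp only [div_eq_mul_inv]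
    fun_prop
  exact h3.analyticAt

open Topology in
theorem Good.nondegenerate_mem_nhds (h : d.Good) :
    {p | d.dG p ≠ 0 ∧ d.dF p ≠ 0} ∈ 𝓝 (0 : (ℂ × ℂ) × (ℂ × ℂ)) :=
  ((contDiff_dG d).continuous.continuousAt.eventually_ne h.dG_origin).and
    (h.contDiffAt_dF.continuousAt.eventually_ne h.dF_origin)

/-- The derivative of `Ψ (0, ·)` at the origin: a Jordan block with off-diagonal entry `2 ε`. -/
noncomputable def lin (ε : ℂ) : (ℂ × ℂ) →L[ℂ] (ℂ × ℂ) :=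
  (ContinuousLinearMap.fst ℂ ℂ ℂ + (2 * ε) • ContinuousLinearMap.snd ℂ ℂ ℂ).prod
    (ContinuousLinearMap.snd ℂ ℂ ℂ)

theorem norm_lin_le (ε X) : ‖lin ε X‖ ≤ (1 + 2 * ‖ε‖) * ‖X‖ := by
  have h1 : ‖X.1‖ ≤ ‖X‖ := norm_fst_le X
  have h2 : ‖X.2‖ ≤ ‖X‖ := norm_snd_le X
  have h3 : ‖2 * ε‖ = 2 * ‖ε‖ := by simp
  have h4 := norm_nonneg ε
  have e : lin ε X = (X.1 + 2 * ε * X.2, X.2) := by simp [lin]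
  rw [e]
  refine max_le ?_ ?_
  · calc ‖X.1 + 2 * ε * X.2‖ ≤ ‖X.1‖ + ‖2 * ε‖ * ‖X.2‖ := by
          rw [← norm_mul]; exact norm_add_le _ _
      _ ≤ ‖X‖ + (2 * ‖ε‖) * ‖X‖ := by rw [h3]; gcongr
      _ = _ := by ring
  · change ‖X.2‖ ≤ _
    nlinarith [norm_nonneg X, mul_nonneg h4 (norm_nonneg X)]

open Topology in
theorem Good.hasFDerivAt_Psi (h : d.Good) :
    HasFDerivAt (fun X => d.Psi (0, X)) (lin d.ε) 0 := by
  have hΛ := h.hΛ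
  have hε := h.hε
  have cF : Continuous coF := by unfold coF; fun_prop
  have cG : Continuous d.coG := by unfold coG; fun_prop
  have ev : (fun X : ℂ × ℂ => ((1 + X.1) ^ 3 * ((1 + X.1 - d.ε * X.2)⁻¹) ^ 2 - 1,
      ((1 + X.1) ^ 3 * ((1 + X.1 - d.ε * X.2)⁻¹) ^ 2 -
        (1 + X.1) ^ 2 * (1 + X.1 - d.ε * X.2)⁻¹) * d.ε⁻¹)) =ᶠ[𝓝 0] (fun X => d.Psi (0, X)) := by
    filter_upwards [cF.continuousAt.eventually_ne (y := 0) (by simp [coF_zero]),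
      cG.continuousAt.eventually_ne (y := 0) (by simpa [coG_zero] using hΛ)] with X h1 h2
    have h3 : 1 + X.1 - d.ε * X.2 ≠ 0 := by
      intro h0; apply h2; rw [coG, h0, mul_zero]
    rw [Psi, h.stepF_zero X h1 h2, h.stepG_zero X h1 h2]
    simp only [coG, coF]
    generalize 1 + X.1 - d.ε * X.2 = g at h3
    ext
    · simp only; field_simp
    · simp only; field_simp
  refine HasFDerivAt.congr_of_eventuallyEq ?_ ev.symm
  have a : HasFDerivAt (fun X : ℂ × ℂ => 1 + X.1) (ContinuousLinearMap.fst ℂ ℂ ℂ) 0 :=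
    hasFDerivAt_fst.const_add 1
  have g : HasFDerivAt (fun X : ℂ × ℂ => 1 + X.1 - d.ε * X.2)
      (ContinuousLinearMap.fst ℂ ℂ ℂ - d.ε • ContinuousLinearMap.snd ℂ ℂ ℂ) 0 :=
    a.sub (hasFDerivAt_snd.const_mul d.ε)
  have gi : HasFDerivAt (fun X : ℂ × ℂ => (1 + X.1 - d.ε * X.2)⁻¹)
      ((-1 : ℂ) • (ContinuousLinearMap.fst ℂ ℂ ℂ - d.ε • ContinuousLinearMap.snd ℂ ℂ ℂ)) 0 := by
    have hi : HasDerivAt (fun y : ℂ => y⁻¹) (-1) (1 + (0 : ℂ × ℂ).1 - d.ε * (0 : ℂ × ℂ).2) := by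
      simpa using hasDerivAt_inv (𝕜 := ℂ) (x := 1) one_ne_zero
    exact hi.comp_hasFDerivAt 0 g
  have main := ((a.pow 3).mul (gi.pow 2)).sub_const 1 |>.prodMk
    ((((a.pow 3).mul (gi.pow 2)).sub ((a.pow 2).mul gi)).mul_const d.ε⁻¹)
  refine main.congr_fderiv ?_
  ext <;> simp [lin] <;> field_simp <;> first | ring1 | (ring_nf; simp)

end QPData

/-! ### Solutions of the system as fixed points -/

/-- The dilation `ζ ↦ (q₁ ζ₁, q₂ ζ₂)` of `ℂ²`. -/
noncomputable def dil (q1 q2 : ℂ) : (ℂ × ℂ) →L[ℂ] (ℂ × ℂ) :=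
  (q1 • ContinuousLinearMap.fst ℂ ℂ ℂ).prod (q2 • ContinuousLinearMap.snd ℂ ℂ ℂ)

theorem dil_apply (q1 q2 : ℂ) (ζ : ℂ × ℂ) : dil q1 q2 ζ = (q1 * ζ.1, q2 * ζ.2) := by
  simp [dil]

theorem norm_dil_le (q1 q2 : ℂ) (ζ : ℂ × ℂ) : ‖dil q1 q2 ζ‖ ≤ max ‖q1‖ ‖q2‖ * ‖ζ‖ := by
  rw [dil_apply]
  refine max_le ?_ ?_
  · rw [norm_mul]
    exact mul_le_mul (le_max_left _ _) (norm_fst_le ζ) (norm_nonneg _) (by positivity)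
  · rw [norm_mul]
    exact mul_le_mul (le_max_right _ _) (norm_snd_le ζ) (norm_nonneg _) (by positivity)

namespace QPData

variable {d : QPData}

theorem Good.qpSys_of_fixed (h : d.Good) {q : ℂ} (hq : q = d.q1 * d.q2) {z w : ℂ} {X X' : ℂ × ℂ}
    (hn : d.dG ((z, w), X') ≠ 0 ∧ d.dF ((z, w), X') ≠ 0) (hX : X = d.Psi ((z, w), X')) :
    qpSys d.b1 d.b2 d.b3 d.b4 d.b5 d.b6 d.b7 d.b8 q (z * w) (z * coF X) (z * d.coG X)
      (d.q1 * z * coF X') (d.q1 * z * d.coG X') := by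
  have hΛ := h.hΛ
  have hε := h.hε
  have eF : coF X = d.stepF ((z, w), X') := by rw [hX]; simp [coF, Psi]
  have eG : d.coG X = d.stepG ((z, w), X') := by
    rw [hX]; simp only [coG, Psi]; field_simp; ring
  refine d.qpSys_of_reduced hq ?_ ?_
  · rw [eF, eG]; exact div_mul_cancel₀ _ hn.2
  · rw [eG]; exact div_mul_cancel₀ _ hn.1

theorem Good.fixed_of_qpSys (h : d.Good) {q : ℂ} (hq : q = d.q1 * d.q2) {z w : ℂ} (hz : z ≠ 0)
    {X X' : ℂ × ℂ}
    (hn : d.dG ((z, w), X') ≠ 0 ∧ d.dF ((z, w), X') ≠ 0)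
    (hs : qpSys d.b1 d.b2 d.b3 d.b4 d.b5 d.b6 d.b7 d.b8 q (z * w) (z * coF X) (z * d.coG X)
      (d.q1 * z * coF X') (d.q1 * z * d.coG X')) : X = d.Psi ((z, w), X') := by
  have hΛ := h.hΛ
  have hε := h.hε
  obtain ⟨hF, hG⟩ := d.reduced_of_qpSys hq hz h.q1_ne hs
  have eG : d.coG X = d.stepG ((z, w), X') := (eq_div_iff hn.1).2 hG
  rw [eG] at hF
  have eF : coF X = d.stepF ((z, w), X') := (eq_div_iff hn.2).2 hF
  rw [Psi, ← eF, ← eG]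
  ext
  · simp [coF]
  · simp only [coF, coG]; field_simp; ring

open Topology in
/-- Every analytic solution of the system is, near the origin, a fixed point of
`Y ↦ Ψ (·, Y ∘ dil)`. The power of `ζ₁` common to both sides can only be cancelled off the line
`ζ₁ = 0`; the equation extends to that line by continuity. -/
theorem Good.eventually_fixed (h : d.Good) {q : ℂ} (hq : q = d.q1 * d.q2) {r : ℝ} (hr : 0 < r)
    {y1 y2 : ℂ × ℂ → ℂ}
    (hs : qpPolydiscSol d.b1 d.b2 d.b3 d.b4 d.b5 d.b6 d.b7 d.b8 q d.Λ d.q1 d.q2 r y1 y2)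
    (Y : ℂ × ℂ → ℂ × ℂ) (hY : Y = fun ζ => (y1 ζ, (y1 ζ - y2 ζ / d.Λ) / d.ε)) :
    Y 0 = 0 ∧ AnalyticAt ℂ Y 0 ∧ ∀ᶠ ζ in 𝓝 0, Y ζ = d.Psi (ζ, Y (dil d.q1 d.q2 ζ)) := by
  have hΛ := h.hΛ
  have hε := h.hε
  obtain ⟨han, h10, h20, hsol⟩ := hs
  have hY0 : Y 0 = 0 := by
    have e1 : y1 0 = 0 := h10
    have e2 : y2 0 = 0 := h20
    simp [hY, e1, e2]
  have ha : AnalyticAt ℂ Y 0 := by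
    obtain ⟨a1, a2⟩ := han 0 (by simpa using hr) (by simpa using hr)
    rw [hY]
    exact a1.prod ((a1.sub (a2.div analyticAt_const hΛ)).div analyticAt_const hε)
  have hcF : ∀ ζ, coF (Y ζ) = 1 + y1 ζ := fun ζ => by simp [coF, hY]
  have hcG : ∀ ζ, d.coG (Y ζ) = d.Λ + y2 ζ := fun ζ => by
    simp only [coG, hY]; field_simp; ring
  have hσ0 : dil d.q1 d.q2 0 = 0 := map_zero _
  have haσ : AnalyticAt ℂ (fun ζ => (ζ, Y (dil d.q1 d.q2 ζ))) 0 :=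
    analyticAt_id.prod (AnalyticAt.fun_comp (by rwa [hσ0]) ((dil d.q1 d.q2).analyticAt 0))
  have hv0 : (fun ζ => (ζ, Y (dil d.q1 d.q2 ζ))) 0 = 0 := by
    simp [hσ0, hY0]
  have haP : AnalyticAt ℂ (fun ζ => d.Psi (ζ, Y (dil d.q1 d.q2 ζ))) 0 :=
    AnalyticAt.fun_comp (g := d.Psi) (f := fun ζ => (ζ, Y (dil d.q1 d.q2 ζ)))
      (by
        have e : ((0 : ℂ × ℂ), Y (dil d.q1 d.q2 0)) = 0 := hv0
        rw [e]; exact h.analyticAt_Psi) haσ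
  have hev : ∀ᶠ ζ in 𝓝 (0 : ℂ × ℂ), ζ.1 ≠ 0 → Y ζ = d.Psi (ζ, Y (dil d.q1 d.q2 ζ)) := by
    have hN := haσ.continuousAt.eventually (hv0 ▸ h.nondegenerate_mem_nhds)
    filter_upwards [hN, Metric.ball_mem_nhds (0 : ℂ × ℂ) hr] with ζ h1 h2 h3
    rw [mem_ball_zero_iff] at h2
    refine h.fixed_of_qpSys hq h3 h1 ?_
    have := hsol ζ ((norm_fst_le ζ).trans_lt h2) ((norm_snd_le ζ).trans_lt h2)
    rw [← dil_apply] at this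
    rwa [hcF, hcG, hcF, hcG]
  refine ⟨hY0, ha, ?_⟩
  filter_upwards [hev.eventually_nhds, ha.eventually_analyticAt, haP.eventually_analyticAt]
    with ζ h1 h2 h3
  exact eq_of_eventually_off_line _ _ ζ h2.continuousAt h3.continuousAt h1

end QPData

theorem stmt4 (b1 b2 b3 b4 b5 b6 b7 b8 q Λ lam q1 q2 : ℂ)
    (hb1 : b1 ≠ 0) (hb2 : b2 ≠ 0) (hb3 : b3 ≠ 0) (hb4 : b4 ≠ 0)
    (hb5 : b5 ≠ 0) (hb6 : b6 ≠ 0) (hb7 : b7 ≠ 0) (hb8 : b8 ≠ 0)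
    (hq : q = b1 * b2 * b3 * b4 / (b5 * b6 * b7 * b8)) (hqlt : ‖q‖ < 1)
    (hΛ : Λ ≠ 0)
    (hΛlow : ‖b1 * b2 * b3 * b4‖ < ‖Λ‖ ^ 2) (hΛhigh : ‖Λ‖ ^ 2 < ‖b5 * b6 * b7 * b8‖)
    (hlam : lam = Λ ^ 2 / (b1 * b2 * b3 * b4)) (hq1 : q1 = q * lam) (hq2 : q2 = lam⁻¹) :
    (∃ r > (0 : ℝ), ∃ y1 y2 : ℂ × ℂ → ℂ,
        qpPolydiscSol b1 b2 b3 b4 b5 b6 b7 b8 q Λ q1 q2 r y1 y2) ∧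
      (∀ (r r' : ℝ) (y1 y2 y1' y2' : ℂ × ℂ → ℂ), 0 < r → 0 < r' →
        qpPolydiscSol b1 b2 b3 b4 b5 b6 b7 b8 q Λ q1 q2 r y1 y2 →
        qpPolydiscSol b1 b2 b3 b4 b5 b6 b7 b8 q Λ q1 q2 r' y1' y2' →
        y1 =ᶠ[nhds ((0 : ℂ), (0 : ℂ))] y1' ∧ y2 =ᶠ[nhds ((0 : ℂ), (0 : ℂ))] y2') := by
  
  have hB : b1 * b2 * b3 * b4 ≠ 0 := by simp [*]
  have hC : b5 * b6 * b7 * b8 ≠ 0 := by simp [*]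
  have hq12 : q = q1 * q2 := by
    rw [hq1, hq2, hlam]; field_simp
  have hq1' : q1 = Λ ^ 2 / (b5 * b6 * b7 * b8) := by
    rw [hq1, hlam, hq]; field_simp
  have n1 : ‖q1‖ < 1 := by
    rw [hq1', norm_div, norm_pow, div_lt_one (norm_pos_iff.2 hC)]; exact hΛhigh
  have n2 : ‖q2‖ < 1 := by
    rw [hq2, hlam, inv_div, norm_div, norm_pow, div_lt_one (by positivity)]; exact hΛlow
  set ρ := max ‖q1‖ ‖q2‖ with hρdef
  have hρ0 : 0 ≤ ρ := (norm_nonneg q1).trans (le_max_left _ _)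
  have hρ1 : ρ < 1 := max_lt n1 n2
  -- The derivative of `Ψ` in `X` has norm at most `1 + 2 e`, so the Lipschitz constant `1 + 3 e` is
  -- available near the origin, and `e` is chosen to have `(1 + 3 e) ρ < 1`.
  let e : ℝ := (1 - ρ) / 4
  have he : 0 < e := by simp only [e]; linarith
  have hLρ : (1 + 3 * e) * ρ < 1 := by simp only [e]; nlinarith
  let d : QPData := ⟨b1, b2, b3, b4, b5, b6, b7, b8, q1, q2, Λ, e⟩
  have hd : d.Good := by
    refine ⟨hb5, hb6, hb7, hb8, hΛ, ?_, ?_⟩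
    · simpa [d] using he.ne'
    · change q1 * (b5 * b6 * b7 * b8) = Λ ^ 2
      rw [hq1']; field_simp
  have hne : ‖d.ε‖ = e := by
    simp only [d, Complex.norm_real, Real.norm_eq_abs, abs_of_pos he]
  obtain ⟨K, hK, δ, hδ, hV, hlip, hbd⟩ := local_estimates d.Psi (QPData.lin d.ε) (1 + 2 * e)
    (1 + 3 * e) hd.analyticAt_Psi hd.Psi_origin hd.hasFDerivAt_Psi
    (fun X => hne ▸ QPData.norm_lin_le d.ε X) (by linarith) _ hd.nondegenerate_mem_nhds
  have hL : 0 ≤ 1 + 3 * e := by positivity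
  refine ⟨?_, ?_⟩
  · obtain ⟨r, hr, hrδ, Y, hY0, hY⟩ := exists_fixed d.Psi (dil q1 q2) K δ (1 + 3 * e) ρ hK hδ hL
      hρ0 hρ1 hLρ (norm_dil_le q1 q2) (fun ζ X h1 h2 => (hV ζ X h1 h2).2) hlip hbd
    have hball : ∀ ζ : ℂ × ℂ, ‖ζ.1‖ < r → ‖ζ.2‖ < r → ‖ζ‖ < r := fun ζ h1 h2 => max_lt h1 h2
    refine ⟨r, hr, fun ζ => (Y ζ).1, fun ζ => Λ * ((Y ζ).1 - e * (Y ζ).2), ?_, ?_, ?_, ?_⟩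
    · intro ζ h1 h2
      have ha := (hY ζ (hball ζ h1 h2)).1
      have a1 : AnalyticAt ℂ (fun ζ => (Y ζ).1) ζ := analyticAt_fst.fun_comp ha
      have a2 : AnalyticAt ℂ (fun ζ => (Y ζ).2) ζ := analyticAt_snd.fun_comp ha
      exact ⟨a1, analyticAt_const.mul (a1.sub (analyticAt_const.mul a2))⟩
    · change (Y 0).1 = 0
      simp [hY0]
    · change Λ * ((Y 0).1 - e * (Y 0).2) = 0
      simp [hY0]
    · intro ζ h1 h2
      have hζ := hball ζ h1 h2
      have hσ : ‖dil q1 q2 ζ‖ < r := ((norm_dil_le q1 q2 ζ).trans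
        (mul_le_of_le_one_left (norm_nonneg _) hρ1.le)).trans_lt hζ
      have := hd.qpSys_of_fixed (q := q) hq12
        (hV ζ _ (hζ.trans_le hrδ) (hY _ hσ).2.1).1 (hY ζ hζ).2.2
      rw [dil_apply] at this
      have hcG : ∀ X : ℂ × ℂ, d.coG X = Λ + Λ * (X.1 - e * X.2) := fun X => by
        simp only [QPData.coG, d]; ring
      rw [hcG, hcG] at this
      exact this
  · intro r r' y1 y2 y1' y2' hr hr' hs hs'
    obtain ⟨Y0, Ya, Yf⟩ := hd.eventually_fixed hq12 hr hs _ rfl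
    obtain ⟨Y0', Ya', Yf'⟩ := hd.eventually_fixed hq12 hr' hs' _ rfl
    have hu := unique_fixed d.Psi (dil q1 q2) δ (1 + 3 * e) ρ hδ hL hρ0 hρ1 hLρ
      (norm_dil_le q1 q2) hlip _ _ Y0 Y0' Ya.differentiableAt Ya'.differentiableAt Yf Yf'
    have hε : d.ε ≠ 0 := hd.hε
    constructor
    · filter_upwards [hu] with ζ hζ
      exact congrArg Prod.fst hζ
    · filter_upwards [hu] with ζ hζ
      have e1 : y1 ζ = y1' ζ := congrArg Prod.fst hζ
      have e2 : (y1 ζ - y2 ζ / Λ) / d.ε = (y1' ζ - y2' ζ / Λ) / d.ε := congrArg Prod.snd hζ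
      rw [div_left_inj' hε, e1, sub_right_inj, div_left_inj' hΛ] at e2
      exact e2
end

section
/- Let b1,…,b8 be nonzero complex numbers with q = b1b2b3b4/(b5b6b7b8) satisfying |q| < 1, and let L₀ = {x ∈ ℂ∖{0} : |b1b2b3b4| < |x|² < |b5b6b7b8|}. Then for every open set L with compact closure contained in L₀ there exist an open neighborhood Z of (0,0) in ℂ² and an analytic map (ζ₁, ζ₂, Λ) ↦ (y₁(ζ₁, ζ₂, Λ), y₂(ζ₁, ζ₂, Λ)) on Z × L with y₁(0,0,Λ) = y₂(0,0,Λ) = 0 for all Λ ∈ L, such that for every Λ ∈ L, setting λ = Λ²/(b1b2b3b4), q₁ = q·λ, q₂ = 1/λ, f(ζ) = ζ₁(1 + y₁(ζ, Λ)), g(ζ) = ζ₁(Λ + y₂(ζ, Λ)) and t(ζ) = ζ₁ζ₂, the relations (E1) and (E2) hold with (t, f, g, f̄, ḡ) = (t(ζ), f(ζ), g(ζ), f(q₁ζ₁, q₂ζ₂), g(q₁ζ₁, q₂ζ₂)) for every ζ ∈ Z with (q₁ζ₁, q₂ζ₂) ∈ Z. -/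
section Auxiliary

open Filter Topology MeasureTheory BoundedContinuousFunction

/-! ### Osgood's lemma -/

section Osgood

variable {E : Type*} [NormedAddCommGroup E] [NormedSpace ℂ E] [CompleteSpace E]

lemma bcf_inverse {α : Type*} [TopologicalSpace α] (W : α →ᵇ ℂ) {δ : ℝ} (hδ : 0 < δ)
    (hW : ∀ x, δ ≤ ‖W x‖) : IsUnit W ∧ ∀ x, Ring.inverse W x = (W x)⁻¹ := by
  have hne : ∀ x, W x ≠ 0 := fun x => norm_pos_iff.1 (hδ.trans_le (hW x))
  have hu : IsUnit W := by
    refine IsUnit.of_mul_eq_one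
      (BoundedContinuousFunction.ofNormedAddCommGroup (fun x => (W x)⁻¹)
        (W.continuous.inv₀ hne) δ⁻¹ fun x => ?_) ?_
    · rw [norm_inv]
      exact inv_anti₀ hδ (hW x)
    · ext x
      simp [hne x]
  refine ⟨hu, fun x => ?_⟩
  have h := congrArg (fun g : α →ᵇ ℂ => g x) (Ring.inverse_mul_cancel W hu)
  simp only [BoundedContinuousFunction.mul_apply, BoundedContinuousFunction.coe_one, Pi.one_apply] at h
  exact eq_inv_of_mul_eq_one_left h

/-- For a bounded continuous `W` with values on the circle of centre `c` and radius `ρ`, the Cauchy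
kernel `(W - z)⁻¹`, as an element of the Banach algebra `α →ᵇ ℂ`, depends analytically on `z`. -/
lemma cauchy_kernel {α : Type*} [TopologicalSpace α] (W : α →ᵇ ℂ) {c : ℂ} {ρ : ℝ} (hρ : 0 < ρ)
    (hW : ∀ x, ‖W x - c‖ = ρ) :
    AnalyticAt ℂ (fun z : ℂ => Ring.inverse (W - algebraMap ℂ (α →ᵇ ℂ) z)) c ∧
    ∀ z : ℂ, ‖z - c‖ < ρ → ∀ x, Ring.inverse (W - algebraMap ℂ (α →ᵇ ℂ) z) x = (W x - z)⁻¹ := by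
  have key : ∀ z : ℂ, ‖z - c‖ < ρ → ∀ x, ρ - ‖z - c‖ ≤ ‖(W - algebraMap ℂ (α →ᵇ ℂ) z) x‖ := by
    intro z hz x
    have h1 : (W - algebraMap ℂ (α →ᵇ ℂ) z) x = (W x - c) - (z - c) := by
      simp [BoundedContinuousFunction.algebraMap_apply]
    rw [h1, ← hW x]
    exact norm_sub_norm_le _ _
  constructor
  · have hu := (bcf_inverse (W - algebraMap ℂ (α →ᵇ ℂ) c) (δ := ρ - ‖c - c‖) (by simpa)
      (key c (by simpa))).1
    obtain ⟨u, hu⟩ := hu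
    have h2 : AnalyticAt ℂ (Ring.inverse : (α →ᵇ ℂ) → (α →ᵇ ℂ)) (W - algebraMap ℂ (α →ᵇ ℂ) c) := by
      rw [← hu]; exact analyticAt_inverse u
    refine AnalyticAt.fun_comp h2 ?_
    simp only [Algebra.algebraMap_eq_smul_one]
    exact analyticAt_const.sub (analyticAt_id.smul analyticAt_const)
  · intro z hz x
    rw [(bcf_inverse _ (sub_pos.2 hz) (key z hz)).2 x]
    simp [BoundedContinuousFunction.algebraMap_apply]

/-- Integration against a fixed integrable function is a continuous linear functional on bounded
continuous functions. -/
lemma exists_pairing {α : Type*} [TopologicalSpace α] [MeasurableSpace α] [OpensMeasurableSpace α]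
    (μ : Measure α) (Φ : α → E) (hΦ : Integrable Φ μ) :
    ∃ J : (α →ᵇ ℂ) →L[ℂ] E, ∀ h, J h = ∫ x, h x • Φ x ∂μ := by
  have hi : ∀ h : α →ᵇ ℂ, Integrable (fun x => h x • Φ x) μ := fun h =>
    hΦ.bdd_smul ‖h‖ h.continuous.aestronglyMeasurable (Eventually.of_forall h.norm_coe_le_norm)
  refine ⟨LinearMap.mkContinuous
    { toFun := fun h => ∫ x, h x • Φ x ∂μ
      map_add' := fun g h => by
        simp only [BoundedContinuousFunction.add_apply, add_smul]
        exact integral_add (hi g) (hi h)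
      map_smul' := fun r h => by
        simp [mul_smul, integral_smul] } (∫ x, ‖Φ x‖ ∂μ) fun h => ?_, fun h => rfl⟩
  refine (norm_integral_le_integral_norm _).trans ?_
  rw [mul_comm, ← integral_const_mul]
  refine integral_mono (hi h).norm (hΦ.norm.const_mul _) fun x => ?_
  simp only [norm_smul]
  gcongr
  exact h.norm_coe_le_norm x

/-- Cauchy's formula in one variable, written with a Bochner integral over `(0, 2π]` so that it
combines with Fubini. -/
lemma cauchy_one {f : ℂ → E} {c z : ℂ} {ρ : ℝ} (hz : ‖z - c‖ < ρ)
    (hf : ∀ w, ‖w - c‖ ≤ ρ → DifferentiableAt ℂ f w) :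
    ∫ θ in Set.Ioc 0 (2 * Real.pi), (circleMap c ρ θ - z)⁻¹ • deriv (circleMap c ρ) θ • f (circleMap c ρ θ)
      = (2 * Real.pi * Complex.I : ℂ) • f z := by
  have h := DifferentiableOn.circleIntegral_sub_inv_smul (R := ρ) (c := c) (w := z) (f := f)
    (fun w hw => (hf w (by simpa [dist_eq_norm] using hw)).differentiableWithinAt)
    (by simpa [dist_eq_norm] using hz)
  rw [← h, circleIntegral, intervalIntegral.integral_of_le (by positivity)]
  congr 1
  ext θ
  exact smul_comm _ _ _

/-- **Osgood's lemma** in three variables: a continuous, separately holomorphic function is analytic.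
The Cauchy formula on a torus presents `f` near `p` as a continuous linear functional applied to a
product of three Cauchy kernels, each analytic with values in a Banach algebra. -/
theorem osgood_s5 {U : Set ((ℂ × ℂ) × ℂ)} (hU : IsOpen U) {f : (ℂ × ℂ) × ℂ → E} (hf : ContinuousOn f U)
    (h1 : ∀ p ∈ U, DifferentiableAt ℂ (fun z => f ((z, p.1.2), p.2)) p.1.1)
    (h2 : ∀ p ∈ U, DifferentiableAt ℂ (fun z => f ((p.1.1, z), p.2)) p.1.2)
    (h3 : ∀ p ∈ U, DifferentiableAt ℂ (fun z => f (p.1, z)) p.2) {p : (ℂ × ℂ) × ℂ} (hp : p ∈ U) :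
    AnalyticAt ℂ f p := by
  obtain ⟨⟨a, b⟩, d⟩ := p
  obtain ⟨ρ, hρ, hball⟩ := Metric.nhds_basis_closedBall.mem_iff.1 (hU.mem_nhds hp)
  have hmem : ∀ x y z : ℂ, ‖x - a‖ ≤ ρ → ‖y - b‖ ≤ ρ → ‖z - d‖ ≤ ρ → ((x, y), z) ∈ U := by
    intro x y z hx hy hz
    apply hball
    rw [Metric.mem_closedBall, Prod.dist_eq, Prod.dist_eq, dist_eq_norm, dist_eq_norm, dist_eq_norm]
    exact max_le (max_le hx hy) hz
  have hcm : ∀ (c : ℂ) (θ : ℝ), ‖circleMap c ρ θ - c‖ = ρ := by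
    intro c θ
    simp [circleMap, abs_of_pos hρ]
  have hbd : ∀ (c : ℂ) (θ : ℝ), ‖circleMap c ρ θ‖ ≤ ‖c‖ + ρ := by
    intro c θ
    have := norm_le_norm_add_norm_sub' (circleMap c ρ θ) c
    rwa [hcm] at this
  let W1 : (ℝ × ℝ × ℝ) →ᵇ ℂ := BoundedContinuousFunction.ofNormedAddCommGroup
    (fun θ => circleMap a ρ θ.1) (by fun_prop) (‖a‖ + ρ) (fun θ => hbd a θ.1)
  let W2 : (ℝ × ℝ × ℝ) →ᵇ ℂ := BoundedContinuousFunction.ofNormedAddCommGroup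
    (fun θ => circleMap b ρ θ.2.1) (by fun_prop) (‖b‖ + ρ) (fun θ => hbd b θ.2.1)
  let W3 : (ℝ × ℝ × ℝ) →ᵇ ℂ := BoundedContinuousFunction.ofNormedAddCommGroup
    (fun θ => circleMap d ρ θ.2.2) (by fun_prop) (‖d‖ + ρ) (fun θ => hbd d θ.2.2)
  obtain ⟨k1, k1'⟩ := cauchy_kernel W1 hρ (c := a) (fun θ => hcm a θ.1)
  obtain ⟨k2, k2'⟩ := cauchy_kernel W2 hρ (c := b) (fun θ => hcm b θ.2.1)
  obtain ⟨k3, k3'⟩ := cauchy_kernel W3 hρ (c := d) (fun θ => hcm d θ.2.2)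
  let Φ : ℝ × ℝ × ℝ → E := fun θ => deriv (circleMap a ρ) θ.1 • deriv (circleMap b ρ) θ.2.1 •
    deriv (circleMap d ρ) θ.2.2 •
      f ((circleMap a ρ θ.1, circleMap b ρ θ.2.1), circleMap d ρ θ.2.2)
  have hΦc : Continuous Φ := by
    have hfc : Continuous (fun θ : ℝ × ℝ × ℝ =>
        f ((circleMap a ρ θ.1, circleMap b ρ θ.2.1), circleMap d ρ θ.2.2)) := by
      refine hf.comp_continuous (by fun_prop) fun θ => hmem _ _ _ (hcm _ _).le (hcm _ _).le (hcm _ _).le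
    simp only [Φ, deriv_circleMap]
    refine Continuous.smul (by fun_prop) (Continuous.smul (by fun_prop)
      (Continuous.smul (by fun_prop) hfc))
  let I : Set ℝ := Set.Ioc 0 (2 * Real.pi)
  have hint : ∀ g : ℝ × ℝ × ℝ → E, Continuous g → IntegrableOn g (I ×ˢ I ×ˢ I) := fun g hg =>
    (hg.continuousOn.integrableOn_compact
      (isCompact_Icc.prod (isCompact_Icc.prod isCompact_Icc))).mono_set
      (Set.prod_mono Set.Ioc_subset_Icc_self
        (Set.prod_mono Set.Ioc_subset_Icc_self Set.Ioc_subset_Icc_self))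
  have hint2 : ∀ g : ℝ × ℝ → E, Continuous g → IntegrableOn g (I ×ˢ I) := fun g hg =>
    (hg.continuousOn.integrableOn_compact
      (isCompact_Icc.prod isCompact_Icc)).mono_set
      (Set.prod_mono Set.Ioc_subset_Icc_self Set.Ioc_subset_Icc_self)
  obtain ⟨J, hJ⟩ := exists_pairing (volume.restrict (I ×ˢ I ×ˢ I)) Φ (hint Φ hΦc)
  let R1 := fun z : ℂ => Ring.inverse (W1 - algebraMap ℂ ((ℝ × ℝ × ℝ) →ᵇ ℂ) z)
  let R2 := fun z : ℂ => Ring.inverse (W2 - algebraMap ℂ ((ℝ × ℝ × ℝ) →ᵇ ℂ) z)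
  let R3 := fun z : ℂ => Ring.inverse (W3 - algebraMap ℂ ((ℝ × ℝ × ℝ) →ᵇ ℂ) z)
  have hpi : (2 * Real.pi * Complex.I : ℂ) ≠ 0 := Complex.two_pi_I_ne_zero
  have han : AnalyticAt ℂ (fun p : (ℂ × ℂ) × ℂ => ((2 * Real.pi * Complex.I : ℂ) ^ 3)⁻¹ •
      J (R1 p.1.1 * R2 p.1.2 * R3 p.2)) ((a, b), d) := by
    refine analyticAt_const.smul (AnalyticAt.fun_comp (J.analyticAt _) ?_)
    refine AnalyticAt.mul (AnalyticAt.mul ?_ ?_) ?_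
    · exact AnalyticAt.fun_comp (f := fun p : (ℂ × ℂ) × ℂ => p.1.1) k1
        (analyticAt_fst.fun_comp analyticAt_fst)
    · exact AnalyticAt.fun_comp (f := fun p : (ℂ × ℂ) × ℂ => p.1.2) k2
        (analyticAt_snd.fun_comp analyticAt_fst)
    · exact AnalyticAt.fun_comp (f := fun p : (ℂ × ℂ) × ℂ => p.2) k3 analyticAt_snd
  -- It remains to identify this analytic function with `f`, by Fubini and three Cauchy formulas.
  refine han.congr ?_
  filter_upwards [Metric.ball_mem_nhds ((a, b), d) hρ] with p hpb
  obtain ⟨⟨x, y⟩, z⟩ := p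
  rw [Metric.mem_ball, Prod.dist_eq, Prod.dist_eq, dist_eq_norm, dist_eq_norm, dist_eq_norm,
    max_lt_iff, max_lt_iff] at hpb
  obtain ⟨⟨hx, hy⟩, hz⟩ := hpb
  have e1 : J (R1 x * R2 y * R3 z) = ∫ θ in I ×ˢ I ×ˢ I, (R1 x * R2 y * R3 z) θ • Φ θ := hJ _
  have hc0 := (R1 x * R2 y * R3 z).continuous.smul hΦc
  have e2 : J (R1 x * R2 y * R3 z) = ∫ s in I, ∫ t in I, ∫ u in I,
      (R1 x * R2 y * R3 z) (s, t, u) • Φ (s, t, u) := by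
    rw [e1, Measure.volume_eq_prod, setIntegral_prod _ (by exact hint _ hc0)]
    congr 1
    ext s
    rw [Measure.volume_eq_prod, setIntegral_prod _ (by exact hint2 _ (by fun_prop))]
  have e3 : ∀ s t u, (R1 x * R2 y * R3 z) (s, t, u) • Φ (s, t, u) =
      ((circleMap a ρ s - x)⁻¹ • deriv (circleMap a ρ) s •
      ((circleMap b ρ t - y)⁻¹ • deriv (circleMap b ρ) t •
      ((circleMap d ρ u - z)⁻¹ • deriv (circleMap d ρ) u •
        f ((circleMap a ρ s, circleMap b ρ t), circleMap d ρ u))) : E) := by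
    intro s t u
    have r1 := k1' x hx (s, t, u)
    have r2 := k2' y hy (s, t, u)
    have r3 := k3' z hz (s, t, u)
    simp only [R1, R2, R3, BoundedContinuousFunction.mul_apply, r1, r2, r3, Φ, smul_smul]
    congr 1
    simp only [W1, W2, W3, BoundedContinuousFunction.coe_ofNormedAddCommGroup]
    ring
  have c3 : ∀ s t, ∫ u in I, ((circleMap d ρ u - z)⁻¹ • deriv (circleMap d ρ) u •
        f ((circleMap a ρ s, circleMap b ρ t), circleMap d ρ u)) =
        (2 * Real.pi * Complex.I : ℂ) • f ((circleMap a ρ s, circleMap b ρ t), z) := fun s t =>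
    cauchy_one (f := fun w => f ((circleMap a ρ s, circleMap b ρ t), w)) hz
      fun w hw => h3 _ (hmem _ _ w (hcm _ _).le (hcm _ _).le hw)
  have c2 : ∀ s, ∫ u in I, ((circleMap b ρ u - y)⁻¹ • deriv (circleMap b ρ) u •
        f ((circleMap a ρ s, circleMap b ρ u), z)) =
        (2 * Real.pi * Complex.I : ℂ) • f ((circleMap a ρ s, y), z) := fun s =>
    cauchy_one (f := fun w => f ((circleMap a ρ s, w), z)) hy
      fun w hw => h2 _ (hmem _ w z (hcm _ _).le hw hz.le)
  have c1 : ∫ u in I, ((circleMap a ρ u - x)⁻¹ • deriv (circleMap a ρ) u •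
        f ((circleMap a ρ u, y), z)) =
        (2 * Real.pi * Complex.I : ℂ) • f ((x, y), z) :=
    cauchy_one (f := fun w => f ((w, y), z)) hx
      fun w hw => h1 _ (hmem w y z hw hy.le hz.le)
  have s1 : ∀ (α β γ : ℂ) (e : E), α • β • γ • e = γ • α • β • e := by
    intro α β γ e
    simp only [smul_smul]
    congr 1
    ring
  simp only [e2, e3, integral_smul, c3]
  simp only [s1 _ _ (2 * Real.pi * Complex.I : ℂ), integral_smul, c2]
  rw [c1]
  simp only [smul_smul]
  convert one_smul ℂ (f ((x, y), z)) using 2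
  field_simp

theorem analyticAt_of_uniform_limit {U : Set ((ℂ × ℂ) × ℂ)} (hU : IsOpen U)
    {F : ℕ → (ℂ × ℂ) × ℂ → E} {f : (ℂ × ℂ) × ℂ → E} (hF : ∀ n, ∀ p ∈ U, AnalyticAt ℂ (F n) p)
    (hlim : TendstoUniformlyOn F f atTop U) {p : (ℂ × ℂ) × ℂ} (hp : p ∈ U) : AnalyticAt ℂ f p := by
  have slice : ∀ (ι : ℂ → (ℂ × ℂ) × ℂ), Differentiable ℂ ι → ∀ z, ι z ∈ U →
      DifferentiableAt ℂ (fun w => f (ι w)) z := by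
    intro ι hι z hz
    have hV : IsOpen (ι ⁻¹' U) := hU.preimage hι.continuous
    have h := (hlim.comp ι).tendstoLocallyUniformlyOn.differentiableOn
      (Eventually.of_forall fun n w hw =>
        ((hF n _ hw).differentiableAt.comp w (hι w)).differentiableWithinAt) hV
    exact h.differentiableAt (hV.mem_nhds hz)
  refine osgood_s5 hU ?_ ?_ ?_ ?_ hp
  · exact hlim.continuousOn (Frequently.of_forall fun n x hx =>
      (hF n x hx).continuousAt.continuousWithinAt)
  · exact fun p hp => slice (fun z => ((z, p.1.2), p.2)) (by fun_prop) _ hp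
  · exact fun p hp => slice (fun z => ((p.1.1, z), p.2)) (by fun_prop) _ hp
  · exact fun p hp => slice (fun z => (p.1, z)) (by fun_prop) _ hp

end Osgood

/-! ### The contraction argument -/

/-- Strict differentiability of `T` at each base point `((0, Λ), 0)` gives Lipschitz bounds nearby, and
compactness of `K` makes the size of the neighbourhood uniform in `Λ`. -/
lemma uniform_bounds {K : Set ℂ} (hK : IsCompact K)
    {T : ((ℂ × ℂ) × ℂ) × (ℂ × ℂ) → ℂ × ℂ} {Q : ((ℂ × ℂ) × ℂ) × (ℂ × ℂ) → Prop} {κ' κ : ℝ}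
    (hκ : κ' < κ)
    (hTa : ∀ Λ ∈ K, AnalyticAt ℂ T ((0, Λ), 0)) (hT0 : ∀ Λ ∈ K, T ((0, Λ), 0) = 0)
    (hTd : ∀ Λ ∈ K, ∀ v : ℂ × ℂ, ‖fderiv ℂ T ((0, Λ), 0) (0, v)‖ ≤ κ' * ‖v‖)
    (hQ : ∀ Λ ∈ K, ∀ᶠ p in 𝓝 (((0, Λ), 0) : ((ℂ × ℂ) × ℂ) × (ℂ × ℂ)), Q p) :
    ∃ δ > 0, ∃ C ≥ 0, ∀ Λ ∈ K, ∀ ζ : ℂ × ℂ, ‖ζ‖ < δ → ‖T ((ζ, Λ), 0)‖ ≤ C * ‖ζ‖ ∧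
      ∀ y : ℂ × ℂ, ‖y‖ < δ → AnalyticAt ℂ T ((ζ, Λ), y) ∧ Q ((ζ, Λ), y) ∧
        ∀ y' : ℂ × ℂ, ‖y'‖ < δ → ‖T ((ζ, Λ), y) - T ((ζ, Λ), y')‖ ≤ κ * ‖y - y'‖ := by
  suffices h : ∃ δ > 0, ∃ C ≥ 0, ∀ Λ ∈ K, Λ ∈ K → ∀ ζ : ℂ × ℂ, ‖ζ‖ < δ → ‖T ((ζ, Λ), 0)‖ ≤ C * ‖ζ‖ ∧
      ∀ y : ℂ × ℂ, ‖y‖ < δ → AnalyticAt ℂ T ((ζ, Λ), y) ∧ Q ((ζ, Λ), y) ∧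
        ∀ y' : ℂ × ℂ, ‖y'‖ < δ → ‖T ((ζ, Λ), y) - T ((ζ, Λ), y')‖ ≤ κ * ‖y - y'‖ by
    obtain ⟨δ, hδ, C, hC, h⟩ := h
    exact ⟨δ, hδ, C, hC, fun Λ hΛ => h Λ hΛ hΛ⟩
  refine hK.induction_on (p := fun S => ∃ δ > 0, ∃ C ≥ 0, ∀ Λ ∈ S, Λ ∈ K → ∀ ζ : ℂ × ℂ, ‖ζ‖ < δ →
      ‖T ((ζ, Λ), 0)‖ ≤ C * ‖ζ‖ ∧
      ∀ y : ℂ × ℂ, ‖y‖ < δ → AnalyticAt ℂ T ((ζ, Λ), y) ∧ Q ((ζ, Λ), y) ∧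
        ∀ y' : ℂ × ℂ, ‖y'‖ < δ → ‖T ((ζ, Λ), y) - T ((ζ, Λ), y')‖ ≤ κ * ‖y - y'‖) ?_ ?_ ?_ ?_
  · exact ⟨1, one_pos, 0, le_rfl, fun Λ hΛ => hΛ.elim⟩
  · rintro s t hst ⟨δ, hδ, C, hC, h⟩
    exact ⟨δ, hδ, C, hC, fun Λ hΛ => h Λ (hst hΛ)⟩
  · rintro s t ⟨δ, hδ, C, hC, h⟩ ⟨δ', hδ', C', hC', h'⟩
    refine ⟨min δ δ', lt_min hδ hδ', max C C', le_max_of_le_left hC, fun Λ hΛ hΛK ζ hζ => ?_⟩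
    obtain ⟨hζ1, hζ2⟩ := lt_min_iff.1 hζ
    rcases hΛ with hΛ | hΛ
    · obtain ⟨g1, g2⟩ := h Λ hΛ hΛK ζ hζ1
      refine ⟨g1.trans (by gcongr; exact le_max_left _ _), fun y hy => ?_⟩
      obtain ⟨g3, g4, g5⟩ := g2 y (lt_min_iff.1 hy).1
      exact ⟨g3, g4, fun y' hy' => g5 y' (lt_min_iff.1 hy').1⟩
    · obtain ⟨g1, g2⟩ := h' Λ hΛ hΛK ζ hζ2
      refine ⟨g1.trans (by gcongr; exact le_max_right _ _), fun y hy => ?_⟩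
      obtain ⟨g3, g4, g5⟩ := g2 y (lt_min_iff.1 hy).2
      exact ⟨g3, g4, fun y' hy' => g5 y' (lt_min_iff.1 hy').2⟩
  · intro Λ₀ hΛ₀
    set p₀ : ((ℂ × ℂ) × ℂ) × (ℂ × ℂ) := ((0, Λ₀), 0) with hp₀
    set T' := fderiv ℂ T p₀ with hT'
    have hs : HasStrictFDerivAt T T' p₀ := (hTa Λ₀ hΛ₀).hasStrictFDerivAt
    have hlo := hs.isLittleO.def (sub_pos.2 hκ)
    have hev := ((hTa Λ₀ hΛ₀).eventually_analyticAt).and (hQ Λ₀ hΛ₀)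
    obtain ⟨δ₁, hδ₁, h₁⟩ := Metric.eventually_nhds_iff.1 hlo
    obtain ⟨δ₂, hδ₂, h₂⟩ := Metric.eventually_nhds_iff.1 hev
    have hδ : 0 < min δ₁ δ₂ := lt_min hδ₁ hδ₂
    have hclose : ∀ Λ, dist Λ Λ₀ < min δ₁ δ₂ → ∀ ζ : ℂ × ℂ, ‖ζ‖ < min δ₁ δ₂ → ∀ y : ℂ × ℂ,
        ‖y‖ < min δ₁ δ₂ → dist (((ζ, Λ), y) : ((ℂ × ℂ) × ℂ) × (ℂ × ℂ)) p₀ < min δ₁ δ₂ := by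
      intro Λ hΛ ζ hζ y hy
      rw [hp₀, Prod.dist_eq, Prod.dist_eq]
      exact max_lt (max_lt (by simpa using hζ) hΛ) (by simpa using hy)
    have hclose₂ : ∀ p p' : ((ℂ × ℂ) × ℂ) × (ℂ × ℂ), dist p p₀ < min δ₁ δ₂ →
        dist p' p₀ < min δ₁ δ₂ → ‖T p - T p' - T' (p - p')‖ ≤ (κ - κ') * ‖p - p'‖ := by
      intro p p' hp hp'
      refine h₁ (y := (p, p')) ?_
      rw [Prod.dist_eq]
      exact (max_lt hp hp').trans_le (min_le_left _ _)
    refine ⟨Metric.ball Λ₀ (min δ₁ δ₂), mem_nhdsWithin_of_mem_nhds (Metric.ball_mem_nhds _ hδ),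
      min δ₁ δ₂, hδ, ‖T'‖ + (κ - κ'), add_nonneg (norm_nonneg _) (sub_pos.2 hκ).le, ?_⟩
    intro Λ hΛ hΛK ζ hζ
    have h0 : ‖(0 : ℂ × ℂ)‖ < min δ₁ δ₂ := by simpa using hδ
    refine ⟨?_, fun y hy => ?_⟩
    · have h := hclose₂ _ _ (hclose Λ hΛ ζ hζ 0 h0) (hclose Λ hΛ 0 h0 0 h0)
      have hd : ((((ζ, Λ), 0) : ((ℂ × ℂ) × ℂ) × (ℂ × ℂ)) - ((0, Λ), 0)) = ((ζ, 0), 0) := by simp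
      have hn : ‖(((ζ, 0), 0) : ((ℂ × ℂ) × ℂ) × (ℂ × ℂ))‖ = ‖ζ‖ := by
        simp [Prod.norm_def]
      rw [hd, hn, hT0 Λ hΛK, sub_zero] at h
      have h' := T'.le_opNorm (((ζ, 0), 0) : ((ℂ × ℂ) × ℂ) × (ℂ × ℂ))
      rw [hn] at h'
      have h'' := norm_le_norm_add_norm_sub' (T ((ζ, Λ), 0)) (T' ((ζ, 0), 0))
      linarith
    · have hya := h₂ ((hclose Λ hΛ ζ hζ y hy).trans_le (min_le_right _ _))
      refine ⟨hya.1, hya.2, fun y' hy' => ?_⟩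
      have h := hclose₂ _ _ (hclose Λ hΛ ζ hζ y hy) (hclose Λ hΛ ζ hζ y' hy')
      have hd : ((((ζ, Λ), y) : ((ℂ × ℂ) × ℂ) × (ℂ × ℂ)) - ((ζ, Λ), y')) = (0, y - y') := by
        ext <;> simp
      have hn : ‖((0, y - y') : ((ℂ × ℂ) × ℂ) × (ℂ × ℂ))‖ = ‖y - y'‖ := by
        rw [Prod.norm_def, norm_zero]
        exact max_eq_right (norm_nonneg _)
      rw [hd, hn] at h
      have h' := hTd Λ₀ hΛ₀ (y - y')
      have h'' := norm_le_norm_add_norm_sub' (T ((ζ, Λ), y) - T ((ζ, Λ), y')) (T' (0, y - y'))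
      linarith

/-- Existence of an analytic solution of `Y(ζ, Λ) = T(ζ, Λ, Y(q₁ζ₁, q₂ζ₂, Λ))` vanishing at `ζ = 0`,
when `T` has Lipschitz constant `κ` in its last argument near the base points and the linear map
`ζ ↦ (q₁ζ₁, q₂ζ₂)` contracts by `ρ` with `κ ρ < 1`. The factor `κ` itself may exceed `1`: the iterates
contract because they all vanish to first order in `ζ`. The predicate `Q` records any further property
that holds near the base points and is wanted along the solution. -/
theorem exists_invariant_graph {K L : Set ℂ} (hK : IsCompact K) (hL : IsOpen L) (hLK : L ⊆ K)
    {T : ((ℂ × ℂ) × ℂ) × (ℂ × ℂ) → ℂ × ℂ} {Q : ((ℂ × ℂ) × ℂ) × (ℂ × ℂ) → Prop} {κ' κ ρ : ℝ}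
    {q1 q2 : ℂ → ℂ} (hκ : κ' < κ) (hκ0 : 0 ≤ κ) (hρ0 : 0 ≤ ρ) (hρ1 : ρ ≤ 1) (hκρ : κ * ρ < 1)
    (hq1 : ∀ Λ ∈ K, ‖q1 Λ‖ ≤ ρ) (hq2 : ∀ Λ ∈ K, ‖q2 Λ‖ ≤ ρ)
    (hq1a : ∀ Λ ∈ K, AnalyticAt ℂ q1 Λ) (hq2a : ∀ Λ ∈ K, AnalyticAt ℂ q2 Λ)
    (hTa : ∀ Λ ∈ K, AnalyticAt ℂ T ((0, Λ), 0)) (hT0 : ∀ Λ ∈ K, T ((0, Λ), 0) = 0)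
    (hTd : ∀ Λ ∈ K, ∀ v : ℂ × ℂ, ‖fderiv ℂ T ((0, Λ), 0) (0, v)‖ ≤ κ' * ‖v‖)
    (hQ : ∀ Λ ∈ K, ∀ᶠ p in 𝓝 (((0, Λ), 0) : ((ℂ × ℂ) × ℂ) × (ℂ × ℂ)), Q p) :
    ∃ r > 0, ∃ Y : (ℂ × ℂ) × ℂ → ℂ × ℂ,
      (∀ ζ ∈ Metric.ball (0 : ℂ × ℂ) r, ∀ Λ ∈ L, AnalyticAt ℂ Y (ζ, Λ)) ∧
      (∀ Λ ∈ L, Y (0, Λ) = 0) ∧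
      ∀ ζ ∈ Metric.ball (0 : ℂ × ℂ) r, ∀ Λ ∈ L,
        Y (ζ, Λ) = T ((ζ, Λ), Y ((q1 Λ * ζ.1, q2 Λ * ζ.2), Λ)) ∧
        Q ((ζ, Λ), Y ((q1 Λ * ζ.1, q2 Λ * ζ.2), Λ)) := by
  obtain ⟨δ, hδ, C, hC, hunif⟩ := uniform_bounds hK hκ hTa hT0 hTd hQ
  have hgap : 0 < 1 - κ * ρ := sub_pos.2 hκρ
  -- `‖y‖ ≤ M ‖ζ‖` is the bound preserved by the iteration.
  obtain ⟨M, hM, hMC⟩ : ∃ M : ℝ, 0 ≤ M ∧ κ * ρ * M + C = M := by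
    refine ⟨C / (1 - κ * ρ), by positivity, ?_⟩
    field_simp
    ring
  obtain ⟨r, hr, hrδ, hMr⟩ : ∃ r > 0, r ≤ δ ∧ M * r < δ := by
    refine ⟨min δ (δ / (M + 1)), by positivity, min_le_left _ _, ?_⟩
    calc M * min δ (δ / (M + 1)) ≤ M * (δ / (M + 1)) := by gcongr; exact min_le_right _ _
      _ = δ * (M / (M + 1)) := by ring
      _ < δ * 1 := by
        gcongr
        rw [div_lt_one (by positivity)]
        linarith
      _ = δ := mul_one δ
  let σ : (ℂ × ℂ) × ℂ → (ℂ × ℂ) × ℂ := fun p => ((q1 p.2 * p.1.1, q2 p.2 * p.1.2), p.2)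
  let D : Set ((ℂ × ℂ) × ℂ) := Metric.ball 0 r ×ˢ L
  have hD : IsOpen D := Metric.isOpen_ball.prod hL
  have hDr : ∀ p ∈ D, ‖p.1‖ < r := fun p hp => by simpa using hp.1
  have hDK : ∀ p ∈ D, p.2 ∈ K := fun p hp => hLK hp.2
  have hσn : ∀ p ∈ D, ‖(σ p).1‖ ≤ ρ * ‖p.1‖ := by
    intro p hp
    refine max_le ?_ ?_
    · rw [norm_mul]
      exact mul_le_mul (hq1 _ (hDK p hp)) (norm_fst_le p.1) (norm_nonneg _) hρ0
    · rw [norm_mul]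
      exact mul_le_mul (hq2 _ (hDK p hp)) (norm_snd_le p.1) (norm_nonneg _) hρ0
  have hσD : ∀ p ∈ D, σ p ∈ D := by
    intro p hp
    refine ⟨?_, hp.2⟩
    rw [mem_ball_zero_iff]
    calc ‖(σ p).1‖ ≤ ρ * ‖p.1‖ := hσn p hp
      _ ≤ 1 * ‖p.1‖ := by gcongr
      _ < r := by rw [one_mul]; exact hDr p hp
  have hσa : ∀ p ∈ D, AnalyticAt ℂ σ p := by
    intro p hp
    have a1 : AnalyticAt ℂ (fun p : (ℂ × ℂ) × ℂ => q1 p.2) p :=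
      AnalyticAt.fun_comp (hq1a _ (hDK p hp)) analyticAt_snd
    have a2 : AnalyticAt ℂ (fun p : (ℂ × ℂ) × ℂ => q2 p.2) p :=
      AnalyticAt.fun_comp (hq2a _ (hDK p hp)) analyticAt_snd
    exact ((a1.mul (analyticAt_fst.fun_comp analyticAt_fst)).prod
      (a2.mul (analyticAt_snd.fun_comp analyticAt_fst))).prod analyticAt_snd
  let F : ℕ → (ℂ × ℂ) × ℂ → ℂ × ℂ := fun n => n.rec (fun _ => 0) fun _ G p => T (p, G (σ p))
  have hF0 : ∀ p, F 0 p = 0 := fun p => rfl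
  have hFs : ∀ n p, F (n + 1) p = T (p, F n (σ p)) := fun n p => rfl
  have hsmall : ∀ p ∈ D, ∀ y : ℂ × ℂ, ‖y‖ ≤ M * ‖p.1‖ → ‖y‖ < δ := fun p hp y hy =>
    (hy.trans (mul_le_mul_of_nonneg_left (hDr p hp).le hM)).trans_lt hMr
  have hbound : ∀ n, ∀ p ∈ D, ‖F n p‖ ≤ M * ‖p.1‖ := by
    intro n
    induction n with
    | zero => intro p hp; rw [hF0, norm_zero]; positivity
    | succ n ih =>
      intro p hp
      have h := hunif p.2 (hDK p hp) p.1 ((hDr p hp).trans_le hrδ)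
      have h1 := (h.2 _ (hsmall _ (hσD p hp) _ (ih _ (hσD p hp)))).2.2 0 (by simpa using hδ)
      rw [sub_zero] at h1
      rw [hFs]
      calc ‖T (p, F n (σ p))‖ ≤ ‖T (p, 0)‖ + ‖T (p, F n (σ p)) - T (p, 0)‖ :=
            norm_le_norm_add_norm_sub' _ _
        _ ≤ C * ‖p.1‖ + κ * (M * (ρ * ‖p.1‖)) := by
            refine add_le_add h.1 (h1.trans ?_)
            gcongr
            exact (ih _ (hσD p hp)).trans (mul_le_mul_of_nonneg_left (hσn p hp) hM)
        _ = (κ * ρ * M + C) * ‖p.1‖ := by ring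
        _ = M * ‖p.1‖ := by rw [hMC]
  have hdiff : ∀ n, ∀ p ∈ D, ‖F n p - F (n + 1) p‖ ≤ M * ‖p.1‖ * (κ * ρ) ^ n := by
    intro n
    induction n with
    | zero =>
      intro p hp
      rw [hF0, zero_sub, norm_neg, pow_zero, mul_one]
      exact hbound 1 p hp
    | succ n ih =>
      intro p hp
      have hp' := hσD p hp
      have h := hunif p.2 (hDK p hp) p.1 ((hDr p hp).trans_le hrδ)
      have h1 := (h.2 _ (hsmall _ hp' _ (hbound n _ hp'))).2.2 _
        (hsmall _ hp' _ (hbound (n + 1) _ hp'))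
      rw [hFs, hFs (n + 1)]
      calc ‖T (p, F n (σ p)) - T (p, F (n + 1) (σ p))‖
          ≤ κ * ‖F n (σ p) - F (n + 1) (σ p)‖ := h1
        _ ≤ κ * (M * (ρ * ‖p.1‖) * (κ * ρ) ^ n) := by
          gcongr
          refine (ih _ hp').trans ?_
          gcongr
          exact hσn p hp
        _ = M * ‖p.1‖ * (κ * ρ) ^ (n + 1) := by ring
  have hFa : ∀ n, ∀ p ∈ D, AnalyticAt ℂ (F n) p := by
    intro n
    induction n with
    | zero => exact fun p hp => analyticAt_const
    | succ n ih =>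
      intro p hp
      have hp' := hσD p hp
      have h := ((hunif p.2 (hDK p hp) p.1 ((hDr p hp).trans_le hrδ)).2 _
        (hsmall _ hp' _ (hbound n _ hp'))).1
      exact AnalyticAt.fun_comp (f := fun p => (p, F n (σ p))) h
        (analyticAt_id.prod (AnalyticAt.fun_comp (ih _ hp') (hσa p hp)))
  have hlim : ∀ p ∈ D, ∃ a, Tendsto (fun n => F n p) atTop (𝓝 a) := fun p hp =>
    cauchySeq_tendsto_of_complete (cauchySeq_of_le_geometric (κ * ρ) (M * ‖p.1‖) hκρ
      fun n => by rw [dist_eq_norm]; exact hdiff n p hp)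
  choose! Y hY using hlim
  have hYunif : TendstoUniformlyOn F Y atTop D := by
    rw [Metric.tendstoUniformlyOn_iff]
    intro ε hε
    have hκρ0 : 0 ≤ κ * ρ := mul_nonneg hκ0 hρ0
    have htend : Tendsto (fun n : ℕ => M * r * (κ * ρ) ^ n / (1 - κ * ρ)) atTop (𝓝 0) := by
      have := ((tendsto_pow_atTop_nhds_zero_of_lt_one hκρ0 hκρ).const_mul (M * r)).div_const
        (1 - κ * ρ)
      simpa using this
    filter_upwards [htend.eventually_lt_const hε] with n hn p hp
    rw [dist_comm]
    refine (dist_le_of_le_geometric_of_tendsto (κ * ρ) (M * ‖p.1‖) hκρ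
      (fun n => by rw [dist_eq_norm]; exact hdiff n p hp) (hY p hp) n).trans_lt (lt_of_le_of_lt ?_ hn)
    gcongr
    exact (hDr p hp).le
  have hYb : ∀ p ∈ D, ‖Y p‖ ≤ M * ‖p.1‖ := fun p hp =>
    le_of_tendsto (hY p hp).norm (Eventually.of_forall fun n => hbound n p hp)
  refine ⟨r, hr, Y, fun ζ hζ Λ hΛ => analyticAt_of_uniform_limit hD hFa hYunif ⟨hζ, hΛ⟩,
    fun Λ hΛ => ?_, fun ζ hζ Λ hΛ => ?_⟩
  · have := hYb (0, Λ) ⟨by simpa using hr, hΛ⟩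
    simpa using this
  · have hp : (ζ, Λ) ∈ D := ⟨hζ, hΛ⟩
    have hp' := hσD _ hp
    have h := (hunif Λ (hDK _ hp) ζ ((hDr _ hp).trans_le hrδ)).2 _ (hsmall _ hp' _ (hYb _ hp'))
    refine ⟨?_, h.2.1⟩
    have hc : Tendsto (fun n => F (n + 1) (ζ, Λ)) atTop (𝓝 (T ((ζ, Λ), Y (σ (ζ, Λ))))) :=
      h.1.continuousAt.tendsto.comp (tendsto_const_nhds.prodMk_nhds (hY _ hp'))
    exact tendsto_nhds_unique ((tendsto_add_atTop_iff_nat 1).2 (hY _ hp)) hc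

/-! ### The reduced q-P(A₁) system -/

/-- The factor `A` of (E2), free of `G`, once powers of `ζ₁` are removed. Here `s = ζ₁`, `w = ζ₂`, and
`X`, `W` stand for `f̄ / ζ₁`, `ḡ / ζ₁`; the relation reads
`(G X - q w²) A = (s² G X - 1) B` with `B = polyB`. -/
noncomputable def polyA (q b5 b6 b7 b8 s w X W : ℂ) : ℂ :=
  (W * X - q ^ 2 * w ^ 2) * ((s * X - b5⁻¹) * (s * X - b6⁻¹) * (s * X - b7⁻¹) * (s * X - b8⁻¹))

/-- The factor `B` of the reduced relation (E2); see `polyA`. -/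
noncomputable def polyB (q b1 b2 b3 b4 s w X W : ℂ) : ℂ :=
  (s ^ 2 * (W * X) - 1) *
    ((X - q * w * b1⁻¹) * (X - q * w * b2⁻¹) * (X - q * w * b3⁻¹) * (X - q * w * b4⁻¹))

/-- The factor `C` of (E1), free of `F`, once powers of `ζ₁` are removed, with `G = g / ζ₁` and `X` as in
`polyA`; the relation reads `(G F - w²) C = (s² G F - 1) D` with `D = polyD`. -/
noncomputable def polyC (q b5 b6 b7 b8 s w X G : ℂ) : ℂ :=
  (G * X - q * w ^ 2) * ((s * G - b5) * (s * G - b6) * (s * G - b7) * (s * G - b8))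

/-- The factor `D` of the reduced relation (E1); see `polyC`. -/
noncomputable def polyD (b1 b2 b3 b4 s w X G : ℂ) : ℂ :=
  (s ^ 2 * (G * X) - 1) * ((G - b1 * w) * (G - b2 * w) * (G - b3 * w) * (G - b4 * w))

/-- Multiplying a reduced relation by `s ^ 4` restores the original one: two quadratic factors on the
left absorb `s ^ 2` each, four linear factors on the right absorb `s` each. -/
lemma homogeneous_relation {s u1 u2 u3 u4 u5 u6 v1 v2 v3 v4 v5 v6
    a1 a2 a3 a4 a5 a6 c1 c2 c3 c4 c5 c6 : ℂ}
    (h : u1 * (u2 * (u3 * u4 * u5 * u6)) = v1 * (v2 * (v3 * v4 * v5 * v6)))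
    (h1 : a1 = s ^ 2 * u1) (h2 : a2 = s ^ 2 * u2) (h3 : a3 = u3) (h4 : a4 = u4) (h5 : a5 = u5)
    (h6 : a6 = u6) (k1 : c1 = v1) (k2 : c2 = v2) (k3 : c3 = s * v3) (k4 : c4 = s * v4)
    (k5 : c5 = s * v5) (k6 : c6 = s * v6) :
    a1 * a2 * a3 * a4 * a5 * a6 = c1 * c2 * c3 * c4 * c5 * c6 := by
  subst h1 h2 h3 h4 h5 h6 k1 k2 k3 k4 k5 k6
  linear_combination s ^ 4 * h

lemma cross_relation {s w G F C D : ℂ} (h : F * (G * (C - s ^ 2 * D)) = w ^ 2 * C - D) :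
    (G * F - w ^ 2) * C = (s ^ 2 * (G * F) - 1) * D := by
  linear_combination h

lemma cross_relation' {q s w G X A B : ℂ} (h : G * (X * (A - s ^ 2 * B)) = q * w ^ 2 * A - B) :
    (G * X - q * w ^ 2) * A = (s ^ 2 * (G * X) - 1) * B := by
  linear_combination h

lemma analytic_polys {V : Type*} [NormedAddCommGroup V] [NormedSpace ℂ V]
    (q b1 b2 b3 b4 b5 b6 b7 b8 : ℂ) {s w X W : V → ℂ} {p : V} (hs : AnalyticAt ℂ s p)
    (hw : AnalyticAt ℂ w p) (hX : AnalyticAt ℂ X p) (hW : AnalyticAt ℂ W p) :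
    AnalyticAt ℂ (fun p => polyA q b5 b6 b7 b8 (s p) (w p) (X p) (W p)) p ∧
    AnalyticAt ℂ (fun p => polyB q b1 b2 b3 b4 (s p) (w p) (X p) (W p)) p ∧
    AnalyticAt ℂ (fun p => polyC q b5 b6 b7 b8 (s p) (w p) (X p) (W p)) p ∧
    AnalyticAt ℂ (fun p => polyD b1 b2 b3 b4 (s p) (w p) (X p) (W p)) p := by
  unfold polyA polyB polyC polyD
  refine ⟨?_, ?_, ?_, ?_⟩ <;> fun_prop

/-- The backward step of the system. (E2) is linear in `g` and (E1) is linear in `f`, so `f`, `g` are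
rational functions of `f̄`, `ḡ`. In the coordinates `f = ζ₁ (1 + a)`, `g = ζ₁ Λ (1 + a - ε c)` the step
is a map `T` of `(a, c)`, analytic near `ζ = 0`, `(a, c) = 0`, fixing `0`, whose linearisation in
`(a, c)` is the Jordan block `(a, c) ↦ (a + 2 ε c, c)`. -/
lemma exists_step_map (q b1 b2 b3 b4 b5 b6 b7 b8 ε : ℂ) (hb5 : b5 ≠ 0) (hb6 : b6 ≠ 0)
    (hb7 : b7 ≠ 0) (hb8 : b8 ≠ 0) (hε : ε ≠ 0) :
    ∃ T : ((ℂ × ℂ) × ℂ) × (ℂ × ℂ) → ℂ × ℂ, ∀ Λ : ℂ, Λ ≠ 0 →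
      AnalyticAt ℂ T ((0, Λ), 0) ∧ T ((0, Λ), 0) = 0 ∧
      (∀ v : ℂ × ℂ, fderiv ℂ T ((0, Λ), 0) (0, v) = (v.1 + 2 * ε * v.2, v.2)) ∧
      ∀ᶠ p in 𝓝 (((0, Λ), 0) : ((ℂ × ℂ) × ℂ) × (ℂ × ℂ)), ∀ s w Λ X W F G : ℂ,
        p.1 = ((s, w), Λ) →
        X = Λ ^ 2 / (b5 * b6 * b7 * b8) * (1 + p.2.1) →
        W = Λ ^ 2 / (b5 * b6 * b7 * b8) * (Λ * (1 + p.2.1 - ε * p.2.2)) →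
        F = 1 + (T p).1 → G = Λ * (1 + (T p).1 - ε * (T p).2) →
        (G * F - w ^ 2) * polyC q b5 b6 b7 b8 s w X G =
          (s ^ 2 * (G * F) - 1) * polyD b1 b2 b3 b4 s w X G ∧
        (G * X - q * w ^ 2) * polyA q b5 b6 b7 b8 s w X W =
          (s ^ 2 * (G * X) - 1) * polyB q b1 b2 b3 b4 s w X W := by
  let V := ((ℂ × ℂ) × ℂ) × (ℂ × ℂ)
  let s : V → ℂ := fun p => p.1.1.1
  let w : V → ℂ := fun p => p.1.1.2
  let l : V → ℂ := fun p => p.1.2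
  let X : V → ℂ := fun p => l p ^ 2 / (b5 * b6 * b7 * b8) * (1 + p.2.1)
  let W : V → ℂ := fun p => l p ^ 2 / (b5 * b6 * b7 * b8) * (l p * (1 + p.2.1 - ε * p.2.2))
  let A : V → ℂ := fun p => polyA q b5 b6 b7 b8 (s p) (w p) (X p) (W p)
  let B : V → ℂ := fun p => polyB q b1 b2 b3 b4 (s p) (w p) (X p) (W p)
  let G : V → ℂ := fun p => (q * w p ^ 2 * A p - B p) / (X p * (A p - s p ^ 2 * B p))
  let C : V → ℂ := fun p => polyC q b5 b6 b7 b8 (s p) (w p) (X p) (G p)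
  let D : V → ℂ := fun p => polyD b1 b2 b3 b4 (s p) (w p) (X p) (G p)
  let F : V → ℂ := fun p => (w p ^ 2 * C p - D p) / (G p * (C p - s p ^ 2 * D p))
  let T : V → ℂ × ℂ := fun p => (F p - 1, ((F p - 1) - (G p / l p - 1)) / ε)
  -- On the slice `ζ = 0` both quotients become monomials in the shifted variables.
  have hG : ∀ Λ y1 y2 : ℂ, Λ ≠ 0 → 1 + y1 ≠ 0 → 1 + y1 - ε * y2 ≠ 0 →
      G ((0, Λ), (y1, y2)) = Λ * (1 + y1) ^ 2 / (1 + y1 - ε * y2) := by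
    intro Λ y1 y2 hΛ h1 h2
    simp only [G, A, B, polyA, polyB, s, w, X, W, l, Prod.fst_zero, Prod.snd_zero]
    field_simp
    ring
  have hF : ∀ Λ y1 y2 : ℂ, Λ ≠ 0 → 1 + y1 ≠ 0 → 1 + y1 - ε * y2 ≠ 0 →
      F ((0, Λ), (y1, y2)) = (1 + y1) ^ 3 / (1 + y1 - ε * y2) ^ 2 := by
    intro Λ y1 y2 hΛ h1 h2
    simp only [F, C, D, polyC, polyD, hG Λ y1 y2 hΛ h1 h2, s, w, X, l, Prod.fst_zero,
      Prod.snd_zero]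
    field_simp
    ring
  refine ⟨T, fun Λ hΛ => ?_⟩
  have hG0 : G ((0, Λ), 0) = Λ := by
    exact (hG Λ 0 0 hΛ (by simp) (by simp)).trans (by simp)
  have hF0 : F ((0, Λ), 0) = 1 := by
    exact (hF Λ 0 0 hΛ (by simp) (by simp)).trans (by simp)
  have e1 : X ((0, Λ), 0) * (A ((0, Λ), 0) - s ((0, Λ), 0) ^ 2 * B ((0, Λ), 0)) ≠ 0 := by
    simp [A, B, polyA, polyB, s, w, X, W, l, hb5, hb6, hb7, hb8, hΛ]
  have e2 : G ((0, Λ), 0) * (C ((0, Λ), 0) - s ((0, Λ), 0) ^ 2 * D ((0, Λ), 0)) ≠ 0 := by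
    simp [C, D, polyC, polyD, hG0, s, w, X, l, hb5, hb6, hb7, hb8, hΛ]
  have as : AnalyticAt ℂ s ((0, Λ), 0) :=
    analyticAt_fst.fun_comp (analyticAt_fst.fun_comp analyticAt_fst)
  have aw : AnalyticAt ℂ w ((0, Λ), 0) :=
    analyticAt_snd.fun_comp (analyticAt_fst.fun_comp analyticAt_fst)
  have al : AnalyticAt ℂ l ((0, Λ), 0) := analyticAt_snd.fun_comp analyticAt_fst
  have ay1 : AnalyticAt ℂ (fun p : V => p.2.1) ((0, Λ), 0) :=
    analyticAt_fst.fun_comp analyticAt_snd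
  have ay2 : AnalyticAt ℂ (fun p : V => p.2.2) ((0, Λ), 0) :=
    analyticAt_snd.fun_comp analyticAt_snd
  have aX : AnalyticAt ℂ X ((0, Λ), 0) := by
    simp only [X, div_eq_mul_inv]
    fun_prop
  have aW : AnalyticAt ℂ W ((0, Λ), 0) := by
    simp only [W, div_eq_mul_inv]
    fun_prop
  obtain ⟨aA, aB, -, -⟩ := analytic_polys q b1 b2 b3 b4 b5 b6 b7 b8 as aw aX aW
  have aE1 : AnalyticAt ℂ (fun p => X p * (A p - s p ^ 2 * B p)) ((0, Λ), 0) :=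
    aX.mul (aA.sub ((as.pow 2).mul aB))
  have aG : AnalyticAt ℂ G ((0, Λ), 0) :=
    (((analyticAt_const.mul (aw.pow 2)).mul aA).sub aB).div aE1 e1
  obtain ⟨-, -, aC, aD⟩ := analytic_polys q b1 b2 b3 b4 b5 b6 b7 b8 as aw aX aG
  have aE2 : AnalyticAt ℂ (fun p => G p * (C p - s p ^ 2 * D p)) ((0, Λ), 0) :=
    aG.mul (aC.sub ((as.pow 2).mul aD))
  have aF : AnalyticAt ℂ F ((0, Λ), 0) := (((aw.pow 2).mul aC).sub aD).div aE2 e2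
  have aT : AnalyticAt ℂ T ((0, Λ), 0) :=
    (aF.sub analyticAt_const).prod
      (((aF.sub analyticAt_const).sub ((aG.div al hΛ).sub analyticAt_const)).div_const)
  refine ⟨aT, ?_, fun v => ?_, ?_⟩
  · simp [T, hF0, hG0, l, hΛ]
  · obtain ⟨a, c⟩ := v
    -- The derivative in the direction `(0, (a, c))` is computed along the line `z ↦ (z a, z c)`.
    have hline : HasDerivAt (fun z : ℂ => (((0, Λ), (z * a, z * c)) : V)) (0, (a, c)) 0 := by
      refine (hasDerivAt_const (0 : ℂ) ((0 : ℂ × ℂ), Λ)).prodMk (HasDerivAt.prodMk ?_ ?_)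
      · simpa using (hasDerivAt_id (0 : ℂ)).mul_const a
      · simpa using (hasDerivAt_id (0 : ℂ)).mul_const c
    have h1 : HasDerivAt (fun z : ℂ => T ((0, Λ), (z * a, z * c)))
        (fderiv ℂ T ((0, Λ), 0) (0, (a, c))) 0 := by
      have h0 : (((0, Λ), ((0 : ℂ) * a, (0 : ℂ) * c)) : V) = ((0, Λ), 0) := by simp
      have hT := aT.differentiableAt.hasFDerivAt
      rw [← h0] at hT
      have h := HasFDerivAt.comp_hasDerivAt (0 : ℂ) hT hline
      rw [h0] at h
      exact h
    have d1 : HasDerivAt (fun z : ℂ => 1 + z * a) a 0 := by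
      simpa using ((hasDerivAt_id (0 : ℂ)).mul_const a).const_add 1
    have d2 : HasDerivAt (fun z : ℂ => 1 + z * a - ε * (z * c)) (a - ε * c) 0 := by
      simpa using d1.fun_sub (((hasDerivAt_id (0 : ℂ)).mul_const c).const_mul ε)
    have n1 : ∀ᶠ z : ℂ in 𝓝 0, 1 + z * a ≠ 0 :=
      d1.continuousAt.eventually_ne (by simp)
    have n2 : ∀ᶠ z : ℂ in 𝓝 0, 1 + z * a - ε * (z * c) ≠ 0 :=
      d2.continuousAt.eventually_ne (by simp)
    have dF : HasDerivAt (fun z : ℂ => (1 + z * a) ^ 3 / (1 + z * a - ε * (z * c)) ^ 2 - 1)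
        (a + 2 * ε * c) 0 := by
      refine (((d1.fun_pow 3).fun_div (d2.fun_pow 2) (by simp)).sub_const 1).congr_deriv ?_
      simp
      ring
    have dG : HasDerivAt (fun z : ℂ => (1 + z * a) ^ 2 / (1 + z * a - ε * (z * c)) - 1)
        (a + ε * c) 0 := by
      refine (((d1.fun_pow 2).fun_div d2 (by simp)).sub_const 1).congr_deriv ?_
      simp
      ring
    have h2 : HasDerivAt (fun z : ℂ => T ((0, Λ), (z * a, z * c))) (a + 2 * ε * c, c) 0 := by
      have h3 := dF.prodMk ((dF.sub dG).div_const ε)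
      have h4 : (a + 2 * ε * c - (a + ε * c)) / ε = c := by field_simp; ring
      rw [h4] at h3
      refine h3.congr_of_eventuallyEq ?_
      filter_upwards [n1, n2] with z hz1 hz2
      simp only [T, hF Λ _ _ hΛ hz1 hz2, hG Λ _ _ hΛ hz1 hz2, l, Pi.sub_apply]
      congr 4
      field_simp
    exact h1.unique h2
  · filter_upwards [aE1.continuousAt.eventually_ne e1, aE2.continuousAt.eventually_ne e2,
      al.continuousAt.eventually_ne hΛ] with p n1 n2 n3
    replace n3 : l p ≠ 0 := n3
    rintro s' w' Λ' X' W' F' G' hp hX hW hF' hG'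
    have i1 : s p = s' := by simp [s, hp]
    have i2 : w p = w' := by simp [w, hp]
    have i3 : l p = Λ' := by simp [l, hp]
    have i4 : X p = X' := by simp [X, i3, hX]
    have i5 : W p = W' := by simp [W, i3, hW]
    have i6 : F p = F' := by simp [hF', T]
    have i7 : G p = G' := by
      rw [hG', ← i3]
      simp only [T]
      field_simp
      ring
    have r1 : G p * (X p * (A p - s p ^ 2 * B p)) = q * w p ^ 2 * A p - B p := div_mul_cancel₀ _ n1
    have r2 : F p * (G p * (C p - s p ^ 2 * D p)) = w p ^ 2 * C p - D p := div_mul_cancel₀ _ n2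
    simp only [A, B, C, D, i1, i2, i4, i5, i6, i7] at r1 r2
    constructor
    · exact cross_relation r2
    · exact cross_relation' r1

lemma exists_uniform_contraction {K : Set ℂ} (hK : IsCompact K) {g : ℂ → ℝ} (hg : ContinuousOn g K)
    (hlt : ∀ x ∈ K, g x < 1) : ∃ ρ : ℝ, ρ < 1 ∧ ∀ x ∈ K, g x ≤ ρ := by
  rcases K.eq_empty_or_nonempty with rfl | hne
  · exact ⟨0, one_pos, fun x hx => hx.elim⟩
  · obtain ⟨x, hx, hmax⟩ := hK.exists_isMaxOn hne hg
    exact ⟨g x, hlt x hx, fun y hy => hmax hy⟩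

end Auxiliary

/-! ### The solution of the system -/

theorem stmt5 (b1 b2 b3 b4 b5 b6 b7 b8 q : ℂ)
    (hb1 : b1 ≠ 0) (hb2 : b2 ≠ 0) (hb3 : b3 ≠ 0) (hb4 : b4 ≠ 0)
    (hb5 : b5 ≠ 0) (hb6 : b6 ≠ 0) (hb7 : b7 ≠ 0) (hb8 : b8 ≠ 0)
    (hq : q = b1 * b2 * b3 * b4 / (b5 * b6 * b7 * b8)) (hqlt : ‖q‖ < 1)
    (L0 : Set ℂ)
    (hL0 : L0 = {x : ℂ | x ≠ 0 ∧ ‖b1 * b2 * b3 * b4‖ < ‖x‖ ^ 2 ∧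
      ‖x‖ ^ 2 < ‖b5 * b6 * b7 * b8‖}) :
    ∀ L : Set ℂ, IsOpen L → IsCompact (closure L) → closure L ⊆ L0 →
      ∃ Z : Set (ℂ × ℂ), IsOpen Z ∧ ((0 : ℂ), (0 : ℂ)) ∈ Z ∧
        ∃ y1 y2 : ℂ × ℂ → ℂ → ℂ,
          (∀ ζ ∈ Z, ∀ Λ ∈ L,
            AnalyticAt ℂ (fun p : (ℂ × ℂ) × ℂ => y1 p.1 p.2) (ζ, Λ) ∧
            AnalyticAt ℂ (fun p : (ℂ × ℂ) × ℂ => y2 p.1 p.2) (ζ, Λ)) ∧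
          (∀ Λ ∈ L, y1 (0, 0) Λ = 0 ∧ y2 (0, 0) Λ = 0) ∧
          (∀ Λ ∈ L, ∀ lam q1 q2 : ℂ,
            lam = Λ ^ 2 / (b1 * b2 * b3 * b4) → q1 = q * lam → q2 = lam⁻¹ →
            ∀ ζ ∈ Z, (q1 * ζ.1, q2 * ζ.2) ∈ Z →
              qpSys b1 b2 b3 b4 b5 b6 b7 b8 q (ζ.1 * ζ.2)
                (ζ.1 * (1 + y1 ζ Λ)) (ζ.1 * (Λ + y2 ζ Λ))
                ((q1 * ζ.1) * (1 + y1 (q1 * ζ.1, q2 * ζ.2) Λ))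
                ((q1 * ζ.1) * (Λ + y2 (q1 * ζ.1, q2 * ζ.2) Λ))) := by
  intro L hL hK hLL
  have hB : b1 * b2 * b3 * b4 ≠ 0 := by simp [hb1, hb2, hb3, hb4]
  have hb : b5 * b6 * b7 * b8 ≠ 0 := by simp [hb5, hb6, hb7, hb8]
  have hmem : ∀ Λ ∈ closure L, Λ ≠ 0 ∧ ‖b1 * b2 * b3 * b4‖ < ‖Λ‖ ^ 2 ∧
      ‖Λ‖ ^ 2 < ‖b5 * b6 * b7 * b8‖ := by
    intro Λ hΛ
    have h := hLL hΛ
    rw [hL0] at h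
    exact h
  let Q1 : ℂ → ℂ := fun Λ => Λ ^ 2 / (b5 * b6 * b7 * b8)
  let Q2 : ℂ → ℂ := fun Λ => (b1 * b2 * b3 * b4) / Λ ^ 2
  have hQ1a : ∀ Λ ∈ closure L, AnalyticAt ℂ Q1 Λ := fun Λ hΛ =>
    (analyticAt_id.pow 2).div analyticAt_const hb
  have hQ2a : ∀ Λ ∈ closure L, AnalyticAt ℂ Q2 Λ := fun Λ hΛ =>
    analyticAt_const.div (analyticAt_id.pow 2) (pow_ne_zero 2 (hmem Λ hΛ).1)
  obtain ⟨ρ₁, hρ₁, hQ1⟩ := exists_uniform_contraction hK (g := fun Λ => ‖Q1 Λ‖)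
    (fun Λ hΛ => (hQ1a Λ hΛ).continuousAt.norm.continuousWithinAt) (fun Λ hΛ => by
      simp only [Q1, norm_div, norm_pow]
      rw [div_lt_one (norm_pos_iff.2 hb)]
      exact (hmem Λ hΛ).2.2)
  obtain ⟨ρ₂, hρ₂, hQ2⟩ := exists_uniform_contraction hK (g := fun Λ => ‖Q2 Λ‖)
    (fun Λ hΛ => (hQ2a Λ hΛ).continuousAt.norm.continuousWithinAt) (fun Λ hΛ => by
      have := norm_pos_iff.2 (hmem Λ hΛ).1
      simp only [Q2, norm_div, norm_pow]
      rw [div_lt_one (by positivity)]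
      exact (hmem Λ hΛ).2.1)
  obtain ⟨ρ, hρ0, hρ1, hle₁, hle₂⟩ : ∃ ρ : ℝ, 0 ≤ ρ ∧ ρ < 1 ∧ ρ₁ ≤ ρ ∧ ρ₂ ≤ ρ :=
    ⟨max 0 (max ρ₁ ρ₂), le_max_left _ _, max_lt one_pos (max_lt hρ₁ hρ₂),
      (le_max_left _ _).trans (le_max_right _ _), (le_max_right _ _).trans (le_max_right _ _)⟩
  -- With `ε = (1 - ρ) / 4` the factor `(1 + 3 ε) ρ = 1 - (1 - ρ) (1 - 3 ρ / 4)` is below `1`.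
  obtain ⟨ε, hε, hερ⟩ : ∃ ε : ℝ, 0 < ε ∧ (1 + 3 * ε) * ρ < 1 :=
    ⟨(1 - ρ) / 4, by linarith, by nlinarith⟩
  have hεC : (ε : ℂ) ≠ 0 := by exact_mod_cast hε.ne'
  obtain ⟨T, hT⟩ := exists_step_map q b1 b2 b3 b4 b5 b6 b7 b8 ε hb5 hb6 hb7 hb8 hεC
  obtain ⟨r, hr, Y, hYa, hY0, hY⟩ := exists_invariant_graph (κ' := 1 + 2 * ε) (κ := 1 + 3 * ε)
    (q1 := Q1) (q2 := Q2) hK hL subset_closure (by linarith) (by linarith) hρ0 hρ1.le hερ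
    (fun Λ hΛ => (hQ1 Λ hΛ).trans hle₁) (fun Λ hΛ => (hQ2 Λ hΛ).trans hle₂) hQ1a hQ2a
    (fun Λ hΛ => (hT Λ (hmem Λ hΛ).1).1) (fun Λ hΛ => (hT Λ (hmem Λ hΛ).1).2.1)
    (fun Λ hΛ v => by
      rw [(hT Λ (hmem Λ hΛ).1).2.2.1 v]
      refine max_le ?_ ?_
      · calc ‖v.1 + 2 * (ε : ℂ) * v.2‖ ≤ ‖v.1‖ + ‖2 * (ε : ℂ) * v.2‖ := norm_add_le _ _
          _ = ‖v.1‖ + 2 * ε * ‖v.2‖ := by simp [abs_of_pos hε]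
          _ ≤ ‖v‖ + 2 * ε * ‖v‖ := by
            gcongr
            · exact norm_fst_le v
            · exact norm_snd_le v
          _ = (1 + 2 * ε) * ‖v‖ := by ring
      · calc ‖v.2‖ ≤ 1 * ‖v‖ := by rw [one_mul]; exact norm_snd_le v
          _ ≤ (1 + 2 * ε) * ‖v‖ := by gcongr; linarith)
    (fun Λ hΛ => (hT Λ (hmem Λ hΛ).1).2.2.2)
  refine ⟨Metric.ball 0 r, Metric.isOpen_ball, Metric.mem_ball_self hr,
    fun ζ Λ => (Y (ζ, Λ)).1, fun ζ Λ => Λ * ((Y (ζ, Λ)).1 - ε * (Y (ζ, Λ)).2), ?_, ?_, ?_⟩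
  · intro ζ hζ Λ hΛ
    have h := hYa ζ hζ Λ hΛ
    have h1 : AnalyticAt ℂ (fun p : (ℂ × ℂ) × ℂ => (Y p).1) (ζ, Λ) := analyticAt_fst.fun_comp h
    have h2 : AnalyticAt ℂ (fun p : (ℂ × ℂ) × ℂ => (Y p).2) (ζ, Λ) := analyticAt_snd.fun_comp h
    exact ⟨h1, analyticAt_snd.mul (h1.sub (analyticAt_const.mul h2))⟩
  · intro Λ hΛ
    have h : Y ((0, 0), Λ) = 0 := hY0 Λ hΛ
    simp [h]
  · rintro Λ hΛ lam q1 q2 hlam hq1 hq2 ⟨s, w⟩ hζ -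
    have e1 : q1 = Q1 Λ := by
      rw [hq1, hlam, hq]
      simp only [Q1]
      field_simp
    have e2 : q2 = Q2 Λ := by
      rw [hq2, hlam, inv_div]
    obtain ⟨hfix, hrel⟩ := hY (s, w) hζ Λ hΛ
    dsimp only at hfix hrel ⊢
    rw [← e1, ← e2] at hfix hrel
    obtain ⟨E1, E2⟩ := hrel s w Λ (q1 * (1 + (Y ((q1 * s, q2 * w), Λ)).1))
      (q1 * (Λ * (1 + (Y ((q1 * s, q2 * w), Λ)).1 - ε * (Y ((q1 * s, q2 * w), Λ)).2)))
      (1 + (Y ((s, w), Λ)).1) (Λ * (1 + (Y ((s, w), Λ)).1 - ε * (Y ((s, w), Λ)).2))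
      rfl (by rw [e1]) (by rw [e1]) (by rw [hfix]) (by rw [hfix])
    unfold polyC polyD at E1
    unfold polyA polyB at E2
    simp only [qpSys, div_eq_mul_inv]
    generalize Y ((q1 * s, q2 * w), Λ) = Z at E1 E2 ⊢
    generalize Y ((s, w), Λ) = Z' at E1 E2 ⊢
    obtain ⟨z1, z2⟩ := Z
    obtain ⟨z1', z2'⟩ := Z'
    dsimp only at E1 E2 ⊢
    constructor
    · refine homogeneous_relation (s := s) E1 ?_ ?_ ?_ ?_ ?_ ?_ ?_ ?_ ?_ ?_ ?_ ?_ <;> ring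
    · refine homogeneous_relation (s := s) E2 ?_ ?_ ?_ ?_ ?_ ?_ ?_ ?_ ?_ ?_ ?_ ?_ <;> ring
end

section
/- Let b1,…,b8 be nonzero complex numbers with q = b1b2b3b4/(b5b6b7b8) satisfying |q| < 1. Let T ⊆ ℂ∖{0} be a nonempty open set with qT = T, let Λ : T → ℂ be holomorphic with Λ(qt) = Λ(t) and |b1b2b3b4| < |Λ(t)|² < |b5b6b7b8| for all t ∈ T, and let φ : T → ℂ∖{0} be holomorphic and nonvanishing with φ(qt) = (Λ(t)²/(b1b2b3b4))·φ(t) for all t ∈ T. Then for every open set V ⊆ T with qV = V whose closure intersected with ℂ∖{0} is contained in T, there exist r > 0 and holomorphic functions f, g on W := V ∩ {t : 0 < |t| < r} such that (i) qW ⊆ W and the relations (E1), (E2) hold at every t ∈ W with f̄ = f(qt), ḡ = g(qt); and (ii) f(t)/(t·φ(t)) → 1 and g(t)/(t·Λ(t)·φ(t)) → 1 as t → 0 within W. -/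
/-!
The terms `tφ` and `tΛφ` solve the equations to leading order. Writing `f = tφ·x`, `g = tΛφ·y`,
the coefficients of the rescaled system are polynomials in `tφ`, `1/φ` and their products with
powers of `Λ` (`params`). Since `φ(qt) = (Λ²/P) φ(t)` with `P = b₁b₂b₃b₄`, `Q = b₅b₆b₇b₈`, these
parameters are multiplied along `t ↦ qt` by `Λ²/Q` or `P/Λ²`. As `Λ` is `q`-periodic and a
fundamental annulus of the closure of `V` is a compact subset of `T`, both factors are bounded by
some `κ < 1` (`exists_contraction`), so the parameters tend to `0` geometrically
(`exists_radius`).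

The relation (E2) is a Möbius equation for `g`, and (E1) one for `f`, so `(x, y)` at `t` is an
explicit function of `(x, y)` at `qt` and of the parameters (`qpSys_of_step`). At zero parameters
this backward map sends `(x̄, ȳ)` to `(x̄³/ȳ², x̄²/ȳ)`; it fixes `(1, 1)` and is linear and
unipotent in logarithmic coordinates. Hence, in coordinates adapted to the Jordan block, its
Lipschitz constant near the fixed point is as close to `1` as desired (`psi_estimates`), in
particular less than `1/κ`. Iterating the backward map from `(1, 1)` then converges uniformly, in
a norm weighted by the size of the parameters, to a holomorphic solution, whose distance to
`(1, 1)` is bounded by a multiple of that size (`exists_backward_solution`).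
-/

open Filter

/-! ### A fixed point of a non-autonomous backward recursion -/

/-- A holomorphic solution of `w t = G t (w (q * t))`, obtained as the uniform limit of the
iterates started at `0`. The maps `G t` may expand distances by `L > 1`; this is compensated by
the weight `ρ`, which contracts by `κ` along `t ↦ q * t`. -/
lemma exists_backward_solution {E : Type*} [NormedAddCommGroup E] [NormedSpace ℂ E]
    [CompleteSpace E] (q : ℂ) (W : Set ℂ) (hW : IsOpen W) (hqW : ∀ t ∈ W, q * t ∈ W)
    (ρ : ℂ → ℝ) (G : ℂ → E → E) (L κ C R : ℝ) (hL : 0 ≤ L) (hκ : 0 ≤ κ) (hLκ : L * κ < 1)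
    (hC : 0 ≤ C) (hρ0 : ∀ t, 0 ≤ ρ t) (hρq : ∀ t ∈ W, ρ (q * t) ≤ κ * ρ t)
    (hball : ∀ t ∈ W, C / (1 - L * κ) * ρ t ≤ R)
    (h0 : ∀ t ∈ W, ‖G t 0‖ ≤ C * ρ t)
    (hLip : ∀ t ∈ W, ∀ w w' : E, ‖w‖ ≤ R → ‖w'‖ ≤ R → ‖G t w - G t w'‖ ≤ L * ‖w - w'‖)
    (hhol : ∀ w : ℂ → E, DifferentiableOn ℂ w W → (∀ t ∈ W, ‖w t‖ ≤ R) →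
      DifferentiableOn ℂ (fun t => G t (w t)) W) :
    ∃ w : ℂ → E, DifferentiableOn ℂ w W ∧ (∀ t ∈ W, ‖w t‖ ≤ C / (1 - L * κ) * ρ t) ∧
      ∀ t ∈ W, w t = G t (w (q * t)) := by
  set K := C / (1 - L * κ) with hK
  have hpos : 0 < 1 - L * κ := by linarith
  have hK0 : 0 ≤ K := div_nonneg hC hpos.le
  have hKeq : L * κ * K + C = K := by rw [hK]; field_simp; ring
  let u : ℕ → ℂ → E := fun n => Nat.rec (fun _ => 0) (fun _ v t => G t (v (q * t))) n
  have hu0 : ∀ t, u 0 t = 0 := fun t => rfl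
  have hus : ∀ n t, u (n + 1) t = G t (u n (q * t)) := fun n t => rfl
  have hR0 : ∀ t ∈ W, 0 ≤ R := fun t ht => le_trans (mul_nonneg hK0 (hρ0 t)) (hball t ht)
  have hbd : ∀ n, ∀ t ∈ W, ‖u n t‖ ≤ K * ρ t := by
    intro n
    induction n with
    | zero => intro t ht; rw [hu0, norm_zero]; exact mul_nonneg hK0 (hρ0 t)
    | succ n ih =>
      intro t ht
      have h1 := ih _ (hqW t ht)
      have h2 := hLip t ht (u n (q * t)) 0 (h1.trans (hball _ (hqW t ht)))
        (by rw [norm_zero]; exact hR0 t ht)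
      rw [sub_zero] at h2
      rw [hus]
      calc ‖G t (u n (q * t))‖ = ‖(G t (u n (q * t)) - G t 0) + G t 0‖ := by rw [sub_add_cancel]
        _ ≤ ‖G t (u n (q * t)) - G t 0‖ + ‖G t 0‖ := norm_add_le _ _
        _ ≤ L * (K * (κ * ρ t)) + C * ρ t := by
            refine add_le_add (h2.trans ?_) (h0 t ht)
            gcongr
            exact h1.trans (by gcongr; exact hρq t ht)
        _ = (L * κ * K + C) * ρ t := by ring
        _ = K * ρ t := by rw [hKeq]
  have hbdR : ∀ n, ∀ t ∈ W, ‖u n t‖ ≤ R := fun n t ht => (hbd n t ht).trans (hball t ht)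
  have hdiff : ∀ n, ∀ t ∈ W, ‖u n t - u (n + 1) t‖ ≤ K * ρ t * (L * κ) ^ n := by
    intro n
    induction n with
    | zero =>
      intro t ht
      rw [hu0, zero_sub, norm_neg, pow_zero, mul_one]
      exact hbd 1 t ht
    | succ n ih =>
      intro t ht
      have h1 := ih _ (hqW t ht)
      rw [hus n, hus (n + 1)]
      calc _ ≤ L * ‖u n (q * t) - u (n + 1) (q * t)‖ :=
            hLip t ht _ _ (hbdR n _ (hqW t ht)) (hbdR (n + 1) _ (hqW t ht))
        _ ≤ L * (K * (κ * ρ t) * (L * κ) ^ n) := by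
            gcongr
            exact h1.trans (by gcongr; exact hρq t ht)
        _ = K * ρ t * (L * κ) ^ (n + 1) := by ring
  have hhol' : ∀ n, DifferentiableOn ℂ (u n) W := by
    intro n
    induction n with
    | zero => exact differentiableOn_const (0 : E)
    | succ n ih =>
      refine hhol (fun t => u n (q * t)) ?_ (fun t ht => hbdR n _ (hqW t ht))
      exact ih.comp (by fun_prop) hqW
  have hLκ0 : 0 ≤ L * κ := mul_nonneg hL hκ
  have hlim : ∀ t ∈ W, ∃ l, Tendsto (fun n => u n t) atTop (nhds l) := fun t ht =>
    cauchySeq_tendsto_of_complete <| cauchySeq_of_le_geometric (L * κ) (K * ρ t) hLκ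
      (fun n => by rw [dist_eq_norm]; exact hdiff n t ht)
  choose! w hw using hlim
  have hunif : TendstoUniformlyOn u w atTop W := by
    rw [Metric.tendstoUniformlyOn_iff]
    intro ε hε
    have h1 : Tendsto (fun n : ℕ => R * (L * κ) ^ n / (1 - L * κ)) atTop (nhds 0) := by
      have := ((tendsto_pow_atTop_nhds_zero_of_lt_one hLκ0 hLκ).const_mul R).div_const (1 - L * κ)
      simpa using this
    filter_upwards [h1.eventually (gt_mem_nhds hε)] with n hn t ht
    rw [dist_comm]
    refine lt_of_le_of_lt (dist_le_of_le_geometric_of_tendsto (L * κ) (K * ρ t) hLκ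
      (fun n => by rw [dist_eq_norm]; exact hdiff n t ht) (hw t ht) n) (lt_of_le_of_lt ?_ hn)
    gcongr
    exact hball t ht
  have hwK : ∀ t ∈ W, ‖w t‖ ≤ K * ρ t := fun t ht =>
    le_of_tendsto (hw t ht).norm (Eventually.of_forall fun n => hbd n t ht)
  refine ⟨w, hunif.tendstoLocallyUniformlyOn.differentiableOn (Eventually.of_forall hhol') hW,
    hwK, fun t ht => ?_⟩
  have h1 : Tendsto (fun n => u (n + 1) t) atTop (nhds (w t)) :=
    (hw t ht).comp (tendsto_add_atTop_nat 1)
  have h2 : Tendsto (fun n => u (n + 1) t) atTop (nhds (G t (w (q * t)))) := by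
    rw [tendsto_iff_norm_sub_tendsto_zero]
    have h3 := (tendsto_iff_norm_sub_tendsto_zero.1 (hw _ (hqW t ht))).const_mul L
    rw [mul_zero] at h3
    refine squeeze_zero (fun _ => norm_nonneg _) (fun n => ?_) h3
    exact hLip t ht _ _ (hbdR _ _ (hqW t ht)) ((hwK _ (hqW t ht)).trans (hball _ (hqW t ht)))
  exact tendsto_nhds_unique h1 h2

/-! ### The rescaled system -/

/-- The Möbius solution of `(z * m - k) * c = (1 - l * (z * m)) * d` for `z`. -/
noncomputable def mobius (m k l c d : ℂ) : ℂ := (d + k * c) / (m * (c + l * d))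

lemma mobius_spec {m k l c d : ℂ} (h : m * (c + l * d) ≠ 0) :
    (mobius m k l c d * m - k) * c = (1 - l * (mobius m k l c d * m)) * d := by
  have hm : m ≠ 0 := left_ne_zero_of_mul h
  have hc : c + l * d ≠ 0 := right_ne_zero_of_mul h
  have : mobius m k l c d * m = (d + k * c) / (c + l * d) := by
    unfold mobius; field_simp
  have h2 : mobius m k l c d * m * (c + l * d) = d + k * c := by
    rw [this, div_mul_cancel₀ _ hc]
  linear_combination h2

/-- The factor of the rescaled (E2) multiplying `X * y - p₅p₆`. -/
noncomputable def c₂ (b p : Fin 8 → ℂ) (X Y : ℂ) : ℂ :=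
  (X * Y - p 6 * p 7) *
    ((1 - b 4 * p 2 * X) * (1 - b 5 * p 2 * X) * (1 - b 6 * p 2 * X) * (1 - b 7 * p 2 * X))

/-- The factor of the rescaled (E2) multiplying `1 - p₁p₂ * X * y`. -/
noncomputable def d₂ (b p : Fin 8 → ℂ) (X Y : ℂ) : ℂ :=
  (1 - p 2 * p 3 * (X * Y)) *
    ((X - p 6 / b 0) * (X - p 6 / b 1) * (X - p 6 / b 2) * (X - p 6 / b 3))

/-- The factor of the rescaled (E1) multiplying `x * y - p₄p₅`. -/
noncomputable def c₁ (b p : Fin 8 → ℂ) (X y : ℂ) : ℂ :=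
  (X * y - p 5 * p 6) *
    ((1 - p 1 * y / b 4) * (1 - p 1 * y / b 5) * (1 - p 1 * y / b 6) * (1 - p 1 * y / b 7))

/-- The factor of the rescaled (E1) multiplying `1 - p₀p₁ * x * y`. -/
noncomputable def d₁ (b p : Fin 8 → ℂ) (X y : ℂ) : ℂ :=
  (1 - p 1 * p 2 * (X * y)) *
    ((y - b 0 * p 5) * (y - b 1 * p 5) * (y - b 2 * p 5) * (y - b 3 * p 5))

/-- The rescaled `g` at `t` in terms of the rescaled `f̄ = X` and `ḡ = Y`. -/
noncomputable def stepY (b p : Fin 8 → ℂ) (X Y : ℂ) : ℂ :=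
  mobius X (p 5 * p 6) (p 1 * p 2) (c₂ b p X Y) (d₂ b p X Y)

/-- The rescaled `f` at `t` in terms of the rescaled `f̄ = X` and `g = y`. -/
noncomputable def stepX (b p : Fin 8 → ℂ) (X y : ℂ) : ℂ :=
  mobius y (p 4 * p 5) (p 0 * p 1) (c₁ b p X y) (d₁ b p X y)

/-- If the leading terms `p₀, p₁, p₂, p₃` of `f, g, f̄, ḡ` are balanced
(`p₀p₂b₅b₆b₇b₈ = p₁²`, `p₁p₃ = b₅b₆b₇b₈p₂²`), then one step of the backward map
solves both relations. -/
lemma qpSys_of_step (b p : Fin 8 → ℂ) (hb : ∀ i, b i ≠ 0) (q t X Y y x : ℂ)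
    (hy : y = stepY b p X Y) (hx : x = stepX b p X y)
    (hY0 : X * (c₂ b p X Y + p 1 * p 2 * d₂ b p X Y) ≠ 0)
    (hX0 : y * (c₁ b p X y + p 0 * p 1 * d₁ b p X y) ≠ 0)
    (h04 : t = p 0 * p 4) (h15 : t = p 1 * p 5) (h26 : q * t = p 2 * p 6)
    (h37 : q * t = p 3 * p 7)
    (hbal₁ : p 0 * p 2 * (b 4 * b 5 * b 6 * b 7) = p 1 ^ 2)
    (hbal₂ : p 1 * p 3 = b 4 * b 5 * b 6 * b 7 * p 2 ^ 2) :
    qpSys (b 0) (b 1) (b 2) (b 3) (b 4) (b 5) (b 6) (b 7) q t (p 0 * x) (p 1 * y)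
      (p 2 * X) (p 3 * Y) := by
  have e2 := mobius_spec hY0 (k := p 5 * p 6)
  have e1 := mobius_spec hX0 (k := p 4 * p 5)
  rw [← stepY, ← hy] at e2
  rw [← stepX, ← hx] at e1
  have tt : t ^ 2 = p 0 * p 4 * (p 1 * p 5) := by rw [← h04, ← h15]; ring
  have qtt : q * t ^ 2 = p 1 * p 5 * (p 2 * p 6) := by rw [← h15, ← h26]; ring
  have qqtt : q ^ 2 * t ^ 2 = p 2 * p 6 * (p 3 * p 7) := by rw [← h37, ← h26]; ring
  have i4 := hb 4
  have i5 := hb 5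
  have i6 := hb 6
  have i7 := hb 7
  constructor
  · rw [qtt, tt, h15]
    have hA : ∀ i, b i ≠ 0 → p 1 * y - b i = -b i * (1 - p 1 * y / b i) := by
      intro i hi; field_simp; ring
    rw [hA 4 i4, hA 5 i5, hA 6 i6, hA 7 i7]
    unfold c₁ d₁ at e1
    generalize 1 - p 1 * y / b 4 = a4 at *
    generalize 1 - p 1 * y / b 5 = a5 at *
    generalize 1 - p 1 * y / b 6 = a6 at *
    generalize 1 - p 1 * y / b 7 = a7 at *
    linear_combination (p 1 ^ 4) * e1 +
      (x * y - p 4 * p 5) * (X * y - p 5 * p 6) * (a4 * a5 * a6 * a7) * p 1 ^ 2 * hbal₁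
  · rw [qtt, qqtt, h26]
    have hA : ∀ i, b i ≠ 0 → p 2 * X - (b i)⁻¹ = -(b i)⁻¹ * (1 - b i * p 2 * X) := by
      intro i hi; field_simp; ring
    have hB : ∀ i, p 2 * X - p 2 * p 6 / b i = p 2 * (X - p 6 / b i) := by
      intro i; ring
    rw [hA 4 i4, hA 5 i5, hA 6 i6, hA 7 i7, hB, hB, hB, hB]
    have hbal₃ : p 1 * p 3 * ((b 4)⁻¹ * (b 5)⁻¹ * (b 6)⁻¹ * (b 7)⁻¹) = p 2 ^ 2 := by
      rw [hbal₂]; field_simp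
    unfold c₂ d₂ at e2
    generalize 1 - b 4 * p 2 * X = a4 at *
    generalize 1 - b 5 * p 2 * X = a5 at *
    generalize 1 - b 6 * p 2 * X = a6 at *
    generalize 1 - b 7 * p 2 * X = a7 at *
    generalize p 6 / b 0 = z0 at *
    generalize p 6 / b 1 = z1 at *
    generalize p 6 / b 2 = z2 at *
    generalize p 6 / b 3 = z3 at *
    linear_combination (p 2 ^ 4) * e2 +
      (X * y - p 5 * p 6) * (X * Y - p 6 * p 7) * (a4 * a5 * a6 * a7) * p 2 ^ 2 * hbal₃

/-! ### Linearization of the backward map -/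

/-- The backward map in the coordinates `(α, β)` with `f = p₀ (1 + β) (1 + δ α)` and
`g = p₁ (1 + β)`. The unperturbed map is `(α, β) ↦ (α, (1 + δ α)² (1 + β) - 1)`, whose linear part
is unipotent, and a small `δ` brings its norm close to `1`. -/
noncomputable def psi (b : Fin 8 → ℂ) (δ : ℝ) (z : (Fin 8 → ℂ) × (ℂ × ℂ)) : ℂ × ℂ :=
  ((stepX b z.1 ((1 + z.2.2) * (1 + δ * z.2.1))
      (stepY b z.1 ((1 + z.2.2) * (1 + δ * z.2.1)) (1 + z.2.2)) /
      stepY b z.1 ((1 + z.2.2) * (1 + δ * z.2.1)) (1 + z.2.2) - 1) / δ,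
    stepY b z.1 ((1 + z.2.2) * (1 + δ * z.2.1)) (1 + z.2.2) - 1)

lemma stepY_zero (b : Fin 8 → ℂ) (X Y : ℂ) (hX : X ≠ 0) (hY : Y ≠ 0) :
    stepY b 0 X Y = X ^ 2 / Y := by
  simp [stepY, mobius, c₂, d₂]; field_simp

lemma stepX_zero (b : Fin 8 → ℂ) (X y : ℂ) (hX : X ≠ 0) (hy : y ≠ 0) :
    stepX b 0 X y = y ^ 2 / X := by
  simp [stepX, mobius, c₁, d₁]; field_simp

lemma psi_zero (b : Fin 8 → ℂ) {δ : ℝ} (hδ : 0 < δ) (w : ℂ × ℂ)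
    (h1 : 1 + w.2 ≠ 0) (h2 : 1 + δ * w.1 ≠ 0) :
    psi b δ (0, w) = (w.1, (1 + δ * w.1) ^ 2 * (1 + w.2) - 1) := by
  have hδ' : (δ : ℂ) ≠ 0 := by exact_mod_cast hδ.ne'
  have hX : (1 + w.2) * (1 + δ * w.1) ≠ 0 := mul_ne_zero h1 h2
  have hy : ((1 + w.2) * (1 + δ * w.1)) ^ 2 / (1 + w.2) ≠ 0 := div_ne_zero (pow_ne_zero 2 hX) h1
  simp only [psi]
  rw [stepY_zero b _ _ hX h1, stepX_zero b _ _ hX hy]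
  ext
  · field_simp; ring
  · field_simp

/-- Non-vanishing of the denominators occurring in one backward step from `(X, Y)`. -/
def StepOK (b : Fin 8 → ℂ) (p : Fin 8 → ℂ) (X Y : ℂ) : Prop :=
  X * (c₂ b p X Y + p 1 * p 2 * d₂ b p X Y) ≠ 0 ∧ stepY b p X Y ≠ 0 ∧
    stepY b p X Y * (c₁ b p X (stepY b p X Y) + p 0 * p 1 * d₁ b p X (stepY b p X Y)) ≠ 0

lemma psi_regular (b : Fin 8 → ℂ) {δ : ℝ} (hδ : 0 < δ) :
    ContDiffAt ℂ 1 (psi b δ) 0 ∧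
      ∀ᶠ z : (Fin 8 → ℂ) × (ℂ × ℂ) in nhds 0,
        StepOK b z.1 ((1 + z.2.2) * (1 + δ * z.2.1)) (1 + z.2.2) := by
  have hδ' : (δ : ℂ) ≠ 0 := by exact_mod_cast hδ.ne'
  let X : (Fin 8 → ℂ) × (ℂ × ℂ) → ℂ := fun z => (1 + z.2.2) * (1 + δ * z.2.1)
  let Y : (Fin 8 → ℂ) × (ℂ × ℂ) → ℂ := fun z => 1 + z.2.2
  have cp : ∀ i, ContDiff ℂ 1 (fun z : (Fin 8 → ℂ) × (ℂ × ℂ) => z.1 i) := fun i => by fun_prop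
  have cX : ContDiff ℂ 1 X := by fun_prop
  have cY : ContDiff ℂ 1 Y := by fun_prop
  have cc₂ : ContDiff ℂ 1 (fun z => c₂ b z.1 (X z) (Y z)) := by unfold c₂; fun_prop
  have cd₂ : ContDiff ℂ 1 (fun z => d₂ b z.1 (X z) (Y z)) := by
    unfold d₂; simp only [div_eq_mul_inv]; fun_prop
  let D₂ : (Fin 8 → ℂ) × (ℂ × ℂ) → ℂ := fun z =>
    X z * (c₂ b z.1 (X z) (Y z) + z.1 1 * z.1 2 * d₂ b z.1 (X z) (Y z))
  have cD₂ : ContDiff ℂ 1 D₂ := by fun_prop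
  have D₂0 : D₂ 0 ≠ 0 := by simp [D₂, X, Y, c₂]
  let y : (Fin 8 → ℂ) × (ℂ × ℂ) → ℂ := fun z => stepY b z.1 (X z) (Y z)
  have cy : ContDiffAt ℂ 1 y 0 := by
    refine ContDiffAt.div (ContDiff.contDiffAt ?_) cD₂.contDiffAt D₂0
    fun_prop
  have y0 : y 0 = 1 := by
    have := stepY_zero b 1 1 one_ne_zero one_ne_zero
    simpa [y, X, Y] using this
  have cc₁ : ContDiffAt ℂ 1 (fun z => c₁ b z.1 (X z) (y z)) 0 := by
    unfold c₁; simp only [div_eq_mul_inv]; fun_prop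
  have cd₁ : ContDiffAt ℂ 1 (fun z => d₁ b z.1 (X z) (y z)) 0 := by unfold d₁; fun_prop
  let D₁ : (Fin 8 → ℂ) × (ℂ × ℂ) → ℂ := fun z =>
    y z * (c₁ b z.1 (X z) (y z) + z.1 0 * z.1 1 * d₁ b z.1 (X z) (y z))
  have cD₁ : ContDiffAt ℂ 1 D₁ 0 := by fun_prop
  have D₁0 : D₁ 0 ≠ 0 := by simp [D₁, y0, X, c₁]
  have cx : ContDiffAt ℂ 1 (fun z => stepX b z.1 (X z) (y z)) 0 := by
    refine ContDiffAt.div ?_ cD₁ D₁0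
    fun_prop
  have y0' : y 0 ≠ 0 := by rw [y0]; exact one_ne_zero
  refine ⟨?_, ?_⟩
  · refine ContDiffAt.prodMk ?_ (cy.sub contDiffAt_const)
    exact ((cx.div cy y0').sub contDiffAt_const).div_const _
  · filter_upwards [cD₂.continuous.continuousAt.eventually_ne D₂0, cy.continuousAt.eventually_ne y0',
      cD₁.continuousAt.eventually_ne D₁0] with z h1 h2 h3
    exact ⟨h1, h2, h3⟩

/-- Near the origin the backward map is Lipschitz in the unknowns with a constant as close to
`1 + 2 * δ` as desired, and moves the origin by at most a multiple of the perturbation `p`. -/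
lemma psi_estimates (b : Fin 8 → ℂ) {δ : ℝ} (hδ : 0 < δ) :
    ∃ R > 0, ∃ C ≥ 0,
      (∀ p : Fin 8 → ℂ, ‖p‖ ≤ R → ‖psi b δ (p, 0)‖ ≤ C * ‖p‖) ∧
      ∀ p : Fin 8 → ℂ, ‖p‖ ≤ R → ∀ w : ℂ × ℂ, ‖w‖ ≤ R →
        DifferentiableAt ℂ (psi b δ) (p, w) ∧
        StepOK b p ((1 + w.2) * (1 + δ * w.1)) (1 + w.2) ∧
        ∀ w' : ℂ × ℂ, ‖w'‖ ≤ R →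
          ‖psi b δ (p, w) - psi b δ (p, w')‖ ≤ (1 + 3 * δ) * ‖w - w'‖ := by
  obtain ⟨hC, hOK⟩ := psi_regular b hδ
  have hval : psi b δ 0 = 0 := by
    have := psi_zero b hδ 0 (by simp) (by simp)
    simpa [← Prod.zero_eq_mk] using this
  have hs := hC.hasStrictFDerivAt one_ne_zero
  set A := fderiv ℂ (psi b δ) 0 with hA
  -- the linear part in the unknowns is that of the unperturbed map
  have hAw : ∀ w : ℂ × ℂ, A (0, w) = (w.1, 2 * δ * w.1 + w.2) := by
    have h1 : HasFDerivAt (fun w : ℂ × ℂ => psi b δ ((0 : Fin 8 → ℂ), w))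
        (A.comp (ContinuousLinearMap.inr ℂ (Fin 8 → ℂ) (ℂ × ℂ))) 0 :=
      HasFDerivAt.comp (0 : ℂ × ℂ) (g := psi b δ) hs.hasFDerivAt
        (ContinuousLinearMap.inr ℂ (Fin 8 → ℂ) (ℂ × ℂ)).hasFDerivAt
    have e1 : ∀ᶠ w : ℂ × ℂ in nhds 0, 1 + w.2 ≠ 0 :=
      ContinuousAt.eventually_ne (by fun_prop) (by simp)
    have e2 : ∀ᶠ w : ℂ × ℂ in nhds 0, 1 + δ * w.1 ≠ 0 :=
      ContinuousAt.eventually_ne (by fun_prop) (by simp)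
    have h2 : HasFDerivAt (fun w : ℂ × ℂ => (w.1, (1 + (δ : ℂ) * w.1) ^ 2 * (1 + w.2) - 1))
        (A.comp (ContinuousLinearMap.inr ℂ (Fin 8 → ℂ) (ℂ × ℂ))) 0 := by
      refine h1.congr_of_eventuallyEq ?_
      filter_upwards [e1, e2] with w hw1 hw2
      exact (psi_zero b hδ w hw1 hw2).symm
    intro w
    -- derivative at `s = 0` along the line `s ↦ s • w`
    have h3 : HasDerivAt (fun s : ℂ => s • w) w 0 := by
      simpa using (hasDerivAt_id (0 : ℂ)).smul_const w
    have h4 := HasFDerivAt.comp_hasDerivAt (0 : ℂ) (by simpa using h2) h3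
    have hl : HasDerivAt (fun s : ℂ => s * w.1) w.1 0 := by
      simpa using (hasDerivAt_id (0 : ℂ)).mul_const w.1
    have hl2 : HasDerivAt (fun s : ℂ => s * w.2) w.2 0 := by
      simpa using (hasDerivAt_id (0 : ℂ)).mul_const w.2
    have h5 := hl.prodMk
      (((((hl.const_mul (δ : ℂ)).const_add 1).pow 2).mul (hl2.const_add 1)).sub_const 1)
    have h6 := h4.unique h5
    simp at h6
    rw [h6]; ext
    · rfl
    · simp; ring
  have hAn : ∀ w : ℂ × ℂ, ‖A (0, w)‖ ≤ (1 + 2 * δ) * ‖w‖ := by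
    intro w
    rw [hAw]
    have hw1 : ‖w.1‖ ≤ ‖w‖ := norm_fst_le w
    have hw2 : ‖w.2‖ ≤ ‖w‖ := norm_snd_le w
    refine max_le ?_ ?_
    · change ‖w.1‖ ≤ _
      nlinarith [norm_nonneg w]
    · change ‖2 * (δ : ℂ) * w.1 + w.2‖ ≤ _
      calc _ ≤ ‖2 * (δ : ℂ) * w.1‖ + ‖w.2‖ := norm_add_le _ _
        _ = 2 * δ * ‖w.1‖ + ‖w.2‖ := by simp [abs_of_pos hδ]
        _ ≤ 2 * δ * ‖w‖ + ‖w‖ := by gcongr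
        _ = _ := by ring
  have hlo := hs.isLittleO.def hδ
  have hdiff : ∀ᶠ z in nhds (0 : (Fin 8 → ℂ) × (ℂ × ℂ)), DifferentiableAt ℂ (psi b δ) z := by
    filter_upwards [hC.eventually (by simp)] with z hz
    exact hz.differentiableAt one_ne_zero
  rw [nhds_prod_eq] at hlo
  obtain ⟨U, hU, hUlo⟩ := Filter.eventually_prod_self_iff'.1 hlo
  obtain ⟨ε, hε, hball⟩ := Metric.nhds_basis_closedBall.eventually_iff.1
    ((hdiff.and hOK).and hU)
  have hmem : ∀ p : Fin 8 → ℂ, ‖p‖ ≤ ε → ∀ w : ℂ × ℂ, ‖w‖ ≤ ε →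
      (p, w) ∈ Metric.closedBall (0 : (Fin 8 → ℂ) × (ℂ × ℂ)) ε := by
    intro p hp w hw
    rw [mem_closedBall_zero_iff]
    exact max_le hp hw
  refine ⟨ε, hε, ‖A‖ + δ, by positivity, ?_, ?_⟩
  · intro p hp
    have h1 := hUlo (p, 0) (hball (hmem p hp 0 (by simpa using hε.le))).2 (0, 0)
      (hball (hmem 0 (by simpa using hε.le) 0 (by simpa using hε.le))).2
    simp only [← Prod.zero_eq_mk, hval, sub_zero] at h1
    have hn : ‖((p, 0) : (Fin 8 → ℂ) × (ℂ × ℂ))‖ = ‖p‖ := by simp [Prod.norm_def]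
    have h2 := A.le_opNorm (p, 0)
    rw [hn] at h1 h2
    calc _ = ‖(psi b δ (p, 0) - A (p, 0)) + A (p, 0)‖ := by rw [sub_add_cancel]
      _ ≤ _ := norm_add_le _ _
      _ ≤ δ * ‖p‖ + ‖A‖ * ‖p‖ := add_le_add h1 h2
      _ = _ := by ring
  · intro p hp w hw
    have hw0 := hball (hmem p hp w hw)
    refine ⟨hw0.1.1, hw0.1.2, fun w' hw' => ?_⟩
    have h1 := hUlo _ hw0.2 _ (hball (hmem p hp w' hw')).2
    have hsub : ((p, w) : (Fin 8 → ℂ) × (ℂ × ℂ)) - (p, w') = (0, w - w') := by simp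
    have hn : ‖((0, w - w') : (Fin 8 → ℂ) × (ℂ × ℂ))‖ = ‖w - w'‖ := by simp [Prod.norm_def]
    simp only [hsub, hn] at h1
    calc _ = ‖(psi b δ (p, w) - psi b δ (p, w') - A (0, w - w')) + A (0, w - w')‖ := by
          rw [sub_add_cancel]
      _ ≤ _ := norm_add_le _ _
      _ ≤ δ * ‖w - w'‖ + (1 + 2 * δ) * ‖w - w'‖ := add_le_add h1 (hAn _)
      _ = _ := by ring

/-! ### Decay of the perturbation along `t ↦ q * t` -/

/-- A point of a `q`-invariant set in the unit disc is an iterate of a point of the set lying in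
the fundamental annulus `‖q‖ ≤ ‖k‖ ≤ 1`. -/
lemma exists_annulus_rep {q : ℂ} (hq0 : q ≠ 0) (hq : ‖q‖ < 1) {V : Set ℂ}
    (hV : (fun t => q * t) '' V = V) {t : ℂ} (ht : t ∈ V) (ht0 : t ≠ 0) (ht1 : ‖t‖ ≤ 1) :
    ∃ n : ℕ, ∃ k ∈ V, ‖q‖ ≤ ‖k‖ ∧ ‖k‖ ≤ 1 ∧ t = q ^ n * k ∧ ‖q‖ ^ (n + 1) < ‖t‖ := by
  have hqn : 0 < ‖q‖ := norm_pos_iff.2 hq0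
  obtain ⟨n, hn1, hn2⟩ := exists_nat_pow_near_of_lt_one (norm_pos_iff.2 ht0) ht1 hqn hq
  have hinv : ∀ n : ℕ, ∃ k ∈ V, t = q ^ n * k := by
    intro n
    induction n with
    | zero => exact ⟨t, ht, by simp⟩
    | succ n ih =>
      obtain ⟨k, hk, rfl⟩ := ih
      rw [← hV] at hk
      obtain ⟨k', hk', rfl⟩ := hk
      exact ⟨k', hk', by ring⟩
  obtain ⟨k, hk, rfl⟩ := hinv n
  have hpn : 0 < ‖q‖ ^ n := pow_pos hqn n
  have hnorm : ‖q ^ n * k‖ = ‖q‖ ^ n * ‖k‖ := by rw [norm_mul, norm_pow]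
  refine ⟨n, k, hk, ?_, ?_, rfl, hn1⟩
  · rw [hnorm, pow_succ] at hn1
    exact (lt_of_mul_lt_mul_left hn1 hpn.le).le
  · rw [hnorm] at hn2
    exact le_of_mul_le_mul_left (by simpa using hn2) hpn

lemma isCompact_annulus (q : ℂ) (V : Set ℂ) :
    IsCompact (closure V ∩ {t : ℂ | ‖q‖ ≤ ‖t‖ ∧ ‖t‖ ≤ 1}) := by
  refine (isCompact_closedBall (0 : ℂ) 1).of_isClosed_subset ?_ ?_
  · refine isClosed_closure.inter (IsClosed.inter ?_ ?_)
    · exact isClosed_le continuous_const continuous_norm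
    · exact isClosed_le continuous_norm continuous_const
  · rintro t ⟨-, -, ht⟩
    simpa using ht

/-- If a continuous `p` contracts by `κ < 1` along `t ↦ q * t`, it tends to `0` uniformly at the
origin, because it is bounded on a compact fundamental annulus. -/
lemma exists_radius {E : Type*} [NormedAddCommGroup E] {q : ℂ} (hq0 : q ≠ 0) (hq : ‖q‖ < 1)
    {T V : Set ℂ} (hT0 : ∀ t ∈ T, t ≠ 0) (hVT : V ⊆ T) (hV : (fun t => q * t) '' V = V)
    (hcl : closure V ∩ {t : ℂ | t ≠ 0} ⊆ T) (p : ℂ → E) (hp : ContinuousOn p T)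
    {κ : ℝ} (hκ0 : 0 ≤ κ) (hκ1 : κ < 1)
    (hpq : ∀ t ∈ V, ‖t‖ ≤ 1 → ‖p (q * t)‖ ≤ κ * ‖p t‖) {ε : ℝ} (hε : 0 < ε) :
    ∃ r > 0, r ≤ 1 ∧ ∀ t ∈ V, ‖t‖ < r → ‖p t‖ ≤ ε := by
  have hqn : 0 < ‖q‖ := norm_pos_iff.2 hq0
  have hqV : ∀ t ∈ V, q * t ∈ V := fun t ht => hV ▸ Set.mem_image_of_mem _ ht
  obtain ⟨M, hM⟩ := (isCompact_annulus q V).exists_bound_of_continuousOn (hp.mono (by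
    rintro t ⟨h1, h2, -⟩
    exact hcl ⟨h1, norm_pos_iff.1 (hqn.trans_le h2)⟩))
  have hiter : ∀ k ∈ V, ‖k‖ ≤ 1 → ∀ n : ℕ, q ^ n * k ∈ V ∧ ‖q ^ n * k‖ ≤ 1 ∧
      ‖p (q ^ n * k)‖ ≤ κ ^ n * ‖p k‖ := by
    intro k hk hk1 n
    induction n with
    | zero => simpa using ⟨hk, hk1⟩
    | succ n ih =>
      obtain ⟨h1, h2, h3⟩ := ih
      have e : q ^ (n + 1) * k = q * (q ^ n * k) := by ring
      rw [e]
      refine ⟨hqV _ h1, ?_, ?_⟩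
      · rw [norm_mul]; exact mul_le_one₀ hq.le (norm_nonneg _) h2
      · calc _ ≤ κ * ‖p (q ^ n * k)‖ := hpq _ h1 h2
          _ ≤ κ * (κ ^ n * ‖p k‖) := by gcongr
          _ = _ := by ring
  have hlim : Tendsto (fun n : ℕ => κ ^ n * M) atTop (nhds 0) := by
    simpa using (tendsto_pow_atTop_nhds_zero_of_lt_one hκ0 hκ1).mul_const M
  obtain ⟨N, hN⟩ := Filter.eventually_atTop.1 (hlim.eventually (gt_mem_nhds hε))
  refine ⟨‖q‖ ^ N, pow_pos hqn N, pow_le_one₀ hqn.le hq.le, fun t ht htr => ?_⟩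
  have ht1 : ‖t‖ ≤ 1 := htr.le.trans (pow_le_one₀ hqn.le hq.le)
  obtain ⟨n, k, hk, hk1, hk2, rfl, hn⟩ := exists_annulus_rep hq0 hq hV ht (hT0 t (hVT ht)) ht1
  have hnN : N ≤ n :=
    Nat.lt_succ_iff.1 ((pow_lt_pow_iff_right_of_lt_one₀ hqn hq).1 (hn.trans htr))
  calc _ ≤ κ ^ n * ‖p k‖ := (hiter k hk hk2 n).2.2
    _ ≤ κ ^ n * M := by
        gcongr
        exact hM k ⟨subset_closure hk, hk1, hk2⟩
    _ ≤ ε := (hN n hnN).le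

/-! ### The perturbation parameters -/

/-- The small parameters: the leading terms of `f, g, f̄, ḡ`, followed by the quotients of
`t, t, q t, q t` by these leading terms. Here `P = b₁b₂b₃b₄` and `Q = b₅b₆b₇b₈`. -/
noncomputable def params (P Q : ℂ) (Λ φ : ℂ → ℂ) (t : ℂ) : Fin 8 → ℂ :=
  ![t * φ t, t * φ t * Λ t, t * φ t * Λ t ^ 2 / Q, t * φ t * Λ t ^ 3 / Q,
    1 / φ t, 1 / (φ t * Λ t), P / (φ t * Λ t ^ 2), P / (φ t * Λ t ^ 3)]

lemma params_differentiableOn {P Q : ℂ} {Λ φ : ℂ → ℂ} {T : Set ℂ}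
    (hΛ : DifferentiableOn ℂ Λ T) (hφ : DifferentiableOn ℂ φ T) (hΛ0 : ∀ t ∈ T, Λ t ≠ 0)
    (hφ0 : ∀ t ∈ T, φ t ≠ 0) : DifferentiableOn ℂ (params P Q Λ φ) T := by
  have h2 : ∀ t ∈ T, φ t * Λ t ≠ 0 := fun t ht => mul_ne_zero (hφ0 t ht) (hΛ0 t ht)
  have h3 : ∀ t ∈ T, φ t * Λ t ^ 2 ≠ 0 := fun t ht =>
    mul_ne_zero (hφ0 t ht) (pow_ne_zero 2 (hΛ0 t ht))
  have h4 : ∀ t ∈ T, φ t * Λ t ^ 3 ≠ 0 := fun t ht =>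
    mul_ne_zero (hφ0 t ht) (pow_ne_zero 3 (hΛ0 t ht))
  have hid : DifferentiableOn ℂ (fun t : ℂ => t) T := differentiableOn_id
  rw [differentiableOn_pi]
  intro i
  fin_cases i
  · exact hid.mul hφ
  · exact (hid.mul hφ).mul hΛ
  · exact ((hid.mul hφ).mul (hΛ.pow 2)).div_const _
  · exact ((hid.mul hφ).mul (hΛ.pow 3)).div_const _
  · exact (differentiableOn_const 1).div hφ hφ0
  · exact (differentiableOn_const 1).div (hφ.mul hΛ) h2
  · exact (differentiableOn_const P).div (hφ.mul (hΛ.pow 2)) h3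
  · exact (differentiableOn_const P).div (hφ.mul (hΛ.pow 3)) h4

/-- The first four parameters are multiplied by `Λ² / Q` and the last four by `P / Λ²` under
`t ↦ q * t`. -/
lemma norm_params_le {P Q q : ℂ} (hP : P ≠ 0) (hQ : Q ≠ 0) (hq : q = P / Q) {Λ φ : ℂ → ℂ} {t : ℂ}
    (hΛ : Λ (q * t) = Λ t) (hφ : φ (q * t) = Λ t ^ 2 / P * φ t) (hΛ0 : Λ t ≠ 0) (hφ0 : φ t ≠ 0)
    {κ : ℝ} (h1 : ‖Λ t ^ 2 / Q‖ ≤ κ) (h2 : ‖P / Λ t ^ 2‖ ≤ κ) :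
    ‖params P Q Λ φ (q * t)‖ ≤ κ * ‖params P Q Λ φ t‖ := by
  have hκ : 0 ≤ κ := (norm_nonneg _).trans h1
  rw [pi_norm_le_iff_of_nonneg (by positivity)]
  have key : ∀ i, ‖params P Q Λ φ (q * t) i‖ ≤ κ * ‖params P Q Λ φ t i‖ := by
    have up : ∀ u v : ℂ, u = Λ t ^ 2 / Q * v → ‖u‖ ≤ κ * ‖v‖ := by
      rintro u v rfl
      rw [norm_mul]; gcongr
    have dn : ∀ u v : ℂ, u = P / Λ t ^ 2 * v → ‖u‖ ≤ κ * ‖v‖ := by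
      rintro u v rfl
      rw [norm_mul]; gcongr
    intro i
    fin_cases i
    · apply up; simp [params, hΛ, hφ]; rw [hq]; field_simp
    · apply up; simp [params, hΛ, hφ]; rw [hq]; field_simp
    · apply up; simp [params, hΛ, hφ]; rw [hq]; field_simp
    · apply up; simp [params, hΛ, hφ]; rw [hq]; field_simp
    · apply dn; simp [params, hφ, mul_comm]
    · apply dn; simp [params, hΛ, hφ]; field_simp
    · apply dn; simp [params, hΛ, hφ]; field_simp
    · apply dn; simp [params, hΛ, hφ]; field_simp
  exact fun i => (key i).trans (by gcongr; exact norm_le_pi_norm _ i)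

/-- A uniform contraction factor for the parameters, from compactness of the annulus. -/
lemma exists_contraction {P Q q : ℂ} (hQ : Q ≠ 0) (hq0 : q ≠ 0) (hqlt : ‖q‖ < 1)
    {T V : Set ℂ} (hT0 : ∀ t ∈ T, t ≠ 0) (hVT : V ⊆ T) (hV : (fun t => q * t) '' V = V)
    (hcl : closure V ∩ {t : ℂ | t ≠ 0} ⊆ T) {Λ : ℂ → ℂ} (hΛ : ContinuousOn Λ T)
    (hΛper : ∀ t ∈ T, Λ (q * t) = Λ t) (hΛ0 : ∀ t ∈ T, Λ t ≠ 0)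
    (hbd : ∀ t ∈ T, ‖P‖ < ‖Λ t‖ ^ 2 ∧ ‖Λ t‖ ^ 2 < ‖Q‖) :
    ∃ κ : ℝ, 0 ≤ κ ∧ κ < 1 ∧ ∀ t ∈ V, ‖t‖ ≤ 1 → ‖Λ t ^ 2 / Q‖ ≤ κ ∧ ‖P / Λ t ^ 2‖ ≤ κ := by
  have hqn : 0 < ‖q‖ := norm_pos_iff.2 hq0
  have hqV : ∀ t ∈ V, q * t ∈ V := fun t ht => hV ▸ Set.mem_image_of_mem _ ht
  have hKT : closure V ∩ {t : ℂ | ‖q‖ ≤ ‖t‖ ∧ ‖t‖ ≤ 1} ⊆ T := by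
    rintro t ⟨h1, h2, -⟩
    exact hcl ⟨h1, norm_pos_iff.1 (hqn.trans_le h2)⟩
  have hcont : ContinuousOn (fun t => max ‖Λ t ^ 2 / Q‖ ‖P / Λ t ^ 2‖) T :=
    ((hΛ.pow 2).div_const Q).norm.sup
      ((continuousOn_const.div (hΛ.pow 2) (fun t ht => pow_ne_zero 2 (hΛ0 t ht))).norm)
  have hlt : ∀ t ∈ T, max ‖Λ t ^ 2 / Q‖ ‖P / Λ t ^ 2‖ < 1 := by
    intro t ht
    have h2 : 0 < ‖Λ t‖ ^ 2 := pow_pos (norm_pos_iff.2 (hΛ0 t ht)) 2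
    refine max_lt ?_ ?_
    · rw [norm_div, norm_pow, div_lt_one (norm_pos_iff.2 hQ)]; exact (hbd t ht).2
    · rw [norm_div, norm_pow, div_lt_one h2]; exact (hbd t ht).1
  obtain ⟨κ, hκ1, hκ⟩ : ∃ κ < (1 : ℝ), ∀ t ∈ closure V ∩ {t : ℂ | ‖q‖ ≤ ‖t‖ ∧ ‖t‖ ≤ 1},
      max ‖Λ t ^ 2 / Q‖ ‖P / Λ t ^ 2‖ ≤ κ := by
    obtain ⟨a, ha, hle⟩ := (isCompact_annulus q V).exists_forall_le' (hcont.mono hKT).neg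
      (a := -1) (fun t ht => neg_lt_neg (hlt t (hKT ht)))
    exact ⟨-a, by linarith, fun t ht => le_neg_of_le_neg (hle t ht)⟩
  refine ⟨max κ 0, le_max_right _ _, max_lt hκ1 one_pos, fun t ht ht1 => ?_⟩
  obtain ⟨n, k, hk, hk1, hk2, rfl, -⟩ := exists_annulus_rep hq0 hqlt hV ht (hT0 t (hVT ht)) ht1
  have hper : ∀ n : ℕ, q ^ n * k ∈ V ∧ Λ (q ^ n * k) = Λ k := by
    intro n
    induction n with
    | zero => simpa using hk
    | succ n ih =>
      have e : q ^ (n + 1) * k = q * (q ^ n * k) := by ring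
      rw [e]
      exact ⟨hqV _ ih.1, (hΛper _ (hVT ih.1)).trans ih.2⟩
  rw [(hper n).2]
  have := (hκ k ⟨subset_closure hk, hk1, hk2⟩).trans (le_max_left κ 0)
  exact max_le_iff.1 this

/-! ### The solution -/

/-- The main result with the parameters `b₁, …, b₈` collected in a vector `b` (indexed from `0`)
and `P = b₁b₂b₃b₄`, `Q = b₅b₆b₇b₈`. -/
theorem stmt6_aux (b : Fin 8 → ℂ) (hb : ∀ i, b i ≠ 0) (P Q q : ℂ)
    (hPdef : P = b 0 * b 1 * b 2 * b 3) (hQdef : Q = b 4 * b 5 * b 6 * b 7)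
    (hq : q = P / Q) (hqlt : ‖q‖ < 1) (T : Set ℂ) (hT0 : ∀ t ∈ T, t ≠ 0)
    (Λ φ : ℂ → ℂ) (hΛhol : DifferentiableOn ℂ Λ T) (hΛper : ∀ t ∈ T, Λ (q * t) = Λ t)
    (hΛbd : ∀ t ∈ T, ‖P‖ < ‖Λ t‖ ^ 2 ∧ ‖Λ t‖ ^ 2 < ‖Q‖)
    (hφhol : DifferentiableOn ℂ φ T) (hφne : ∀ t ∈ T, φ t ≠ 0)
    (hφeq : ∀ t ∈ T, φ (q * t) = (Λ t ^ 2 / P) * φ t)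
    (V : Set ℂ) (hVo : IsOpen V) (hVT : V ⊆ T) (hV : (fun t => q * t) '' V = V)
    (hcl : closure V ∩ {t : ℂ | t ≠ 0} ⊆ T) :
    ∃ r > (0 : ℝ), ∃ f g : ℂ → ℂ, ∀ W : Set ℂ,
      W = V ∩ {t : ℂ | 0 < ‖t‖ ∧ ‖t‖ < r} →
      (∀ t ∈ W, q * t ∈ W) ∧
      DifferentiableOn ℂ f W ∧ DifferentiableOn ℂ g W ∧
      (∀ t ∈ W, qpSys (b 0) (b 1) (b 2) (b 3) (b 4) (b 5) (b 6) (b 7) q t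
        (f t) (g t) (f (q * t)) (g (q * t))) ∧
      Tendsto (fun t : ℂ => f t / (t * φ t)) (nhdsWithin 0 W) (nhds 1) ∧
      Tendsto (fun t : ℂ => g t / (t * Λ t * φ t)) (nhdsWithin 0 W) (nhds 1) := by
  have hP : P ≠ 0 := by
    rw [hPdef]; exact mul_ne_zero (mul_ne_zero (mul_ne_zero (hb 0) (hb 1)) (hb 2)) (hb 3)
  have hQ : Q ≠ 0 := by
    rw [hQdef]; exact mul_ne_zero (mul_ne_zero (mul_ne_zero (hb 4) (hb 5)) (hb 6)) (hb 7)
  have hq0 : q ≠ 0 := by rw [hq]; exact div_ne_zero hP hQ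
  have hΛ0 : ∀ t ∈ T, Λ t ≠ 0 := by
    intro t ht h
    have := (hΛbd t ht).1
    rw [h, norm_zero, zero_pow two_ne_zero] at this
    exact absurd this (not_lt.2 (norm_nonneg P))
  have hqV : ∀ t ∈ V, q * t ∈ V := fun t ht => hV ▸ Set.mem_image_of_mem _ ht
  obtain ⟨κ, hκ0, hκ1, hκ⟩ := exists_contraction hQ hq0 hqlt hT0 hVT hV hcl
    hΛhol.continuousOn hΛper hΛ0 hΛbd
  set p := params P Q Λ φ with hp
  have hpd : DifferentiableOn ℂ p T := params_differentiableOn hΛhol hφhol hΛ0 hφne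
  have hpq : ∀ t ∈ V, ‖t‖ ≤ 1 → ‖p (q * t)‖ ≤ κ * ‖p t‖ := fun t ht ht1 =>
    norm_params_le hP hQ hq (hΛper t (hVT ht)) (hφeq t (hVT ht)) (hΛ0 t (hVT ht))
      (hφne t (hVT ht)) (hκ t ht ht1).1 (hκ t ht ht1).2
  -- with this `δ` the Lipschitz constant `1 + 3 * δ` is compensated by `κ`
  obtain ⟨δ, hδdef⟩ : ∃ δ : ℝ, δ = (1 - κ) / 4 := ⟨_, rfl⟩
  have hδ : 0 < δ := by rw [hδdef]; linarith
  have hLκ : (1 + 3 * δ) * κ < 1 := by rw [hδdef]; nlinarith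
  obtain ⟨R, hR, C, hC, hpsi0, hpsi⟩ := psi_estimates b hδ
  set K := C / (1 - (1 + 3 * δ) * κ) with hK
  have hK0 : 0 ≤ K := div_nonneg hC (by linarith)
  obtain ⟨r, hr, hr1, hrp⟩ := exists_radius hq0 hqlt hT0 hVT hV hcl p hpd.continuousOn hκ0 hκ1 hpq
    (lt_min hR (div_pos hR (by linarith : 0 < K + 1)))
  let W : Set ℂ := V ∩ {t : ℂ | 0 < ‖t‖ ∧ ‖t‖ < r}
  have hWo : IsOpen W := by
    refine hVo.inter (IsOpen.inter ?_ ?_)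
    · exact isOpen_lt continuous_const continuous_norm
    · exact isOpen_lt continuous_norm continuous_const
  have hqW : ∀ t ∈ W, q * t ∈ W := by
    rintro t ⟨h1, h2, h3⟩
    refine ⟨hqV t h1, ?_, ?_⟩
    · rw [norm_mul]; exact mul_pos (norm_pos_iff.2 hq0) h2
    · rw [norm_mul]
      exact lt_of_le_of_lt (mul_le_of_le_one_left (norm_nonneg t) hqlt.le) h3
  have hWT : W ⊆ T := fun t ht => hVT ht.1
  have hpR : ∀ t ∈ W, ‖p t‖ ≤ R := fun t ht => (hrp t ht.1 ht.2.2).trans (min_le_left _ _)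
  have hKR : ∀ t ∈ W, K * ‖p t‖ ≤ R := by
    intro t ht
    have h1 := (hrp t ht.1 ht.2.2).trans (min_le_right _ _)
    rw [le_div_iff₀ (by linarith)] at h1
    nlinarith [norm_nonneg (p t)]
  obtain ⟨w, hwd, hwK, hweq⟩ := exists_backward_solution (E := ℂ × ℂ) q W hWo hqW
    (fun t => ‖p t‖) (fun t w => psi b δ (p t, w)) (1 + 3 * δ) κ C R (by linarith) hκ0 hLκ hC
    (fun t => norm_nonneg _) (fun t ht => hpq t ht.1 (ht.2.2.le.trans hr1)) hKR
    (fun t ht => hpsi0 _ (hpR t ht))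
    (fun t ht w w' hw hw' => (hpsi _ (hpR t ht) w hw).2.2 w' hw')
    (fun w hw hwR t ht => by
      have h1 := (hpsi _ (hpR t ht) (w t) (hwR t ht)).1
      exact DifferentiableAt.comp_differentiableWithinAt (g := psi b δ) t h1
        (((hpd.mono hWT) t ht).prodMk (hw t ht)))
  have hpd' : ∀ i, DifferentiableOn ℂ (fun t => p t i) W := fun i =>
    differentiableOn_pi.1 (hpd.mono hWT) i
  have hw1 : DifferentiableOn ℂ (fun t => (w t).1) W := hwd.fst
  have hw2 : DifferentiableOn ℂ (fun t => (w t).2) W := hwd.snd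
  -- `p`, hence also `w`, vanishes in the limit at the origin
  have hp0 : Tendsto (fun t => ‖p t‖) (nhdsWithin 0 W) (nhds 0) := by
    rw [Metric.tendsto_nhds]
    intro ε hε
    obtain ⟨r', hr', -, hrp'⟩ := exists_radius hq0 hqlt hT0 hVT hV hcl p hpd.continuousOn hκ0 hκ1
      hpq (half_pos hε)
    filter_upwards [self_mem_nhdsWithin,
      mem_nhdsWithin_of_mem_nhds (Metric.ball_mem_nhds (0 : ℂ) hr')] with t ht ht'
    have := hrp' t ht.1 (by simpa using ht')
    rw [Real.dist_eq, sub_zero, abs_norm]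
    linarith
  have hw0 : Tendsto w (nhdsWithin 0 W) (nhds 0) := by
    rw [tendsto_zero_iff_norm_tendsto_zero]
    refine squeeze_zero' (Eventually.of_forall fun t => norm_nonneg _)
      (g := fun t => K * ‖p t‖) ?_ (by simpa using hp0.const_mul K)
    filter_upwards [self_mem_nhdsWithin] with t ht using hwK t ht
  have ht1 : Tendsto (fun t => (w t).1) (nhdsWithin 0 W) (nhds 0) :=
    (continuous_fst.tendsto (0 : ℂ × ℂ)).comp hw0
  have ht2 : Tendsto (fun t => (w t).2) (nhdsWithin 0 W) (nhds 0) :=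
    (continuous_snd.tendsto (0 : ℂ × ℂ)).comp hw0
  refine ⟨r, hr, fun t => p t 0 * ((1 + (w t).2) * (1 + δ * (w t).1)),
    fun t => p t 1 * (1 + (w t).2), ?_⟩
  rintro _ rfl
  refine ⟨hqW, ?_, ?_, ?_, ?_, ?_⟩
  · exact (hpd' 0).mul ((hw2.const_add 1).mul ((hw1.const_mul _).const_add 1))
  · exact (hpd' 1).mul (hw2.const_add 1)
  · intro t ht
    have htT := hWT ht
    have hφt := hφne t htT
    have hΛt := hΛ0 t htT
    have e02 : p (q * t) 0 = p t 2 := by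
      simp [hp, params, hφeq t htT]; rw [hq]; field_simp
    have e13 : p (q * t) 1 = p t 3 := by
      simp [hp, params, hφeq t htT, hΛper t htT]; rw [hq]; field_simp
    have hwR : ‖w (q * t)‖ ≤ R := (hwK _ (hqW t ht)).trans (hKR _ (hqW t ht))
    obtain ⟨ok₁, ok₂, ok₃⟩ := (hpsi _ (hpR t ht) (w (q * t)) hwR).2.1
    have hδ' : (δ : ℂ) ≠ 0 := by exact_mod_cast hδ.ne'
    have hwt := hweq t ht
    have hwt1 := congrArg Prod.fst hwt
    have hwt2 := congrArg Prod.snd hwt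
    simp only [psi] at hwt1 hwt2
    simp only [e02, e13]
    set X := (1 + (w (q * t)).2) * (1 + δ * (w (q * t)).1)
    set Y := 1 + (w (q * t)).2
    have hy : 1 + (w t).2 = stepY b (p t) X Y := by rw [hwt2]; ring
    have hx : (1 + (w t).2) * (1 + δ * (w t).1) = stepX b (p t) X (1 + (w t).2) := by
      rw [← hy] at hwt1 ok₂
      rw [hwt1]; field_simp; ring
    rw [← hy] at ok₃
    refine qpSys_of_step b (p t) hb q t X Y _ _ hy hx ok₁ ok₃ ?_ ?_ ?_ ?_ ?_ ?_
    · simp [hp, params]; field_simp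
    · simp [hp, params]; field_simp
    · simp [hp, params, hq]; field_simp
    · simp [hp, params, hq]; field_simp
    · rw [← hQdef]; simp [hp, params]; field_simp
    · rw [← hQdef]; simp [hp, params]; field_simp
  · have hl : Tendsto (fun t => (1 + (w t).2) * (1 + (δ : ℂ) * (w t).1)) (nhdsWithin 0 W)
        (nhds 1) := by
      simpa using (ht2.const_add 1).mul ((ht1.const_mul (δ : ℂ)).const_add 1)
    refine hl.congr' ?_
    filter_upwards [self_mem_nhdsWithin] with t ht
    have h1 : t * φ t ≠ 0 := mul_ne_zero (hT0 t (hWT ht)) (hφne t (hWT ht))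
    change _ = t * φ t * _ / (t * φ t)
    rw [mul_div_cancel_left₀ _ h1]
  · have hl : Tendsto (fun t => 1 + (w t).2) (nhdsWithin 0 W) (nhds 1) := by
      simpa using ht2.const_add 1
    refine hl.congr' ?_
    filter_upwards [self_mem_nhdsWithin] with t ht
    have h1 : t * Λ t * φ t ≠ 0 :=
      mul_ne_zero (mul_ne_zero (hT0 t (hWT ht)) (hΛ0 t (hWT ht))) (hφne t (hWT ht))
    change _ = t * φ t * Λ t * _ / (t * Λ t * φ t)
    rw [mul_right_comm t (φ t), mul_div_cancel_left₀ _ h1]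

theorem stmt6 (b1 b2 b3 b4 b5 b6 b7 b8 q : ℂ)
    (hb1 : b1 ≠ 0) (hb2 : b2 ≠ 0) (hb3 : b3 ≠ 0) (hb4 : b4 ≠ 0)
    (hb5 : b5 ≠ 0) (hb6 : b6 ≠ 0) (hb7 : b7 ≠ 0) (hb8 : b8 ≠ 0)
    (hq : q = b1 * b2 * b3 * b4 / (b5 * b6 * b7 * b8)) (hqlt : ‖q‖ < 1)
    (T : Set ℂ) (hTne : T.Nonempty) (hTopen : IsOpen T) (hT0 : ∀ t ∈ T, t ≠ 0)
    (hTq : (fun t => q * t) '' T = T)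
    (Λ φ : ℂ → ℂ)
    (hΛhol : DifferentiableOn ℂ Λ T)
    (hΛper : ∀ t ∈ T, Λ (q * t) = Λ t)
    (hΛbd : ∀ t ∈ T, ‖b1 * b2 * b3 * b4‖ < ‖Λ t‖ ^ 2 ∧ ‖Λ t‖ ^ 2 < ‖b5 * b6 * b7 * b8‖)
    (hφhol : DifferentiableOn ℂ φ T)
    (hφne : ∀ t ∈ T, φ t ≠ 0)
    (hφeq : ∀ t ∈ T, φ (q * t) = (Λ t ^ 2 / (b1 * b2 * b3 * b4)) * φ t) :
    ∀ V : Set ℂ, IsOpen V → V ⊆ T → (fun t => q * t) '' V = V →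
      closure V ∩ {t : ℂ | t ≠ 0} ⊆ T →
      ∃ r > (0 : ℝ), ∃ f g : ℂ → ℂ, ∀ W : Set ℂ,
        W = V ∩ {t : ℂ | 0 < ‖t‖ ∧ ‖t‖ < r} →
        (∀ t ∈ W, q * t ∈ W) ∧
        DifferentiableOn ℂ f W ∧ DifferentiableOn ℂ g W ∧
        (∀ t ∈ W, qpSys b1 b2 b3 b4 b5 b6 b7 b8 q t (f t) (g t) (f (q * t)) (g (q * t))) ∧
        Tendsto (fun t : ℂ => f t / (t * φ t)) (nhdsWithin 0 W) (nhds 1) ∧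
        Tendsto (fun t : ℂ => g t / (t * Λ t * φ t)) (nhdsWithin 0 W) (nhds 1) := by
  intro V hVo hVT hV hcl
  exact stmt6_aux ![b1, b2, b3, b4, b5, b6, b7, b8] (by intro i; fin_cases i <;> assumption)
    (b1 * b2 * b3 * b4) (b5 * b6 * b7 * b8) q rfl rfl hq hqlt T hT0 Λ φ hΛhol hΛper hΛbd hφhol
    hφne hφeq V hVo hVT hV hcl
end
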